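/- One-shot Han–Kobayashi inner bound with cis entanglement assistance. Let 0 < ε < 1 and set L := log₂(1/ε). Let 𝔑 be a quantum channel (a completely positive trace-preserving linear map) from operators on ℂ^{d_{X₁}} ⊗ ℂ^{d_{X₂}} to operators on ℂ^{d_{Y₁}} ⊗ ℂ^{d_{Y₂}}. Let Q, U₁, U₂ be finite sets and p(q)·p(u₁|q)·p(u₂|q) a joint probability distribution on Q × U₁ × U₂. Fix tensor factorizations d_{X₁} = d'_{X₁}·d''_{X₁} and d_{X₂} = d'_{X₂}·d''_{X₂}, identifying ℂ^{d_{Xᵢ}} with ℂ^{d'_{Xᵢ}} ⊗ ℂ^{d''_{Xᵢ}}. For each u₁ ∈ U₁ let σ_{u₁} be a density matrix on ℂ^{d'_{X₁}} and for each u₂ ∈ U₂ let σ_{u₂} be a density matrix on ℂ^{d'_{X₂}}; let ψ₁ be a density matrix on ℂ^{d''_{X₁}} ⊗ ℂ^{d_{Z₁}} and ψ₂ a density matrix on ℂ^{d''_{X₂}} ⊗ ℂ^{d_{Z₂}}. Define the cq-state ρ^{QU₁U₂Y₁Z₁Y₂Z₂} := Σ_{q,u₁,u₂} p(q)p(u₁|q)p(u₂|q)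 |q,u₁,u₂⟩⟨q,u₁,u₂| ⊗ (𝔑 ⊗ id_{Z₁Z₂})(σ_{u₁} ⊗ ψ₁ ⊗ σ_{u₂} ⊗ ψ₂), with the output registers ordered as Y₁, Z₁, Y₂, Z₂, with respect to which all information quantities below are computed. Let N'₁, N''₁, N'₂, N''₂ be positive integers and set R'₁ := log₂ N'₁, R''₁ := log₂ N''₁, R'₂ := log₂ N'₂, R''₂ := log₂ N''₂. Suppose: R'₁ ≤ I_H^ε(U₁ : Y₁U₂Z₁ | Q) − 2 − L; R''₁ ≤ I_H^ε(Z₁ : Y₁U₁U₂ | Q) − 2 − L; R'₁ + R''₁ ≤ I_H^ε(U₁Z₁ : Y₁U₂ | Q) − 2 − L; R'₁ + R'₂ ≤ I_H^ε(U₁U₂ : Y₁Z₁ | Q) − 2 − L; R''₁ + R'₂ ≤ I_H^ε(Z₁U₂ : Y₁U₁ | Q) − 2 − L; R'₁ + R''₁ + R'₂ ≤ I_H^ε(U₁U₂Z₁ : Y₁ | Q) − 2 − L; R'₂ ≤ I_H^ε(U₂ : Y₂U₁Z₂ | Q) − 2 − L; R''₂ ≤ I_H^ε(Z₂ : Y₂U₁U₂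 | Q) − 2 − L; R'₂ + R''₂ ≤ I_H^ε(U₂Z₂ : Y₂U₁ | Q) − 2 − L; R'₁ + R'₂ ≤ I_H^ε(U₁U₂ : Y₂Z₂ | Q) − 2 − L; R''₂ + R'₁ ≤ I_H^ε(Z₂U₁ : Y₂U₂ | Q) − 2 − L; R'₂ + R''₂ + R'₁ ≤ I_H^ε(U₁U₂Z₂ : Y₂ | Q) − 2 − L. Then there exists an (N'₁·N''₁, N'₂·N''₂, 2^{2^{14}}·ε^{1/6}) cis-entanglement-assisted interference-channel code for 𝔑. -/

import Mathlib

/-!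
The code is random: a time-sharing symbol `q` and codewords `u₁(m₁')`, `u₂(m₂')` are drawn from
the given distributions. Sender `i` shares `Nᵢ''` copies of `ψᵢ` with receiver `i`, and sends
`(mᵢ', mᵢ'')` by transmitting `σ` of the codeword `uᵢ(mᵢ')` together with its half of the copy of
index `mᵢ''` (position-based coding). Each receiver decodes three components at once: its own
classical component, its own copy index, and the classical component of the other sender; an
error in the last one does not matter.

A wrong guess has an error pattern `S`, the set of its wrong components. Averaged over the codebook,
the test of such a guess sees the product state in which the wrong components are decoupled from
the channel output (`HK.tau`), and each of the six information bounds of a receiver provides a test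
which accepts the true state with probability at least `1 - ε` and the product state so rarely that
the union bound over all guesses with the pattern `S` costs at most `ε` (`HK.hasTest`). These six
tests do not commute, so their intersection has no direct meaning. It is replaced by the tilting
construction of Sen, in `HK.exists_inter`. The space is enlarged by the span of a reference vector
and one vector per pattern, and the test is the inverse of `1 + ∑ S, R S * ((E S)⁻¹ - 1) * (R S)ᴴ`,
where `R S` tensors with the reference vector slightly tilted in the directions `S' ⊇ S`. Vectors
tilted for the pattern `S` pass with probability at most a constant times that of `E S`, while
Möbius inversion over the patterns shows that untilted vectors fail at most as often as they fail
the single tests, up to a constant over `√ε`. If the tilting directions of a message are labelled by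
the components outside the pattern (`HK.key`), then the tilted vector of the message sent, seen from
a wrong guess, is the tilted vector of their error pattern (`HK.tmsg_comp`).

The tests of the guesses which differ only in the component of the other sender are joined by
`HK.exists_union`, and the resulting tests are made into a measurement by the square-root
construction and the inequality of Hayashi and Nagaoka (`HK.exists_pgm`). The outcome,
`HK.exists_decoder`, has error at most `520 * (√ε + (missed + falseAccept) / √ε)`, with the sum of
the probabilities of missing the true message and that of accepting a wrong one. Averaged over the
codebook this is at most `9360 * √ε` for each receiver (`HK.one_receiver`). Both receivers fail
with at most the sum of their error probabilities (`HK.union_bound`), some codebook is as good as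
the average (`HK.exists_codebook`), and `18720 * √ε ≤ 2 ^ 2 ^ 14 * ε ^ (1 / 6)`.
-/

open Kronecker ComplexOrder

noncomputable section

/-- A probability distribution on a finite set: nonnegative and summing to one. -/
def IsProbDist {S : Type*} [Fintype S] (P : S → ℝ) : Prop :=
  (∀ s, 0 ≤ P s) ∧ ∑ s, P s = 1

/-- A density matrix: positive semidefinite with trace one. -/
def IsDensity {ι : Type*} [Fintype ι] (ρ : Matrix ι ι ℂ) : Prop :=
  ρ.PosSemidef ∧ ρ.trace = 1

/-- A POVM element: `0 ≤ E ≤ I` in the Loewner order. -/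
def IsPOVMElem {ι : Type*} [Fintype ι] [DecidableEq ι] (E : Matrix ι ι ℂ) : Prop :=
  E.PosSemidef ∧ ((1 : Matrix ι ι ℂ) - E).PosSemidef

/-- The hypothesis testing relative entropy `D_H^ε(α‖β)`, as an extended real. -/
def DH {ι : Type*} [Fintype ι] [DecidableEq ι] (ε : ℝ) (α β : Matrix ι ι ℂ) : EReal :=
  sSup ((fun d : ℝ => (d : EReal)) ''
    {d | ∃ E : Matrix ι ι ℂ, IsPOVMElem E ∧ 1 - ε ≤ ((E * α).trace).re ∧
      ((E * β).trace).re ≤ (2 : ℝ) ^ (-d)})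

/-- The classical-quantum state `Σ_u |u⟩⟨u| ⊗ σ_u` (the weights are included in `σ`). -/
def cqState {U ι : Type*} [Fintype U] [DecidableEq U] [Fintype ι]
    (σ : U → Matrix ι ι ℂ) : Matrix (U × ι) (U × ι) ℂ :=
  Matrix.of fun x y => if x.1 = y.1 then σ x.1 x.2 y.2 else 0

/-- Partial trace over the second (right) tensor factor. -/
def trR {α β : Type*} [Fintype α] [Fintype β]
    (M : Matrix (α × β) (α × β) ℂ) : Matrix α α ℂ :=
  Matrix.of fun a a' => ∑ b, M (a, b) (a', b)

/-- Partial trace over the first (left) tensor factor. -/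
def trL {α β : Type*} [Fintype α] [Fintype β]
    (M : Matrix (α × β) (α × β) ℂ) : Matrix β β ℂ :=
  Matrix.of fun b b' => ∑ a, M (a, b) (a, b')

/-- The extension `N ⊗ id_Z` of a linear map `N` on matrices, acting on a system
with an extra (untouched) register `Z` on the right. -/
def extRight {X Y Z : Type*} [Fintype X] [Fintype Y] [Fintype Z]
    (N : Matrix X X ℂ →ₗ[ℂ] Matrix Y Y ℂ)
    (M : Matrix (X × Z) (X × Z) ℂ) : Matrix (Y × Z) (Y × Z) ℂ :=
  Matrix.of fun p q => N (Matrix.of fun x x' => M (x, p.2) (x', q.2)) p.1 q.1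

/-- A quantum channel: a linear map on matrices that is trace preserving and completely
positive (every finite-dimensional identity extension preserves positive semidefiniteness). -/
def IsCPTP {X Y : Type*} [Fintype X] [Fintype Y]
    (N : Matrix X X ℂ →ₗ[ℂ] Matrix Y Y ℂ) : Prop :=
  (∀ M, (N M).trace = M.trace) ∧
  ∀ (k : ℕ) (M : Matrix (Fin k × X) (Fin k × X) ℂ), M.PosSemidef →
    (Matrix.of fun p q : Fin k × Y =>
      N (Matrix.of fun x x' => M (p.1, x) (q.1, x')) p.2 q.2).PosSemidef

/-- Existence of an `(N₁, N₂, δ)` cis-entanglement-assisted interference-channel code for a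
quantum channel `N` from `X₁X₂` to `Y₁Y₂`: entangled states `Φ₁` (between sender 1 and
receiver 1) and `Φ₂` (between sender 2 and receiver 2), encoding channels, and decoding
POVMs whose average success probability is at least `1 − δ`. -/
def ExistsCisEAICCode {X1 X2 : Type*} [Fintype X1] [Fintype X2]
    [DecidableEq X1] [DecidableEq X2] {dY1 dY2 : ℕ}
    (N : Matrix (X1 × X2) (X1 × X2) ℂ →ₗ[ℂ]
      Matrix (Fin dY1 × Fin dY2) (Fin dY1 × Fin dY2) ℂ)
    (N1 N2 : ℕ) (δ : ℝ) : Prop :=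
  ∃ (a1 b1 a2 b2 : ℕ)
    (Φ1 : Matrix (Fin a1 × Fin b1) (Fin a1 × Fin b1) ℂ)
    (Φ2 : Matrix (Fin a2 × Fin b2) (Fin a2 × Fin b2) ℂ)
    (E1 : Fin N1 → (Matrix (Fin a1) (Fin a1) ℂ →ₗ[ℂ] Matrix X1 X1 ℂ))
    (E2 : Fin N2 → (Matrix (Fin a2) (Fin a2) ℂ →ₗ[ℂ] Matrix X2 X2 ℂ))
    (Λ : Fin N1 → Matrix (Fin dY1 × Fin b1) (Fin dY1 × Fin b1) ℂ)
    (Λ' : Fin N2 → Matrix (Fin dY2 × Fin b2) (Fin dY2 × Fin b2) ℂ),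
    IsDensity Φ1 ∧ IsDensity Φ2 ∧
    (∀ m1, IsCPTP (E1 m1)) ∧ (∀ m2, IsCPTP (E2 m2)) ∧
    (∀ m, (Λ m).PosSemidef) ∧
    ((1 : Matrix (Fin dY1 × Fin b1) (Fin dY1 × Fin b1) ℂ) - ∑ m, Λ m).PosSemidef ∧
    (∀ m, (Λ' m).PosSemidef) ∧
    ((1 : Matrix (Fin dY2 × Fin b2) (Fin dY2 × Fin b2) ℂ) - ∑ m, Λ' m).PosSemidef ∧
    1 - δ ≤ ((N1 * N2 : ℝ))⁻¹ * ∑ m : Fin N1 × Fin N2,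
      (∑ y1, ∑ y2, ∑ z1, ∑ z2, ∑ y1', ∑ y2', ∑ z1', ∑ z2',
        Λ m.1 (y1, z1) (y1', z1') * Λ' m.2 (y2, z2) (y2', z2') *
        extRight N (Matrix.of
          fun (xz xz' : (X1 × X2) × (Fin b1 × Fin b2)) =>
            extRight (E1 m.1) Φ1 (xz.1.1, xz.2.1) (xz'.1.1, xz'.2.1) *
            extRight (E2 m.2) Φ2 (xz.1.2, xz.2.2) (xz'.1.2, xz'.2.2))
          ((y1', y2'), (z1', z2')) ((y1, y2), (z1, z2))).re

section EA

variable {Qt U1 U2 : Type*} [Fintype Qt] [Fintype U1] [Fintype U2]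
  [DecidableEq Qt] [DecidableEq U1] [DecidableEq U2]
  {a1' a1'' a2' a2'' dY1 dY2 dZ1 dZ2 : ℕ}

variable (ε : ℝ) (pQ : Qt → ℝ) (pU1 : Qt → U1 → ℝ) (pU2 : Qt → U2 → ℝ)
variable (N : Matrix ((Fin a1' × Fin a1'') × (Fin a2' × Fin a2''))
    ((Fin a1' × Fin a1'') × (Fin a2' × Fin a2'')) ℂ →ₗ[ℂ]
    Matrix (Fin dY1 × Fin dY2) (Fin dY1 × Fin dY2) ℂ)
variable (σ1 : U1 → Matrix (Fin a1') (Fin a1') ℂ)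
variable (ψ1 : Matrix (Fin a1'' × Fin dZ1) (Fin a1'' × Fin dZ1) ℂ)
variable (σ2 : U2 → Matrix (Fin a2') (Fin a2') ℂ)
variable (ψ2 : Matrix (Fin a2'' × Fin dZ2) (Fin a2'' × Fin dZ2) ℂ)

/-- The channel input state `σ_{u₁} ⊗ ψ₁ ⊗ σ_{u₂} ⊗ ψ₂`, arranged with the channel-input
registers `X₁'X₁''X₂'X₂''` first and the reference registers `Z₁Z₂` last. -/
def eaInState (u1 : U1) (u2 : U2) :
    Matrix (((Fin a1' × Fin a1'') × (Fin a2' × Fin a2'')) × (Fin dZ1 × Fin dZ2))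
      (((Fin a1' × Fin a1'') × (Fin a2' × Fin a2'')) × (Fin dZ1 × Fin dZ2)) ℂ :=
  Matrix.of fun r c =>
    σ1 u1 r.1.1.1 c.1.1.1 * ψ1 (r.1.1.2, r.2.1) (c.1.1.2, c.2.1) *
    σ2 u2 r.1.2.1 c.1.2.1 * ψ2 (r.1.2.2, r.2.2) (c.1.2.2, c.2.2)

/-- The `Y₁Z₁` marginal of the channel output `(𝔑 ⊗ id_{Z₁Z₂})(σ_{u₁} ⊗ ψ₁ ⊗ σ_{u₂} ⊗ ψ₂)`. -/
def eaOutYZ1 (u1 : U1) (u2 : U2) :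
    Matrix (Fin dY1 × Fin dZ1) (Fin dY1 × Fin dZ1) ℂ :=
  Matrix.of fun r c => ∑ y2, ∑ z2,
    extRight N (eaInState σ1 ψ1 σ2 ψ2 u1 u2) ((r.1, y2), (r.2, z2)) ((c.1, y2), (c.2, z2))

/-- The `Y₂Z₂` marginal of the channel output. -/
def eaOutYZ2 (u1 : U1) (u2 : U2) :
    Matrix (Fin dY2 × Fin dZ2) (Fin dY2 × Fin dZ2) ℂ :=
  Matrix.of fun r c => ∑ y1, ∑ z1,
    extRight N (eaInState σ1 ψ1 σ2 ψ2 u1 u2) ((y1, r.1), (z1, r.2)) ((y1, c.1), (z1, c.2))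

/-- The joint cq-state on `Q U₁ U₂ Y₁ Z₁`. -/
def eaJ1 : Matrix ((Qt × U1 × U2) × (Fin dY1 × Fin dZ1))
    ((Qt × U1 × U2) × (Fin dY1 × Fin dZ1)) ℂ :=
  cqState fun c : Qt × U1 × U2 =>
    ((pQ c.1 * pU1 c.1 c.2.1 * pU2 c.1 c.2.2 : ℝ) : ℂ) •
      eaOutYZ1 N σ1 ψ1 σ2 ψ2 c.2.1 c.2.2

/-- The joint cq-state on `Q U₁ U₂ Y₂ Z₂`. -/
def eaJ2 : Matrix ((Qt × U1 × U2) × (Fin dY2 × Fin dZ2))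
    ((Qt × U1 × U2) × (Fin dY2 × Fin dZ2)) ℂ :=
  cqState fun c : Qt × U1 × U2 =>
    ((pQ c.1 * pU1 c.1 c.2.1 * pU2 c.1 c.2.2 : ℝ) : ℂ) •
      eaOutYZ2 N σ1 ψ1 σ2 ψ2 c.2.1 c.2.2

/-- `I_H^ε(U₁ : Y₁U₂Z₁ | Q)`. -/
def eaIH_U1_Y1U2Z1_Q : EReal :=
  DH ε (eaJ1 pQ pU1 pU2 N σ1 ψ1 σ2 ψ2)
    (cqState fun c : Qt × U1 × U2 =>
      ((pQ c.1 * pU1 c.1 c.2.1 * pU2 c.1 c.2.2 : ℝ) : ℂ) •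
        ∑ v1, (pU1 c.1 v1 : ℂ) • eaOutYZ1 N σ1 ψ1 σ2 ψ2 v1 c.2.2)

/-- `I_H^ε(Z₁ : Y₁U₁U₂ | Q)`. -/
def eaIH_Z1_Y1U1U2_Q : EReal :=
  DH ε (eaJ1 pQ pU1 pU2 N σ1 ψ1 σ2 ψ2)
    (cqState fun c : Qt × U1 × U2 =>
      ((pQ c.1 * pU1 c.1 c.2.1 * pU2 c.1 c.2.2 : ℝ) : ℂ) •
        (trR (eaOutYZ1 N σ1 ψ1 σ2 ψ2 c.2.1 c.2.2) ⊗ₖ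
          ∑ v1, ∑ v2, ((pU1 c.1 v1 * pU2 c.1 v2 : ℝ) : ℂ) •
            trL (eaOutYZ1 N σ1 ψ1 σ2 ψ2 v1 v2)))

/-- `I_H^ε(U₁Z₁ : Y₁U₂ | Q)`. -/
def eaIH_U1Z1_Y1U2_Q : EReal :=
  DH ε (eaJ1 pQ pU1 pU2 N σ1 ψ1 σ2 ψ2)
    (cqState fun c : Qt × U1 × U2 =>
      ((pQ c.1 * pU1 c.1 c.2.1 * pU2 c.1 c.2.2 : ℝ) : ℂ) •
        ((∑ v1, (pU1 c.1 v1 : ℂ) • trR (eaOutYZ1 N σ1 ψ1 σ2 ψ2 v1 c.2.2)) ⊗ₖ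
          (∑ v2, (pU2 c.1 v2 : ℂ) • trL (eaOutYZ1 N σ1 ψ1 σ2 ψ2 c.2.1 v2))))

/-- `I_H^ε(U₁U₂ : Y₁Z₁ | Q)`. -/
def eaIH_U1U2_Y1Z1_Q : EReal :=
  DH ε (eaJ1 pQ pU1 pU2 N σ1 ψ1 σ2 ψ2)
    (cqState fun c : Qt × U1 × U2 =>
      ((pQ c.1 * pU1 c.1 c.2.1 * pU2 c.1 c.2.2 : ℝ) : ℂ) •
        ∑ v1, ∑ v2, ((pU1 c.1 v1 * pU2 c.1 v2 : ℝ) : ℂ) •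
          eaOutYZ1 N σ1 ψ1 σ2 ψ2 v1 v2)

/-- `I_H^ε(Z₁U₂ : Y₁U₁ | Q)`. -/
def eaIH_Z1U2_Y1U1_Q : EReal :=
  DH ε (eaJ1 pQ pU1 pU2 N σ1 ψ1 σ2 ψ2)
    (cqState fun c : Qt × U1 × U2 =>
      ((pQ c.1 * pU1 c.1 c.2.1 * pU2 c.1 c.2.2 : ℝ) : ℂ) •
        ((∑ v2, (pU2 c.1 v2 : ℂ) • trR (eaOutYZ1 N σ1 ψ1 σ2 ψ2 c.2.1 v2)) ⊗ₖ
          (∑ v1, (pU1 c.1 v1 : ℂ) • trL (eaOutYZ1 N σ1 ψ1 σ2 ψ2 v1 c.2.2))))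

/-- `I_H^ε(U₁U₂Z₁ : Y₁ | Q)`. -/
def eaIH_U1U2Z1_Y1_Q : EReal :=
  DH ε (eaJ1 pQ pU1 pU2 N σ1 ψ1 σ2 ψ2)
    (cqState fun c : Qt × U1 × U2 =>
      ((pQ c.1 * pU1 c.1 c.2.1 * pU2 c.1 c.2.2 : ℝ) : ℂ) •
        ((∑ v1, ∑ v2, ((pU1 c.1 v1 * pU2 c.1 v2 : ℝ) : ℂ) •
            trR (eaOutYZ1 N σ1 ψ1 σ2 ψ2 v1 v2)) ⊗ₖ
          trL (eaOutYZ1 N σ1 ψ1 σ2 ψ2 c.2.1 c.2.2)))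

/-- `I_H^ε(U₂ : Y₂U₁Z₂ | Q)`. -/
def eaIH_U2_Y2U1Z2_Q : EReal :=
  DH ε (eaJ2 pQ pU1 pU2 N σ1 ψ1 σ2 ψ2)
    (cqState fun c : Qt × U1 × U2 =>
      ((pQ c.1 * pU1 c.1 c.2.1 * pU2 c.1 c.2.2 : ℝ) : ℂ) •
        ∑ v2, (pU2 c.1 v2 : ℂ) • eaOutYZ2 N σ1 ψ1 σ2 ψ2 c.2.1 v2)

/-- `I_H^ε(Z₂ : Y₂U₁U₂ | Q)`. -/
def eaIH_Z2_Y2U1U2_Q : EReal :=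
  DH ε (eaJ2 pQ pU1 pU2 N σ1 ψ1 σ2 ψ2)
    (cqState fun c : Qt × U1 × U2 =>
      ((pQ c.1 * pU1 c.1 c.2.1 * pU2 c.1 c.2.2 : ℝ) : ℂ) •
        (trR (eaOutYZ2 N σ1 ψ1 σ2 ψ2 c.2.1 c.2.2) ⊗ₖ
          ∑ v1, ∑ v2, ((pU1 c.1 v1 * pU2 c.1 v2 : ℝ) : ℂ) •
            trL (eaOutYZ2 N σ1 ψ1 σ2 ψ2 v1 v2)))

/-- `I_H^ε(U₂Z₂ : Y₂U₁ | Q)`. -/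
def eaIH_U2Z2_Y2U1_Q : EReal :=
  DH ε (eaJ2 pQ pU1 pU2 N σ1 ψ1 σ2 ψ2)
    (cqState fun c : Qt × U1 × U2 =>
      ((pQ c.1 * pU1 c.1 c.2.1 * pU2 c.1 c.2.2 : ℝ) : ℂ) •
        ((∑ v2, (pU2 c.1 v2 : ℂ) • trR (eaOutYZ2 N σ1 ψ1 σ2 ψ2 c.2.1 v2)) ⊗ₖ
          (∑ v1, (pU1 c.1 v1 : ℂ) • trL (eaOutYZ2 N σ1 ψ1 σ2 ψ2 v1 c.2.2))))

/-- `I_H^ε(U₁U₂ : Y₂Z₂ | Q)`. -/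
def eaIH_U1U2_Y2Z2_Q : EReal :=
  DH ε (eaJ2 pQ pU1 pU2 N σ1 ψ1 σ2 ψ2)
    (cqState fun c : Qt × U1 × U2 =>
      ((pQ c.1 * pU1 c.1 c.2.1 * pU2 c.1 c.2.2 : ℝ) : ℂ) •
        ∑ v1, ∑ v2, ((pU1 c.1 v1 * pU2 c.1 v2 : ℝ) : ℂ) •
          eaOutYZ2 N σ1 ψ1 σ2 ψ2 v1 v2)

/-- `I_H^ε(Z₂U₁ : Y₂U₂ | Q)`. -/
def eaIH_Z2U1_Y2U2_Q : EReal :=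
  DH ε (eaJ2 pQ pU1 pU2 N σ1 ψ1 σ2 ψ2)
    (cqState fun c : Qt × U1 × U2 =>
      ((pQ c.1 * pU1 c.1 c.2.1 * pU2 c.1 c.2.2 : ℝ) : ℂ) •
        ((∑ v1, (pU1 c.1 v1 : ℂ) • trR (eaOutYZ2 N σ1 ψ1 σ2 ψ2 v1 c.2.2)) ⊗ₖ
          (∑ v2, (pU2 c.1 v2 : ℂ) • trL (eaOutYZ2 N σ1 ψ1 σ2 ψ2 c.2.1 v2))))

/-- `I_H^ε(U₁U₂Z₂ : Y₂ | Q)`. -/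
def eaIH_U1U2Z2_Y2_Q : EReal :=
  DH ε (eaJ2 pQ pU1 pU2 N σ1 ψ1 σ2 ψ2)
    (cqState fun c : Qt × U1 × U2 =>
      ((pQ c.1 * pU1 c.1 c.2.1 * pU2 c.1 c.2.2 : ℝ) : ℂ) •
        ((∑ v1, ∑ v2, ((pU1 c.1 v1 * pU2 c.1 v2 : ℝ) : ℂ) •
            trR (eaOutYZ2 N σ1 ψ1 σ2 ψ2 v1 v2)) ⊗ₖ
          trL (eaOutYZ2 N σ1 ψ1 σ2 ψ2 c.2.1 c.2.2)))

end EA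

set_option linter.unusedSectionVars false

open Matrix in
theorem Matrix.PosDef.mul_inv' {n} [Fintype n] [DecidableEq n] {B : Matrix n n ℂ} (hB : B.PosDef) : B * B⁻¹ = 1 :=
  Matrix.mul_nonsing_inv _ ((Matrix.isUnit_iff_isUnit_det _).1 hB.isUnit)

namespace HK

/-! ### Quadratic forms of matrices -/

section Forms
open Matrix

variable {G : Type*} [Fintype G] {O : Type*} [Fintype O]

/-- Real part of the sesquilinear form of a matrix. -/
def bf (M : Matrix G G ℂ) (x y : G → ℂ) : ℝ := (star x ⬝ᵥ M *ᵥ y).re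

/-- Real part of the quadratic form of a matrix. -/
def qf (M : Matrix G G ℂ) (x : G → ℂ) : ℝ := bf M x x

theorem bf_add_left (M : Matrix G G ℂ) (x y z : G → ℂ) : bf M (x + y) z = bf M x z + bf M y z := by
  simp [bf, add_dotProduct]

theorem bf_add_right (M : Matrix G G ℂ) (x y z : G → ℂ) : bf M z (x + y) = bf M z x + bf M z y := by
  simp [bf, mulVec_add]

theorem bf_sub_left (M : Matrix G G ℂ) (x y z : G → ℂ) : bf M (x - y) z = bf M x z - bf M y z := by
  simp [bf, sub_dotProduct]

theorem bf_sub_right (M : Matrix G G ℂ) (x y z : G → ℂ) : bf M z (x - y) = bf M z x - bf M z y := by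
  simp [bf, mulVec_sub]

theorem bf_smul_left (M : Matrix G G ℂ) (c : ℝ) (x z : G → ℂ) :
    bf M ((c : ℂ) • x) z = c * bf M x z := by
  simp [bf, smul_dotProduct]

theorem bf_smul_right (M : Matrix G G ℂ) (c : ℝ) (x z : G → ℂ) :
    bf M z ((c : ℂ) • x) = c * bf M z x := by
  simp [bf, mulVec_smul, dotProduct_smul]

theorem bf_madd (M M' : Matrix G G ℂ) (x y : G → ℂ) : bf (M + M') x y = bf M x y + bf M' x y := by
  simp [bf, add_mulVec]

theorem bf_msub (M M' : Matrix G G ℂ) (x y : G → ℂ) : bf (M - M') x y = bf M x y - bf M' x y := by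
  simp [bf, sub_mulVec]

theorem bf_msmul (c : ℝ) (M : Matrix G G ℂ) (x y : G → ℂ) :
    bf ((c : ℂ) • M) x y = c * bf M x y := by
  simp [bf, smul_mulVec]

theorem bf_msum {ι : Type*} (s : Finset ι) (M : ι → Matrix G G ℂ) (x y : G → ℂ) :
    bf (∑ i ∈ s, M i) x y = ∑ i ∈ s, bf (M i) x y := by
  simp [bf, sum_mulVec, dotProduct_sum]

theorem star_form {M : Matrix G G ℂ} (hM : M.IsHermitian) (x y : G → ℂ) :
    star (star x ⬝ᵥ M *ᵥ y) = star y ⬝ᵥ M *ᵥ x := by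
  rw [← star_dotProduct, star_mulVec, hM.eq, dotProduct_mulVec]

theorem bf_symm {M : Matrix G G ℂ} (hM : M.IsHermitian) (x y : G → ℂ) : bf M x y = bf M y x := by
  rw [bf, bf, ← star_form hM]; simp

theorem bf_conj (M : Matrix G G ℂ) (R : Matrix O G ℂ) (x y : O → ℂ) :
    bf (R * M * Rᴴ) x y = bf M (Rᴴ *ᵥ x) (Rᴴ *ᵥ y) := by
  simp [bf, star_mulVec, ← mulVec_mulVec, dotProduct_mulVec]

theorem bf_mulVec_right [DecidableEq G] (M N : Matrix G G ℂ) (x y : G → ℂ) :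
    bf M x (N *ᵥ y) = bf (M * N) x y := by
  simp [bf, mulVec_mulVec]

theorem bf_mulVec_left [DecidableEq G] (M : Matrix G G ℂ) {N : Matrix G G ℂ} (hN : N.IsHermitian)
    (x y : G → ℂ) : bf M (N *ᵥ x) y = bf (N * M) x y := by
  simp [bf, star_mulVec, hN.eq, ← mulVec_mulVec, dotProduct_mulVec]

theorem qf_add {M : Matrix G G ℂ} (hM : M.IsHermitian) (x y : G → ℂ) :
    qf M (x + y) = qf M x + 2 * bf M x y + qf M y := by
  rw [qf, qf, qf, bf_add_left, bf_add_right, bf_add_right, bf_symm hM y x]; ring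

theorem qf_sub {M : Matrix G G ℂ} (hM : M.IsHermitian) (x y : G → ℂ) :
    qf M (x - y) = qf M x - 2 * bf M x y + qf M y := by
  rw [qf, qf, qf, bf_sub_left, bf_sub_right, bf_sub_right, bf_symm hM y x]; ring

theorem qf_smul (M : Matrix G G ℂ) (c : ℝ) (x : G → ℂ) : qf M ((c : ℂ) • x) = c ^ 2 * qf M x := by
  rw [qf, qf, bf_smul_left, bf_smul_right]; ring

theorem qf_madd (M M' : Matrix G G ℂ) (x : G → ℂ) : qf (M + M') x = qf M x + qf M' x := bf_madd ..
theorem qf_msub (M M' : Matrix G G ℂ) (x : G → ℂ) : qf (M - M') x = qf M x - qf M' x := bf_msub ..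
theorem qf_msmul (c : ℝ) (M : Matrix G G ℂ) (x : G → ℂ) : qf ((c : ℂ) • M) x = c * qf M x :=
  bf_msmul ..
theorem qf_msum {ι : Type*} (s : Finset ι) (M : ι → Matrix G G ℂ) (x : G → ℂ) :
    qf (∑ i ∈ s, M i) x = ∑ i ∈ s, qf (M i) x := bf_msum ..
theorem qf_conj (M : Matrix G G ℂ) (R : Matrix O G ℂ) (x : O → ℂ) :
    qf (R * M * Rᴴ) x = qf M (Rᴴ *ᵥ x) := bf_conj ..

theorem qf_nonneg {M : Matrix G G ℂ} (hM : M.PosSemidef) (x : G → ℂ) : 0 ≤ qf M x :=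
  (Complex.le_def.1 (hM.dotProduct_mulVec_nonneg x)).1

theorem psd_of_qf {M : Matrix G G ℂ} (hM : M.IsHermitian) (h : ∀ x, 0 ≤ qf M x) :
    M.PosSemidef := by
  refine PosSemidef.of_dotProduct_mulVec_nonneg hM fun x => Complex.le_def.2 ⟨h x, ?_⟩
  have := congrArg Complex.im (star_form hM x x)
  simp at this ⊢
  linarith

theorem qf_le {M M' : Matrix G G ℂ} (h : (M' - M).PosSemidef) (x : G → ℂ) : qf M x ≤ qf M' x := by
  have := qf_nonneg h x
  rw [qf_msub] at this; linarith

/-- Weighted form of `2 Re⟨x, M y⟩ ≤ α⟨x, M x⟩ + α⁻¹⟨y, M y⟩`. -/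
theorem qf_add_le {M : Matrix G G ℂ} (hM : M.PosSemidef) {α : ℝ} (hα : 0 < α) (x y : G → ℂ) :
    qf M (x + y) ≤ (1 + α) * qf M x + (1 + α⁻¹) * qf M y := by
  have h := qf_nonneg hM ((α : ℂ) • x - y)
  rw [qf_sub hM.1, qf_smul, bf_smul_left] at h
  rw [qf_add hM.1]
  have h2 : 0 ≤ α⁻¹ * (α ^ 2 * qf M x - 2 * (α * bf M x y) + qf M y) := by positivity
  have : α⁻¹ * (α ^ 2 * qf M x - 2 * (α * bf M x y) + qf M y)
    = α * qf M x - 2 * bf M x y + α⁻¹ * qf M y := by field_simp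
  linarith

theorem qf_add_le_two {M : Matrix G G ℂ} (hM : M.PosSemidef) (x y : G → ℂ) :
    qf M (x + y) ≤ 2 * qf M x + 2 * qf M y := by
  have := qf_add_le hM one_pos x y
  norm_num at this; linarith

variable [DecidableEq G]

theorem qf_one_nonneg (x : G → ℂ) : 0 ≤ qf (1 : Matrix G G ℂ) x := qf_nonneg PosSemidef.one x

theorem qf_mul_self {N : Matrix G G ℂ} (hN : N.IsHermitian) (x : G → ℂ) :
    qf 1 (N *ᵥ x) = qf (N * N) x := by
  rw [qf, bf_mulVec_right, bf_mulVec_left _ hN]; simp [qf]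

/-- Convex duality for a positive definite form and its inverse. -/
theorem fenchel {B : Matrix G G ℂ} (hB : B.PosDef) (v w : G → ℂ) :
    2 * bf 1 v w - qf B w ≤ qf B⁻¹ v := by
  have h := qf_nonneg hB.posSemidef (B⁻¹ *ᵥ v - w)
  rw [qf_sub hB.1, qf, bf_mulVec_right, hB.mul_inv', bf_mulVec_left _ hB.inv.1,
    bf_mulVec_left _ hB.inv.1] at h
  have h2 : B⁻¹ * B = 1 := by
    exact Matrix.nonsing_inv_mul _ ((Matrix.isUnit_iff_isUnit_det _).1 hB.isUnit)
  rw [h2, mul_one] at h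
  have : qf B⁻¹ v = bf B⁻¹ v v := rfl
  linarith

theorem qf_inv_eq {B : Matrix G G ℂ} (hB : B.PosDef) (v : G → ℂ) :
    qf B (B⁻¹ *ᵥ v) = qf B⁻¹ v ∧ bf 1 v (B⁻¹ *ᵥ v) = qf B⁻¹ v := by
  constructor
  · rw [qf, bf_mulVec_right, hB.mul_inv', bf_mulVec_left _ hB.inv.1, mul_one]; rfl
  · rw [bf_mulVec_right, one_mul]; rfl

/-- A square root `Q` of a positive definite matrix `S`, dominating every `0 ≤ T ≤ 1` with
`T ≤ S`. -/
theorem exists_sqrt {S : Matrix G G ℂ} (hS : S.PosDef) :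
    ∃ Q : Matrix G G ℂ, Q.PosDef ∧ Q * Q = S ∧ ∀ T : Matrix G G ℂ, T.PosSemidef →
      (1 - T).PosSemidef → (S - T).PosSemidef → ∀ v, qf T v ≤ qf Q v := by
  open scoped MatrixOrder in
  have hQ0 : (CFC.sqrt S).PosSemidef := (CFC.sqrt_nonneg S).posSemidef
  open scoped MatrixOrder in
  have hQS : CFC.sqrt S * CFC.sqrt S = S := CFC.sqrt_mul_sqrt_self S hS.posSemidef.nonneg
  generalize CFC.sqrt S = Q at hQ0 hQS
  have hu : IsUnit Q := by
    have := hS.isUnit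
    rw [← hQS] at this
    rw [Matrix.isUnit_iff_isUnit_det] at this ⊢
    rw [det_mul] at this
    exact isUnit_of_mul_isUnit_left this
  refine ⟨Q, ?_, hQS, fun T hT h1T hTS => ?_⟩
  · exact hQ0.posDef_iff_isUnit.2 hu
  have hD : (Q - T).IsHermitian := hQ0.1.sub hT.1
  suffices h : (Q - T).PosSemidef from fun v => qf_le h v
  rw [hD.posSemidef_iff_eigenvalues_nonneg]
  intro i
  by_contra! hneg
  set l := hD.eigenvalues i with hl
  set v : G → ℂ := (hD.eigenvectorBasis i).ofLp with hv
  have hev : (Q - T) *ᵥ v = (l : ℂ) • v := by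
    have := hD.mulVec_eigenvectorBasis i
    simpa using this
  have hn : 0 < qf 1 v := by
    refine (Complex.lt_def.1 (PosDef.dotProduct_mulVec_pos (PosDef.one (n := G) (R := ℂ)) (x := v) ?_)).1
    intro h0
    apply hD.eigenvectorBasis.orthonormal.ne_zero i
    ext j
    exact congrFun h0 j
  have hTv : T *ᵥ v = Q *ᵥ v - (l : ℂ) • v := by
    rw [← hev, sub_mulVec]; simp
  -- `T² ≤ T ≤ S = Q²`
  have hTT : qf (T * T) v ≤ qf T v := by
    have hh : T - T * T = T * (1 - T) * Tᴴ + (1 - T) * T * (1 - T)ᴴ := by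
      rw [conjTranspose_sub, hT.1.eq, conjTranspose_one]; noncomm_ring
    have : (T - T * T).PosSemidef := by
      rw [hh]
      exact (h1T.mul_mul_conjTranspose_same T).add (hT.mul_mul_conjTranspose_same (1 - T))
    exact qf_le this v
  have h1 : qf T v ≤ qf S v := qf_le hTS v
  have h2 : qf 1 (T *ᵥ v) = qf (T * T) v := qf_mul_self hT.1 v
  have h3 : qf 1 (Q *ᵥ v) = qf S v := by rw [qf_mul_self hQ0.1 v, hQS]
  rw [hTv, qf_sub isHermitian_one, qf_smul, bf_smul_right, h3, bf_mulVec_left _ hQ0.1] at h2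
  have h4 : 0 ≤ bf (Q * 1) v v := by rw [mul_one]; exact qf_nonneg hQ0 v
  have hneg' : l < 0 := hneg
  have h5 : 0 < l ^ 2 * qf 1 v := mul_pos (by nlinarith) hn
  have h6 : l * bf (Q * 1) v v ≤ 0 := mul_nonpos_of_nonpos_of_nonneg hneg'.le h4
  linarith

end Forms
end HK

namespace HK

/-! ### Square-root measurements and unions of tests -/

section Tests
open Matrix

variable {G : Type*} [Fintype G] [DecidableEq G]

theorem inv_mul' {B : Matrix G G ℂ} (hB : B.PosDef) : B⁻¹ * B = 1 :=
  Matrix.nonsing_inv_mul _ ((Matrix.isUnit_iff_isUnit_det _).1 hB.isUnit)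

/-- The operator inequality of Hayashi and Nagaoka for the square-root measurement, with `Q` a
square root of `T + R`. -/
theorem hayashi_nagaoka {T R Q : Matrix G G ℂ} (hT : T.PosSemidef) (hR : R.PosSemidef)
    (hQ : Q.PosDef) (hQQ : Q * Q = T + R) (hdom : ∀ v, qf T v ≤ qf Q v) (v : G → ℂ) :
    qf (1 - Q⁻¹ * T * Q⁻¹) v ≤ 2 * qf (1 - T) v + 4 * qf R v := by
  have e1 : 1 - Q⁻¹ * T * Q⁻¹ = Q⁻¹ * R * (Q⁻¹)ᴴ := by
    rw [hQ.inv.1.eq]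
    have : Q⁻¹ * (Q * Q) * Q⁻¹ = 1 := by
      rw [← mul_assoc, inv_mul' hQ, one_mul, hQ.mul_inv']
    rw [← this, hQQ]; noncomm_ring
  rw [e1, qf_conj, hQ.inv.1.eq]
  have h1 := qf_add_le_two hR (Q⁻¹ *ᵥ v - v) v
  rw [sub_add_cancel] at h1
  have h2 : qf R (Q⁻¹ *ᵥ v - v) ≤ qf (T + R) (Q⁻¹ *ᵥ v - v) := by
    rw [qf_madd]; linarith [qf_nonneg hT (Q⁻¹ *ᵥ v - v)]
  have h7 : qf (Q * Q) (Q⁻¹ *ᵥ v) = bf 1 v v := by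
    rw [qf, bf_mulVec_left _ hQ.inv.1, ← mul_assoc, inv_mul' hQ, one_mul, bf_mulVec_right,
      hQ.mul_inv']
  rw [qf_sub (hT.1.add hR.1), ← hQQ, bf_mulVec_left _ hQ.inv.1, ← mul_assoc, inv_mul' hQ, one_mul,
    h7, hQQ] at h2
  have h3 := hdom v
  have h4 : bf 1 v v = qf 1 v := rfl
  have h5 : bf Q v v = qf Q v := rfl
  have h6 := qf_nonneg hT v
  rw [qf_madd] at h2
  rw [qf_msub]
  linarith

/-- The square-root measurement of finitely many tests `0 ≤ T j ≤ 1`, regularized by `η`. -/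
theorem exists_pgm {J : Type*} [Fintype J] [DecidableEq J] (T : J → Matrix G G ℂ)
    (hT : ∀ j, (T j).PosSemidef) (h1T : ∀ j, (1 - T j).PosSemidef) {η : ℝ} (hη : 0 < η) :
    ∃ Λ : J → Matrix G G ℂ, (∀ j, (Λ j).PosSemidef) ∧ (1 - ∑ j, Λ j).PosSemidef ∧
      ∀ j v, qf (1 - Λ j) v ≤ 2 * qf (1 - T j) v +
        4 * (η * qf 1 v + ∑ j' ∈ Finset.univ.erase j, qf (T j') v) := by
  have hη1 : ((η : ℂ) • (1 : Matrix G G ℂ)).PosDef :=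
    PosDef.one.smul (by exact_mod_cast hη)
  set S : Matrix G G ℂ := (η : ℂ) • 1 + ∑ j, T j with hS
  have hSd : S.PosDef := hη1.add_posSemidef (posSemidef_sum _ fun j _ => hT j)
  obtain ⟨Q, hQ, hQQ, hdom⟩ := exists_sqrt hSd
  have hsplit : ∀ j, S = T j + ((η : ℂ) • 1 + ∑ j' ∈ Finset.univ.erase j, T j') := by
    intro j
    rw [hS, ← Finset.add_sum_erase _ _ (Finset.mem_univ j)]; abel
  have hRp : ∀ j, ((η : ℂ) • (1 : Matrix G G ℂ) + ∑ j' ∈ Finset.univ.erase j, T j').PosSemidef :=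
    fun j => hη1.posSemidef.add (posSemidef_sum _ fun j _ => hT j)
  refine ⟨fun j => Q⁻¹ * T j * Q⁻¹, fun j => ?_, ?_, fun j v => ?_⟩
  · have := (hT j).mul_mul_conjTranspose_same Q⁻¹
    rwa [hQ.inv.1.eq] at this
  · have : 1 - ∑ j, Q⁻¹ * T j * Q⁻¹ = Q⁻¹ * ((η : ℂ) • 1) * (Q⁻¹)ᴴ := by
      rw [hQ.inv.1.eq, ← Finset.sum_mul, ← Finset.mul_sum]
      have h1 : Q⁻¹ * (Q * Q) * Q⁻¹ = 1 := by
        rw [← mul_assoc, inv_mul' hQ, one_mul, hQ.mul_inv']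
      calc 1 - Q⁻¹ * (∑ j, T j) * Q⁻¹ = Q⁻¹ * S * Q⁻¹ - Q⁻¹ * (∑ j, T j) * Q⁻¹ := by
            rw [← hQQ, h1]
        _ = _ := by rw [hS]; noncomm_ring
    rw [this]
    exact hη1.posSemidef.mul_mul_conjTranspose_same _
  · have h := hayashi_nagaoka (hT j) (hRp j) hQ (hQQ.trans (hsplit j)) (hdom (T j) (hT j) (h1T j)
      (by rw [hsplit j, add_sub_cancel_left]; exact hRp j)) v
    rwa [qf_madd, qf_msmul, qf_msum] at h

/-- An approximate union: a test that accepts whenever one of the tests `T j` does. A larger `K`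
makes it more complete and less sound. -/
theorem exists_union {J : Type*} [Fintype J] (T : J → Matrix G G ℂ)
    (hT : ∀ j, (T j).PosSemidef) (h1T : ∀ j, (1 - T j).PosSemidef) {K : ℝ} (hK : 0 < K) :
    ∃ U : Matrix G G ℂ, U.PosSemidef ∧ (1 - U).PosSemidef ∧
      (∀ v, qf U v ≤ K * ∑ j, qf (T j) v) ∧
      ∀ j v, qf (1 - U) v ≤ qf 1 v - K / (1 + K) * qf (T j) v := by
  have hKc : (0 : ℂ) ≤ (K : ℂ) := by exact_mod_cast hK.le
  set X : Matrix G G ℂ := (K : ℂ) • ∑ j, T j with hX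
  have hXp : X.PosSemidef := (posSemidef_sum _ fun j _ => hT j).smul hKc
  have hB : (1 + X).PosDef := PosDef.one.add_posSemidef hXp
  have hqX : ∀ v, qf X v = K * ∑ j, qf (T j) v := fun v => by rw [hX, qf_msmul, qf_msum]
  have key : ∀ v, ∃ u, qf (1 + X)⁻¹ v = qf 1 v - qf 1 (v - u) - qf X u := by
    intro v
    refine ⟨(1 + X)⁻¹ *ᵥ v, ?_⟩
    obtain ⟨h1, h2⟩ := qf_inv_eq hB v
    rw [qf_madd] at h1
    rw [qf_sub isHermitian_one]
    linarith
  -- For commuting projections `T j` this test accepts with probability `k * K / (1 + k * K)` where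
  -- `k` of them accept.
  refine ⟨1 - (1 + X)⁻¹, ?_, ?_, ?_, ?_⟩
  · refine psd_of_qf (isHermitian_one.sub hB.inv.1) fun v => ?_
    obtain ⟨u, hu⟩ := key v
    rw [qf_msub, hu]
    linarith [qf_one_nonneg (v - u), qf_nonneg hXp u]
  · rw [sub_sub_cancel]; exact hB.inv.posSemidef
  · intro v
    have h := fenchel hB v v
    have h4 : bf 1 v v = qf 1 v := rfl
    rw [qf_madd, hqX] at h
    rw [qf_msub]; linarith
  · intro j v
    rw [sub_sub_cancel]
    obtain ⟨u, hu⟩ := key v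
    have h1 := qf_add_le (hT j) (inv_pos.2 hK) (v - u) u
    rw [sub_add_cancel, inv_inv] at h1
    have h2 := qf_le (h1T j) (v - u)
    have h3 : qf (T j) u ≤ ∑ j, qf (T j) u :=
      Finset.single_le_sum (f := fun j => qf (T j) u) (fun i _ => qf_nonneg (hT i) u)
        (Finset.mem_univ j)
    rw [hu, hqX]
    have h5 : K / (1 + K) * qf (T j) v ≤
        K / (1 + K) * ((1 + K⁻¹) * qf 1 (v - u) + (1 + K) * ∑ j, qf (T j) u) := by
      gcongr
      refine h1.trans ?_
      gcongr
    have h6 : K / (1 + K) * ((1 + K⁻¹) * qf 1 (v - u) + (1 + K) * ∑ j, qf (T j) u)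
        = qf 1 (v - u) + K * ∑ j, qf (T j) u := by
      have : 1 + K ≠ 0 := by positivity
      field_simp
      ring
    linarith

end Tests

/-! ### Intersection of tests by tilting -/

section Tilt
open Matrix

variable {G : Type*} [Fintype G] [DecidableEq G] {P : Type*} [Fintype P] [DecidableEq P]

theorem bf_one_rect (R : Matrix P G ℂ) (w : P → ℂ) (a : G → ℂ) :
    bf 1 (R *ᵥ a) w = bf 1 a (Rᴴ *ᵥ w) := by
  simp [bf, star_mulVec, dotProduct_mulVec]

/-- A multiple of an isometry has an adjoint bounded by the same multiple. -/
theorem qf_adj_le {R : Matrix P G ℂ} {τ : ℝ} (hτ : 0 < τ) (hR : Rᴴ * R = (τ : ℂ) • 1)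
    (w : P → ℂ) : qf 1 (Rᴴ *ᵥ w) ≤ τ * qf 1 w := by
  have h := qf_one_nonneg (R *ᵥ (Rᴴ *ᵥ w) - (τ : ℂ) • w)
  have h2 : qf 1 (R *ᵥ (Rᴴ *ᵥ w)) = τ * qf 1 (Rᴴ *ᵥ w) := by
    rw [qf, bf_one_rect, mulVec_mulVec, hR, smul_mulVec, one_mulVec, bf_smul_right]; rfl
  rw [qf_sub isHermitian_one, h2, qf_smul, bf_smul_right, bf_one_rect] at h
  have h3 : bf 1 (Rᴴ *ᵥ w) (Rᴴ *ᵥ w) = qf 1 (Rᴴ *ᵥ w) := rfl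
  have : 0 ≤ τ * (τ * qf 1 w - qf 1 (Rᴴ *ᵥ w)) := by rw [h3] at h; linarith
  have := nonneg_of_mul_nonneg_right this hτ
  linarith

variable {O : Type*} [Fintype O] [DecidableEq O]

/-- The map `h ↦ h ⊗ t` for a fixed real vector `t`. -/
def emb (G : Type*) [DecidableEq G] {O : Type*} (t : O → ℝ) : Matrix (G × O) G ℂ :=
  Matrix.of fun p g => if p.1 = g then (t p.2 : ℂ) else 0

theorem emb_mulVec (t : O → ℝ) (h : G → ℂ) (p : G × O) : (emb G t *ᵥ h) p = t p.2 * h p.1 := by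
  simp [emb, mulVec, dotProduct]

theorem emb_adj_mulVec (t : O → ℝ) (w : G × O → ℂ) (g : G) :
    ((emb G t)ᴴ *ᵥ w) g = ∑ o, t o * w (g, o) := by
  simp only [mulVec, dotProduct, conjTranspose_apply, emb, of_apply, Fintype.sum_prod_type]
  rw [Finset.sum_eq_single g]
  · simp
  · intro b _ hb; simp [hb]
  · simp

theorem emb_adj_emb (t : O → ℝ) : (emb G t)ᴴ * emb G t = ((∑ o, t o ^ 2 : ℝ) : ℂ) • 1 := by
  ext g g'
  have := emb_adj_mulVec t (fun p => emb G t p g') g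
  rw [show ((emb G t)ᴴ * emb G t) g g' = ((emb G t)ᴴ *ᵥ (fun p => emb G t p g')) g from rfl, this]
  by_cases h : g = g' <;> simp [emb, h, one_apply, sq]

/-- The isometry relabelling the second factor along `κ`. -/
def rel (G : Type*) [DecidableEq G] {O O' : Type*} [DecidableEq O'] (κ : O → O') :
    Matrix (G × O') (G × O) ℂ :=
  Matrix.of fun p q => if p = (q.1, κ q.2) then 1 else 0

theorem rel_adj_mulVec {O' : Type*} [Fintype O'] [DecidableEq O'] (κ : O → O') (w : G × O' → ℂ)
    (q : G × O) : ((rel G κ)ᴴ *ᵥ w) q = w (q.1, κ q.2) := by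
  simp [rel, mulVec, dotProduct]

theorem rel_adj_rel {O' : Type*} [Fintype O'] [DecidableEq O'] {κ : O → O'}
    (hκ : Function.Injective κ) : (rel G κ)ᴴ * rel G κ = 1 := by
  ext q q'
  have := rel_adj_mulVec κ (fun p => rel G κ p q') q
  rw [show ((rel G κ)ᴴ * rel G κ) q q' = ((rel G κ)ᴴ *ᵥ (fun p => rel G κ p q')) q from rfl, this]
  simp only [rel, of_apply, one_apply, Prod.ext_iff, hκ.eq_iff]

theorem rel_adj_emb {O' : Type*} [Fintype O'] [DecidableEq O'] (κ : O → O') (t : O' → ℝ)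
    (h : G → ℂ) : (rel G κ)ᴴ *ᵥ (emb G t *ᵥ h) = emb G (t ∘ κ) *ᵥ h := by
  ext q; rw [rel_adj_mulVec, emb_mulVec, emb_mulVec]; rfl

theorem qf_emb (t : O → ℝ) (h : G → ℂ) : qf 1 (emb G t *ᵥ h) = (∑ o, t o ^ 2) * qf 1 h := by
  rw [qf, bf_one_rect, mulVec_mulVec, emb_adj_emb, smul_mulVec, one_mulVec, bf_smul_right]; rfl

/-- Error patterns: which of the three message components are wrong. -/
abbrev Pat := Bool × Bool × Bool

/-- Inclusion of error patterns. -/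
def sub (S S' : Pat) : Bool := (!S.1 || S'.1) && (!S.2.1 || S'.2.1) && (!S.2.2 || S'.2.2)

/-- The Möbius function of `Bool`, ordered by `false ≤ true`. -/
def mob1 : Bool → Bool → ℤ
  | true, true => 1
  | false, false => 1
  | false, true => -1
  | true, false => 0

/-- The Möbius function of the lattice of error patterns. -/
def mob (S S' : Pat) : ℤ := mob1 S.1 S'.1 * mob1 S.2.1 S'.2.1 * mob1 S.2.2 S'.2.2

/-- Möbius inversion: summing the Möbius function over the patterns containing `S` isolates `S`. -/
theorem mob_inv : ∀ S S'' : Pat,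
    ∑ S', (if sub S S' then mob S' S'' else 0) = if S = S'' then 1 else 0 := by decide

theorem mob_sq : ∀ S : Pat, ∑ S', mob S S' ^ 2 ≤ 8 := by decide

/-- The tilting vector of pattern `S`: weight `δ` on all the directions `S' ⊇ S`. -/
def tvec (δ : ℝ) (S : Pat) : Option Pat → ℝ
  | none => 1
  | some S' => if sub S S' then δ else 0

/-- The untilted direction. -/
def e0 {O : Type*} : Option O → ℝ
  | none => 1
  | some _ => 0

theorem qf_one_eq (x : G → ℂ) : qf 1 x = ∑ g, ‖x g‖ ^ 2 := by
  simp [qf, bf, dotProduct, Complex.sq_norm, Complex.normSq_apply]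

theorem qf_one_lincomb {ι : Type*} [Fintype ι] (c : ι → ℝ) (x : ι → G → ℂ) :
    qf 1 (∑ i, (c i : ℂ) • x i) ≤ (∑ i, c i ^ 2) * ∑ i, qf 1 (x i) := by
  simp only [qf_one_eq]
  rw [Finset.sum_comm, Finset.mul_sum]
  refine Finset.sum_le_sum fun g _ => ?_
  rw [Finset.sum_apply]
  have h1 : ‖∑ i, ((c i : ℂ) • x i) g‖ ≤ ∑ i, |c i| * ‖x i g‖ := by
    refine (norm_sum_le _ _).trans_eq ?_
    simp
  calc ‖∑ i, ((c i : ℂ) • x i) g‖ ^ 2 ≤ (∑ i, |c i| * ‖x i g‖) ^ 2 := by gcongr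
    _ ≤ (∑ i, |c i| ^ 2) * ∑ i, ‖x i g‖ ^ 2 := Finset.sum_mul_sq_le_sq_mul_sq _ _ _
    _ = _ := by simp

/-- An intersection of the tests `E S`: on the enlarged space it accepts `h ⊗ e0` whenever all
`E S` accept `h`, and rejects `h ⊗ tvec S` whenever `E S` rejects `h`. -/
theorem exists_inter {s : ℝ} (hs : 0 < s) (hs1 : s ≤ 1) (E : Pat → Matrix G G ℂ)
    (hE : ∀ S, (E S).PosDef)
    (h1E : ∀ S, (1 - E S).PosSemidef) :
    ∃ T : Matrix (G × Option Pat) (G × Option Pat) ℂ, T.PosSemidef ∧ (1 - T).PosSemidef ∧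
      (∀ S h, qf T (emb G (tvec √s S) *ᵥ h) ≤ 9 * qf (E S) h) ∧
      ∀ h, qf 1 h - qf T (emb G e0 *ᵥ h) ≤ 65 / s * ∑ S, qf (1 - E S) h := by
  have hinvle : ∀ S v, qf 1 v ≤ qf (E S)⁻¹ v := by
    intro S v
    have h := fenchel (hE S) v v
    have h2 := qf_le (h1E S) v
    have h4 : bf 1 v v = qf 1 v := rfl
    linarith
  have hF : ∀ S, ((E S)⁻¹ - 1).PosSemidef := fun S =>
    psd_of_qf ((hE S).inv.1.sub isHermitian_one) fun v => by
      rw [qf_msub]; linarith [hinvle S v]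
  set A : Pat → Matrix (G × Option Pat) (G × Option Pat) ℂ := fun S =>
    emb G (tvec √s S) * ((E S)⁻¹ - 1) * (emb G (tvec √s S))ᴴ with hA
  have hAp : ∀ S, (A S).PosSemidef := fun S => (hF S).mul_mul_conjTranspose_same _
  have hM : (1 + ∑ S, A S).PosDef :=
    PosDef.one.add_posSemidef (posSemidef_sum _ fun S _ => hAp S)
  set M := 1 + ∑ S, A S with hMdef
  have hqM : ∀ w, qf M w =
      qf 1 w + ∑ S, (qf (E S)⁻¹ ((emb G (tvec √s S))ᴴ *ᵥ w) - qf 1 ((emb G (tvec √s S))ᴴ *ᵥ w)) := by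
    intro w
    rw [hMdef, qf_madd, qf_msum]
    simp only [hA, qf_conj, qf_msub]
  have hle1 : ∀ x, qf M⁻¹ x ≤ qf 1 x := by
    intro x
    obtain ⟨h1, h2⟩ := qf_inv_eq hM x
    have h3 := qf_one_nonneg (x - M⁻¹ *ᵥ x)
    rw [qf_sub isHermitian_one] at h3
    have h4 : qf 1 (M⁻¹ *ᵥ x) ≤ qf M (M⁻¹ *ᵥ x) := by
      rw [hMdef, qf_madd]
      linarith [qf_nonneg (posSemidef_sum Finset.univ fun S _ => hAp S) ((1 + ∑ S, A S)⁻¹ *ᵥ x)]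
    linarith
  refine ⟨M⁻¹, hM.inv.posSemidef, ?_, ?_, ?_⟩
  · exact psd_of_qf (isHermitian_one.sub hM.inv.1) fun x => by
      rw [qf_msub]; linarith [hle1 x]
  · intro S h
    set R := emb G (tvec √s S) with hR
    set τ : ℝ := ∑ o, tvec √s S o ^ 2 with hτ
    have hτ1 : 1 ≤ τ := by
      rw [hτ, Fintype.sum_option]
      simp only [tvec, one_pow]
      linarith [Finset.sum_nonneg fun (S' : Pat) (_ : S' ∈ Finset.univ) =>
        sq_nonneg (if sub S S' then √s else 0)]
    have hτ9 : τ ≤ 9 := by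
      rw [hτ, Fintype.sum_option]
      simp only [tvec, one_pow]
      have : ∑ S' : Pat, (if sub S S' then √s else 0) ^ 2 ≤ ∑ S' : Pat, (1 : ℝ) := by
        refine Finset.sum_le_sum fun S' _ => ?_
        split_ifs
        · rw [Real.sq_sqrt hs.le]; exact hs1
        · norm_num
      have h8 : ∑ S' : Pat, (1 : ℝ) = 8 := by simp
      linarith
    -- In the term of `M` with index `S`, a large `(E S)⁻¹` forces the contraction of `M⁻¹ (R h)` with
    -- the tilted vector to be small, which is measured by the dual form `E S`.
    set w := M⁻¹ *ᵥ (R *ᵥ h) with hw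
    set a := Rᴴ *ᵥ w with ha
    obtain ⟨h1, h2⟩ := qf_inv_eq hM (R *ᵥ h)
    rw [bf_one_rect] at h2
    have h3 : qf 1 a ≤ τ * qf 1 w := qf_adj_le (by linarith) (emb_adj_emb _) w
    have h4 : qf 1 w + (qf (E S)⁻¹ a - qf 1 a) ≤ qf M w := by
      rw [hqM]
      gcongr
      refine Finset.single_le_sum (f := fun S => qf (E S)⁻¹ ((emb G (tvec √s S))ᴴ *ᵥ w)
        - qf 1 ((emb G (tvec √s S))ᴴ *ᵥ w)) (fun S _ => ?_) (Finset.mem_univ S)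
      linarith [hinvle S ((emb G (tvec √s S))ᴴ *ᵥ w)]
    have h5 := fenchel (hE S).inv h (((τ⁻¹ : ℝ) : ℂ) • a)
    rw [Matrix.nonsing_inv_nonsing_inv _ ((Matrix.isUnit_iff_isUnit_det _).1 (hE S).isUnit),
      bf_smul_right, qf_smul] at h5
    have h6 : τ * (2 * (τ⁻¹ * bf 1 h a) - τ⁻¹ ^ 2 * qf (E S)⁻¹ a) ≤ τ * qf (E S) h := by gcongr
    have h7 : τ * (2 * (τ⁻¹ * bf 1 h a) - τ⁻¹ ^ 2 * qf (E S)⁻¹ a) =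
        2 * bf 1 h a - τ⁻¹ * qf (E S)⁻¹ a := by
      field_simp
    have h8 : τ⁻¹ * qf 1 a ≤ qf 1 w := by
      rw [inv_mul_le_iff₀ (by linarith)]; exact h3
    have h9 : τ⁻¹ ≤ 1 := inv_le_one_of_one_le₀ hτ1
    have h10 : 0 ≤ (1 - τ⁻¹) * (qf (E S)⁻¹ a - qf 1 a) :=
      mul_nonneg (by linarith) (by linarith [hinvle S a])
    have h11 : τ * qf (E S) h ≤ 9 * qf (E S) h := by
      gcongr; exact qf_nonneg (hE S).posSemidef h
    linarith
  · intro h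
    set g : Pat → G → ℂ := fun S => (1 - E S) *ᵥ h with hg
    -- the competitor in the variational formula: its `S`-th contraction is `E S h`
    set w : G × Option Pat → ℂ := fun p => match p.2 with
      | none => h p.1
      | some S => (∑ S', ((-(√s)⁻¹ * (mob S S' : ℝ) : ℝ) : ℂ) • g S') p.1 with hw
    have hs0 : √s ≠ 0 := (Real.sqrt_pos.2 hs).ne'
    have ha : ∀ S, (emb G (tvec √s S))ᴴ *ᵥ w = E S *ᵥ h := by
      intro S
      ext x
      rw [emb_adj_mulVec, Fintype.sum_option]
      have e1 : ∀ S', ((tvec √s S (some S') : ℝ) : ℂ) * w (x, some S') =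
          ∑ S'', -(((if sub S S' then mob S' S'' else 0 : ℤ) : ℂ) * g S'' x) := by
        intro S'
        simp only [hw, tvec, Finset.sum_apply, Finset.mul_sum]
        refine Finset.sum_congr rfl fun S'' _ => ?_
        split_ifs
        · have hsc : (√s : ℂ) ≠ 0 := by exact_mod_cast hs0
          simp only [Pi.smul_apply, smul_eq_mul]
          push_cast
          field_simp
        · simp
      simp only [e1]
      rw [Finset.sum_comm]
      have e2 : ∀ S'', ∑ S', -(((if sub S S' then mob S' S'' else 0 : ℤ) : ℂ) * g S'' x)
          = if S = S'' then - g S'' x else 0 := by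
        intro S''
        rw [Finset.sum_neg_distrib, ← Finset.sum_mul, ← Int.cast_sum, mob_inv]
        split_ifs <;> simp
      simp only [e2]
      simp [hg, sub_mulVec, tvec, hw]
    have ha0 : (emb G e0)ᴴ *ᵥ w = h := by
      ext x
      rw [emb_adj_mulVec, Fintype.sum_option]
      simp [e0, hw]
    have hf := fenchel hM (emb G e0 *ᵥ h) w
    rw [bf_one_rect, ha0, hqM] at hf
    simp only [ha] at hf
    have hb : bf 1 h h = qf 1 h := rfl
    have hn : qf 1 w = qf 1 h + ∑ S, qf 1 (∑ S', ((-(√s)⁻¹ * (mob S S' : ℝ) : ℝ) : ℂ) • g S') := by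
      rw [qf_one_eq, qf_one_eq, Fintype.sum_prod_type]
      simp only [Fintype.sum_option, hw, qf_one_eq]
      rw [Finset.sum_add_distrib, Finset.sum_comm]
    have hgq : ∀ S, qf 1 (g S) ≤ qf (1 - E S) h := by
      intro S
      rw [hg, qf_mul_self (h1E S).1]
      have hh : (1 - E S) - (1 - E S) * (1 - E S) =
          (1 - E S) * E S * (1 - E S)ᴴ + E S * (1 - E S) * (E S)ᴴ := by
        rw [(h1E S).1.eq, (hE S).1.eq]; noncomm_ring
      refine qf_le ?_ h
      rw [hh]
      exact ((hE S).posSemidef.mul_mul_conjTranspose_same _).add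
        ((h1E S).mul_mul_conjTranspose_same _)
    have h2 : ∀ S, qf (E S)⁻¹ (E S *ᵥ h) - qf 1 (E S *ᵥ h) ≤ qf (1 - E S) h := by
      intro S
      rw [qf, bf_mulVec_right, inv_mul' (hE S), bf_mulVec_left _ (hE S).1, mul_one]
      have h3 := qf_one_nonneg (h - E S *ᵥ h)
      rw [qf_sub isHermitian_one, bf_mulVec_right, one_mul] at h3
      rw [qf_msub]
      have h5 : bf (E S) h h = qf (E S) h := rfl
      linarith
    have h3 : ∀ S, qf 1 (∑ S', ((-(√s)⁻¹ * (mob S S' : ℝ) : ℝ) : ℂ) • g S') ≤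
        8 / s * ∑ S', qf (1 - E S') h := by
      intro S
      refine (qf_one_lincomb _ g).trans ?_
      gcongr with S'
      · exact Finset.sum_nonneg fun S' _ => qf_one_nonneg _
      · simp only [mul_pow, neg_sq, inv_pow, Real.sq_sqrt hs.le]
        rw [← Finset.mul_sum, div_eq_inv_mul]
        gcongr
        exact_mod_cast mob_sq S
      · exact hgq S'
    have h4 : ∑ S : Pat, qf 1 (∑ S', ((-(√s)⁻¹ * (mob S S' : ℝ) : ℝ) : ℂ) • g S') ≤
        64 / s * ∑ S', qf (1 - E S') h := by
      refine (Finset.sum_le_sum fun S _ => h3 S).trans_eq ?_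
      simp only [Finset.sum_const, Finset.card_univ, Fintype.card_prod, Fintype.card_bool]
      rw [nsmul_eq_mul]; push_cast; ring
    have h5 := Finset.sum_le_sum fun S (_ : S ∈ Finset.univ) => h2 S
    have h6 : 0 ≤ ∑ S', qf (1 - E S') h := Finset.sum_nonneg fun S _ => qf_nonneg (h1E S) h
    have h7 : ∑ S', qf (1 - E S') h ≤ 1 / s * ∑ S', qf (1 - E S') h := by
      refine le_mul_of_one_le_left h6 ?_
      rw [le_div_iff₀ hs]; linarith
    have h8 : 65 / s * ∑ S', qf (1 - E S') h =
      64 / s * ∑ S', qf (1 - E S') h + 1 / s * ∑ S', qf (1 - E S') h := by ring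
    linarith

end Tilt
end HK

namespace HK

/-! ### Simultaneous decoding -/

section Decoder
open Matrix

variable {G : Type*} [Fintype G] [DecidableEq G]
  {M1 M2 M3 : Type*} [Fintype M1] [Fintype M2] [Fintype M3]
  [DecidableEq M1] [DecidableEq M2] [DecidableEq M3]

/-- The error pattern of the guess `m'` when `m` was sent. -/
def pat (m m' : M1 × M2 × M3) : Pat :=
  (decide (m.1 ≠ m'.1), decide (m.2.1 ≠ m'.2.1), decide (m.2.2 ≠ m'.2.2))

/-- The label of the tilting direction `S` for the message `m`: it remembers the components of
`m` outside `S`. -/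
def key (m : M1 × M2 × M3) (S : Pat) : Pat × Option M1 × Option M2 × Option M3 :=
  (S, if S.1 then none else some m.1, if S.2.1 then none else some m.2.1,
    if S.2.2 then none else some m.2.2)

theorem key_eq_iff (m m' : M1 × M2 × M3) (S : Pat) :
    key m' S = key m S ↔ sub (pat m m') S = true := by
  obtain ⟨a, b, c⟩ := m
  obtain ⟨a', b', c'⟩ := m'
  obtain ⟨x, y, z⟩ := S
  have e1 : a' = a ↔ a = a' := eq_comm
  have e2 : b' = b ↔ b = b' := eq_comm
  have e3 : c' = c ↔ c = c' := eq_comm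
  cases x <;> cases y <;> cases z <;> simp [key, sub, pat, e1, e2, e3, and_assoc]

/-- The tilting vector of the message `m` in the common extension space. -/
def tmsg (δ : ℝ) (m : M1 × M2 × M3) : Option (Pat × Option M1 × Option M2 × Option M3) → ℝ
  | none => 1
  | some k => if k = key m k.1 then δ else 0

/-- Seen from the guess `m'`, the tilted vector of `m` is the tilted vector of the error pattern:
the labels of `m` and `m'` agree exactly for the directions which contain all wrong components. -/
theorem tmsg_comp (δ : ℝ) (m m' : M1 × M2 × M3) :
    tmsg δ m ∘ Option.map (key m') = tvec δ (pat m m') := by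
  funext o
  cases o with
  | none => rfl
  | some S =>
    have : (key m' S).1 = S := rfl
    simp only [Function.comp, Option.map, tmsg, tvec, this, key_eq_iff]

theorem e0_comp (m' : M1 × M2 × M3) : e0 ∘ Option.map (key m') = e0 := by
  funext o; cases o <;> rfl

theorem key_inj (m' : M1 × M2 × M3) : Function.Injective (Option.map (key m')) :=
  Option.map_injective fun _ _ h => congrArg Prod.fst h

theorem sum_tmsg (δ : ℝ) (m : M1 × M2 × M3) :
    ∑ k : Pat × Option M1 × Option M2 × Option M3, (if k = key m k.1 then δ else 0) ^ 2
      = 8 * δ ^ 2 := by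
  rw [Fintype.sum_prod_type]
  have : ∀ S : Pat, ∑ r : Option M1 × Option M2 × Option M3,
      (if (S, r) = key m (S, r).1 then δ else 0) ^ 2 = δ ^ 2 := by
    intro S
    rw [Finset.sum_eq_single (key m S).2]
    · have h : (S, (key m S).2) = key m S := rfl
      simp [h]
    · intro r _ hr
      have : (S, r) ≠ key m S := fun h => hr (congrArg Prod.snd h)
      simp [this]
    · simp
  simp only [this]
  simp

/-- The labels of the tilting directions. -/
abbrev Lab (M1 M2 M3 : Type*) := Option (Pat × Option M1 × Option M2 × Option M3)

instance : DecidableEq (Lab M1 M2 M3) :=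
  Option.instDecidableEq

/-- Completeness of the union: `q` and `n - t` are the rejection probabilities of the union and of
one of its members, and the union is formed with `K = 1 / s`. -/
theorem union_arith {s n A q t : ℝ} (hs : 0 < s) (hn : 0 ≤ n) (hA : 0 ≤ A)
    (h1 : q ≤ n - 1 / (1 + s) * t) (h2 : n - t ≤ 65 / s * A) : q ≤ s * n + 65 / s * A := by
  have hδ : 0 ≤ 65 / s * A := by positivity
  have c1 : 1 / (1 + s) * (n - 65 / s * A) ≤ 1 / (1 + s) * t := by
    gcongr; linarith
  have c2 : n - s * n - 65 / s * A ≤ 1 / (1 + s) * (n - 65 / s * A) := by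
    rw [one_div, ← div_eq_inv_mul, le_div_iff₀ (by linarith)]
    nlinarith [mul_nonneg hs.le hδ, mul_nonneg (mul_nonneg hs.le hs.le) hn]
  linarith

/-- The error budget of the decoder: `8 * s * n` is the cost of exchanging the tilted and the
untilted vector, `A` bounds the missed detections and `B` the false acceptances. -/
theorem decoder_arith {s n A B x1 x2 x3 x4 x5 y1 y2 z w S : ℝ} (hs : 0 < s)
    (hn : 0 ≤ n) (hB : 0 ≤ B) (a1 : x1 ≤ 2 * x2 + 2 * x3) (a2 : x2 ≤ y1) (hd : y1 = 8 * s * n)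
    (a3 : x3 ≤ 2 * x4 + 4 * (s * z + S)) (b1 : x4 ≤ 2 * x5 + 2 * w) (b2 : x5 ≤ y2)
    (hd' : y2 = 8 * s * n) (b6 : w ≤ s * n + 65 / s * A) (hnt : z ≤ 9 * n)
    (d2 : S ≤ 9 / s * B) :
    x1 ≤ 520 * (s * n + 1 / s * A + 1 / s * B) := by
  have e1 : 65 / s * A = 65 * (1 / s * A) := by ring
  have e2 : 9 / s * B = 9 * (1 / s * B) := by ring
  have e3 : 0 ≤ 1 / s * B := by positivity
  have e4 : s * z ≤ 9 * (s * n) := by nlinarith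
  have e5 : 0 ≤ s * n := by positivity
  rw [e1] at b6
  rw [e2] at d2
  linarith

/-- Simultaneous decoding: from tests `E S m`, the one with index `S` serving to reject the guess
`m` when exactly the components in `S` are wrong, one obtains a single measurement of the first two
components which works for every pattern at once. -/
theorem exists_decoder (E : Pat → M1 × M2 × M3 → Matrix G G ℂ)
    (hE : ∀ S m, (E S m).PosDef) (h1E : ∀ S m, (1 - E S m).PosSemidef)
    {s : ℝ} (hs : 0 < s) (hs1 : s ≤ 1) :
    ∃ Λ : M1 × M2 → Matrix G G ℂ, (∀ j, (Λ j).PosSemidef) ∧ (1 - ∑ j, Λ j).PosSemidef ∧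
      ∀ (m : M1 × M2 × M3) h, qf (1 - Λ (m.1, m.2.1)) h ≤
        520 * (s * qf 1 h + 1 / s * ∑ S, qf (1 - E S m) h +
          1 / s * ∑ j ∈ Finset.univ.erase (m.1, m.2.1), ∑ c,
            qf (E (pat m (j.1, j.2, c)) (j.1, j.2, c)) h) := by
  choose T hT h1T hT9 hT65 using fun m =>
    exists_inter hs hs1 (fun S => E S m) (fun S => hE S m) (fun S => h1E S m)
  set TT : M1 × M2 × M3 → Matrix (G × Lab M1 M2 M3)
      (G × Lab M1 M2 M3) ℂ := fun m =>
    rel G (Option.map (key m)) * T m * (rel G (Option.map (key m)))ᴴ with hTT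
  have hTTp : ∀ m, (TT m).PosSemidef := fun m => (hT m).mul_mul_conjTranspose_same _
  have hqTT : ∀ m w, qf (TT m) w = qf (T m) ((rel G (Option.map (key m)))ᴴ *ᵥ w) :=
    fun m w => qf_conj _ _ _
  have h1TT : ∀ m, (1 - TT m).PosSemidef := fun m =>
    psd_of_qf (isHermitian_one.sub (hTTp m).1) fun w => by
      rw [qf_msub, hqTT]
      have h1 := qf_le (h1T m) ((rel G (Option.map (key m)))ᴴ *ᵥ w)
      have h2 := qf_adj_le one_pos (R := rel G (Option.map (key m))) (by
        rw [rel_adj_rel (key_inj m)]; simp) w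
      linarith
  -- The union over the third component with `K = 1 / s` loses at most a fraction `s` of completeness
  -- and a factor `1 / s` of soundness.
  have hK : 0 < 1 / s := by positivity
  choose U hU h1U hUK hUm using fun j : M1 × M2 =>
    exists_union (fun c : M3 => TT (j.1, j.2, c)) (fun c => hTTp _) (fun c => h1TT _) hK
  obtain ⟨L, hL, h1L, hLb⟩ := exists_pgm U hU h1U hs
  have hee : (emb G (e0 : Lab M1 M2 M3 → ℝ))ᴴ * emb G (e0 : Lab M1 M2 M3 → ℝ) = 1 := by
    rw [emb_adj_emb, Fintype.sum_option]; simp [e0]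
  have hLam1 : 1 - ∑ j, (emb G (e0 : Lab M1 M2 M3 → ℝ))ᴴ * L j * emb G (e0 : Lab M1 M2 M3 → ℝ) =
      (emb G (e0 : Lab M1 M2 M3 → ℝ))ᴴ * (1 - ∑ j, L j) * ((emb G (e0 : Lab M1 M2 M3 → ℝ))ᴴ)ᴴ := by
    rw [conjTranspose_conjTranspose, Matrix.mul_sub, Matrix.sub_mul, Matrix.mul_one, hee,
      Matrix.mul_sum, Matrix.sum_mul]
  refine ⟨fun j => (emb G (e0 : Lab M1 M2 M3 → ℝ))ᴴ * L j * emb G (e0 : Lab M1 M2 M3 → ℝ), fun j => ?_, ?_, fun m h => ?_⟩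
  · have := (hL j).mul_mul_conjTranspose_same (emb G (e0 : Lab M1 M2 M3 → ℝ))ᴴ
    rwa [conjTranspose_conjTranspose] at this
  · rw [hLam1]
    exact h1L.mul_mul_conjTranspose_same _
  set j : M1 × M2 := (m.1, m.2.1) with hj
  have h1Lj : (1 - L j).PosSemidef := by
    have : 1 - L j = (1 - ∑ i, L i) + ∑ i ∈ Finset.univ.erase j, L i := by
      rw [← Finset.add_sum_erase _ _ (Finset.mem_univ j)]; abel
    rw [this]
    exact h1L.add (posSemidef_sum _ fun i _ => hL i)
  -- `v0` is the untilted vector, which is measured; `vt` is the tilted one, to which soundness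
  -- applies. They differ by `8 * s * qf 1 h` in squared norm.
  set v0 := emb G (e0 : Lab M1 M2 M3 → ℝ) *ᵥ h with hv0
  set vt := emb G (tmsg √s m) *ᵥ h with hvt
  set n := qf 1 h with hn
  have hn0 : 0 ≤ n := qf_one_nonneg h
  have hdiff : v0 - vt = emb G (e0 - tmsg √s m) *ᵥ h := by
    ext p
    simp only [hv0, hvt, Pi.sub_apply, emb_mulVec]
    push_cast; ring
  have hd : qf 1 (v0 - vt) = 8 * s * n := by
    rw [hdiff, qf_emb, Fintype.sum_option]
    have := sum_tmsg √s m
    rw [Real.sq_sqrt hs.le] at this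
    simp only [Pi.sub_apply, e0, tmsg, zero_sub, neg_sq, this]
    ring
  have hd' : qf 1 (vt - v0) = 8 * s * n := by
    rw [← hd, qf_one_eq, qf_one_eq]
    simp only [Pi.sub_apply, norm_sub_rev]
  have hnt : qf 1 vt ≤ 9 * n := by
    rw [hvt, qf_emb, Fintype.sum_option]
    have := sum_tmsg √s m
    rw [Real.sq_sqrt hs.le] at this
    simp only [tmsg, this]
    nlinarith
  have hlam : qf (1 - (emb G (e0 : Lab M1 M2 M3 → ℝ))ᴴ * L j * emb G (e0 : Lab M1 M2 M3 → ℝ)) h = qf (1 - L j) v0 := by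
    have : 1 - (emb G (e0 : Lab M1 M2 M3 → ℝ))ᴴ * L j * emb G (e0 : Lab M1 M2 M3 → ℝ) = (emb G (e0 : Lab M1 M2 M3 → ℝ))ᴴ * (1 - L j) * ((emb G (e0 : Lab M1 M2 M3 → ℝ))ᴴ)ᴴ := by
      rw [conjTranspose_conjTranspose, Matrix.mul_sub, Matrix.sub_mul, Matrix.mul_one, hee]
    rw [this, qf_conj, conjTranspose_conjTranspose]
  have a1 := qf_add_le_two h1Lj (v0 - vt) vt
  rw [sub_add_cancel] at a1
  have a2 : qf (1 - L j) (v0 - vt) ≤ qf 1 (v0 - vt) :=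
    qf_le (by rw [sub_sub_cancel]; exact hL j) _
  have a3 := hLb j vt
  have b1 := qf_add_le_two (h1U j) (vt - v0) v0
  rw [sub_add_cancel] at b1
  have b2 : qf (1 - U j) (vt - v0) ≤ qf 1 (vt - v0) :=
    qf_le (by rw [sub_sub_cancel]; exact hU j) _
  have b3 := hUm j m.2.2 v0
  have hnv0 : qf 1 v0 = n := by rw [hv0, qf_emb, Fintype.sum_option]; simp [e0, hn]
  have hqv0 : qf (TT m) v0 = qf (T m) (emb G e0 *ᵥ h) := by
    rw [hqTT, hv0, rel_adj_emb, e0_comp]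
  have b4 := hT65 m h
  rw [← hqv0] at b4
  have b5 : 1 / s / (1 + 1 / s) = 1 / (1 + s) := by field_simp; ring
  have hTm : TT (j.1, j.2, m.2.2) = TT m := rfl
  rw [b5, hnv0, hTm] at b3
  set A := ∑ S, qf (1 - E S m) h with hA
  have hA0 : 0 ≤ A := Finset.sum_nonneg fun S _ => qf_nonneg (h1E S m) h
  have b6 := union_arith hs hn0 hA0 b3 b4
  have d1 : ∀ j' : M1 × M2, qf (U j') vt ≤
      9 / s * ∑ c, qf (E (pat m (j'.1, j'.2, c)) (j'.1, j'.2, c)) h := by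
    intro j'
    have f1 : ∑ c, qf (TT (j'.1, j'.2, c)) vt ≤
        ∑ c, 9 * qf (E (pat m (j'.1, j'.2, c)) (j'.1, j'.2, c)) h := by
      refine Finset.sum_le_sum fun c _ => ?_
      rw [hqTT, hvt, rel_adj_emb, tmsg_comp]
      exact hT9 (j'.1, j'.2, c) _ h
    rw [← Finset.mul_sum] at f1
    have f2 := hUK j' vt
    have f3 := mul_le_mul_of_nonneg_left f1 hK.le
    rw [← mul_assoc, one_div_mul_eq_div (a := s) (b := 9)] at f3
    exact f2.trans f3
  have d2 := Finset.sum_le_sum fun j' (_ : j' ∈ Finset.univ.erase j) => d1 j'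
  rw [← Finset.mul_sum] at d2
  rw [hlam]
  set B := ∑ j' ∈ Finset.univ.erase j, ∑ c, qf (E (pat m (j'.1, j'.2, c)) (j'.1, j'.2, c)) h
    with hB
  have hB0 : 0 ≤ B := Finset.sum_nonneg fun _ _ => Finset.sum_nonneg fun _ _ =>
    qf_nonneg (hE _ _).posSemidef h
  exact decoder_arith hs hn0 hB0 a1 a2 hd a3 b1 b2 hd' b6 hnt d2

end Decoder
end HK

namespace HK

/-! ### Acceptance probabilities -/

section Trace
open Matrix

variable {G : Type*} [Fintype G] [DecidableEq G]

/-- The real number `Tr (M ω)`: the acceptance probability of the test `M` on the state `ω`. -/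
def rt (M ω : Matrix G G ℂ) : ℝ := ((M * ω).trace).re

/-- A state is a sum of rank-one terms, so bounds on quadratic forms pass to states. -/
theorem rt_eq_sum {ω : Matrix G G ℂ} (hω : ω.PosSemidef) :
    ∃ (n : ℕ) (v : Fin n → G → ℂ), ∀ M, rt M ω = ∑ i, qf M (v i) := by
  obtain ⟨n, v, hv⟩ := posSemidef_iff_eq_sum_vecMulVec.1 hω
  refine ⟨n, v, fun M => ?_⟩
  rw [rt, hv, Finset.mul_sum, trace_sum, Complex.re_sum]
  refine Finset.sum_congr rfl fun i _ => ?_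
  rw [mul_vecMulVec, trace_vecMulVec, dotProduct_comm]; rfl

theorem rt_nonneg {M ω : Matrix G G ℂ} (hM : M.PosSemidef) (hω : ω.PosSemidef) : 0 ≤ rt M ω := by
  obtain ⟨n, v, hv⟩ := rt_eq_sum hω
  rw [hv]
  exact Finset.sum_nonneg fun i _ => qf_nonneg hM _

theorem rt_madd (M M' ω : Matrix G G ℂ) : rt (M + M') ω = rt M ω + rt M' ω := by
  simp [rt, add_mul]
theorem rt_msub (M M' ω : Matrix G G ℂ) : rt (M - M') ω = rt M ω - rt M' ω := by
  simp [rt, sub_mul]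
theorem rt_msmul (c : ℝ) (M ω : Matrix G G ℂ) : rt ((c : ℂ) • M) ω = c * rt M ω := by
  simp [rt]

variable {M1 M2 M3 : Type*} [Fintype M1] [Fintype M2] [Fintype M3]
  [DecidableEq M1] [DecidableEq M2] [DecidableEq M3]

/-- The version of `exists_decoder` for mixed states. -/
theorem exists_decoder_rt (E : Pat → M1 × M2 × M3 → Matrix G G ℂ)
    (hE : ∀ S m, (E S m).PosDef) (h1E : ∀ S m, (1 - E S m).PosSemidef)
    {s : ℝ} (hs : 0 < s) (hs1 : s ≤ 1) :
    ∃ Λ : M1 × M2 → Matrix G G ℂ, (∀ j, (Λ j).PosSemidef) ∧ (1 - ∑ j, Λ j).PosSemidef ∧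
      ∀ (m : M1 × M2 × M3) ω, ω.PosSemidef → rt (1 - Λ (m.1, m.2.1)) ω ≤
        520 * (s * rt 1 ω + 1 / s * ∑ S, rt (1 - E S m) ω +
          1 / s * ∑ j ∈ Finset.univ.erase (m.1, m.2.1), ∑ c,
            rt (E (pat m (j.1, j.2, c)) (j.1, j.2, c)) ω) := by
  obtain ⟨Λ, h1, h2, h3⟩ := exists_decoder E hE h1E hs hs1
  refine ⟨Λ, h1, h2, fun m ω hω => ?_⟩
  obtain ⟨n, v, hv⟩ := rt_eq_sum hω
  simp only [hv]
  refine (Finset.sum_le_sum fun i _ => h3 m (v i)).trans_eq ?_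
  rw [← Finset.mul_sum, Finset.sum_add_distrib, Finset.sum_add_distrib, ← Finset.mul_sum,
    ← Finset.mul_sum, ← Finset.mul_sum, Finset.sum_comm (γ := Fin n)]
  congr 3
  rw [Finset.sum_comm]
  exact Finset.sum_congr rfl fun j _ => Finset.sum_comm

/-- Entrywise products of positive semidefinite matrices are positive semidefinite (Schur). -/
theorem psd_prod {n ι : Type*} [DecidableEq ι] (s : Finset ι) (A : ι → Matrix n n ℂ)
    (hA : ∀ i ∈ s, (A i).PosSemidef) : (Matrix.of fun p q => ∏ i ∈ s, A i p q).PosSemidef := by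
  induction s using Finset.induction_on with
  | empty =>
    have := (PosSemidef.one (n := Unit) (R := ℂ)).submatrix (fun _ : n => ())
    convert this using 1
    ext p q; simp
  | insert a s ha ih =>
    have e : (Matrix.of fun p q => ∏ i ∈ insert a s, A i p q) =
        A a ⊙ Matrix.of fun p q => ∏ i ∈ s, A i p q := by
      ext p q; simp [Finset.prod_insert ha]
    rw [e]
    exact (hA a (Finset.mem_insert_self _ _)).hadamard
      (ih fun i hi => hA i (Finset.mem_insert_of_mem hi))

end Trace

/-! ### Copies of the entangled register -/

section Embed
open Matrix

variable {Y Z B : Type*} [Fintype Y] [Fintype Z] [Fintype B] [DecidableEq Y] [DecidableEq Z]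
  [DecidableEq B]

/-- The operator `M` on `Y` and the `b`-th copy of `Z`. -/
def embB (b : B) (M : Matrix (Y × Z) (Y × Z) ℂ) : Matrix (Y × (B → Z)) (Y × (B → Z)) ℂ :=
  Matrix.of fun p q => ∏ i, if i = b then M (p.1, p.2 i) (q.1, q.2 i)
    else if p.2 i = q.2 i then 1 else 0

/-- The state `ρ` on `Y` and the `b`-th copy of `Z`, all other copies being in the state `ψ`. -/
def omg (ψ : Matrix Z Z ℂ) (b : B) (ρ : Matrix (Y × Z) (Y × Z) ℂ) :
    Matrix (Y × (B → Z)) (Y × (B → Z)) ℂ :=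
  Matrix.of fun p q => ∏ i, if i = b then ρ (p.1, p.2 i) (q.1, q.2 i) else ψ (p.2 i) (q.2 i)

theorem embB_eq (b : B) (M : Matrix (Y × Z) (Y × Z) ℂ) (p q : Y × (B → Z)) :
    embB b M p q = M (p.1, p.2 b) (q.1, q.2 b) *
      ∏ i ∈ Finset.univ.erase b, if p.2 i = q.2 i then 1 else 0 := by
  rw [embB, of_apply, ← Finset.mul_prod_erase _ _ (Finset.mem_univ b), if_pos rfl]
  congr 1
  exact Finset.prod_congr rfl fun i hi => if_neg (Finset.ne_of_mem_erase hi)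

theorem embB_sub (b : B) (M M' : Matrix (Y × Z) (Y × Z) ℂ) :
    embB b (M - M') = embB b M - embB b M' := by
  ext p q; simp only [Matrix.sub_apply, embB_eq]; ring

theorem embB_one (b : B) : embB b (1 : Matrix (Y × Z) (Y × Z) ℂ) = 1 := by
  ext p q
  by_cases h : p = q
  · subst h; simp [embB_eq]
  · rw [one_apply_ne h, embB_eq, one_apply]
    split_ifs with h1
    · rw [Prod.mk.injEq] at h1
      obtain ⟨i, hi⟩ : ∃ i, p.2 i ≠ q.2 i := by
        by_contra! hc
        exact h (Prod.ext h1.1 (funext hc))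
      rw [Finset.prod_eq_zero (i := i) (by
        simp only [Finset.mem_erase, Finset.mem_univ, and_true]
        rintro rfl; exact hi h1.2) (if_neg hi), mul_zero]
    · rw [zero_mul]

theorem embB_psd (b : B) {M : Matrix (Y × Z) (Y × Z) ℂ} (hM : M.PosSemidef) :
    (embB b M).PosSemidef := by
  refine psd_prod Finset.univ (fun i => Matrix.of fun p q : Y × (B → Z) =>
    if i = b then M (p.1, p.2 i) (q.1, q.2 i) else if p.2 i = q.2 i then 1 else 0) fun i _ => ?_
  by_cases h : i = b
  · simp only [h, if_true]
    exact hM.submatrix fun p : Y × (B → Z) => (p.1, p.2 b)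
  · simp only [h, if_false]
    have := (PosSemidef.one (n := Z) (R := ℂ)).submatrix fun p : Y × (B → Z) => p.2 i
    convert this using 1
    ext p q; simp [one_apply]

theorem omg_psd {ψ : Matrix Z Z ℂ} (hψ : ψ.PosSemidef) (b : B) {ρ : Matrix (Y × Z) (Y × Z) ℂ}
    (hρ : ρ.PosSemidef) : (omg ψ b ρ).PosSemidef := by
  refine psd_prod Finset.univ (fun i => Matrix.of fun p q : Y × (B → Z) =>
    if i = b then ρ (p.1, p.2 i) (q.1, q.2 i) else ψ (p.2 i) (q.2 i)) fun i _ => ?_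
  by_cases h : i = b
  · simp only [h, if_true]
    exact hρ.submatrix fun p : Y × (B → Z) => (p.1, p.2 b)
  · simp only [h, if_false]
    exact hψ.submatrix fun p : Y × (B → Z) => p.2 i

theorem sum_sum_prod (φ : B → Z → Z → ℂ) :
    ∑ f : B → Z, ∑ f' : B → Z, ∏ i, φ i (f i) (f' i) = ∏ i, ∑ z, ∑ z', φ i z z' := by
  rw [Fintype.prod_sum]
  refine Finset.sum_congr rfl fun f _ => ?_
  rw [Fintype.prod_sum]

theorem trace_mul_eq {n : Type*} [Fintype n] (A C : Matrix n n ℂ) :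
    (A * C).trace = ∑ i, ∑ j, A i j * C j i := by
  simp [trace, mul_apply]

theorem trace_emb_aux (ψ : Matrix Z Z ℂ) (b' b : B) (M ρ : Matrix (Y × Z) (Y × Z) ℂ) :
    (embB b' M * omg ψ b ρ).trace = ∑ y, ∑ y', ∏ i, ∑ z, ∑ z',
      (if i = b' then M (y, z) (y', z') else if z = z' then 1 else 0) *
        (if i = b then ρ (y', z') (y, z) else ψ z' z) := by
  rw [trace_mul_eq, Fintype.sum_prod_type]
  refine Finset.sum_congr rfl fun y _ => ?_
  simp only [Fintype.sum_prod_type]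
  rw [Finset.sum_comm]
  refine Finset.sum_congr rfl fun y' _ => ?_
  rw [← sum_sum_prod]
  simp only [embB, omg, of_apply, Finset.prod_mul_distrib]

/-- The state seen by the test of a guess, according to whether the guess of the index of the copy
of `Z` is wrong. -/
def Kb (ψ : Matrix Z Z ℂ) (w : Bool) (ρ : Matrix (Y × Z) (Y × Z) ℂ) :
    Matrix (Y × Z) (Y × Z) ℂ :=
  if w then trR ρ ⊗ₖ ψ else ρ

/-- The test on the copy `b'` sees the state `ρ` if `b'` is the copy in use, and otherwise the
product of the channel output with a fresh copy of `ψ`. -/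
theorem rt_embB_omg {ψ : Matrix Z Z ℂ} (hψ : ψ.trace = 1) (b' b : B)
    (M ρ : Matrix (Y × Z) (Y × Z) ℂ) :
    rt (embB b' M) (omg ψ b ρ) = rt M (Kb ψ (decide (b ≠ b')) ρ) := by
  have hψ' : ∑ z, ψ z z = 1 := hψ
  rw [rt, rt, trace_emb_aux]
  congr 1
  by_cases h : b = b'
  · subst h
    simp only [Kb, ne_eq, not_true_eq_false, decide_false, Bool.false_eq_true, if_false]
    rw [trace_mul_eq, Fintype.sum_prod_type]
    refine Finset.sum_congr rfl fun y _ => ?_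
    simp only [Fintype.sum_prod_type]
    rw [Finset.sum_comm]
    refine Finset.sum_congr rfl fun y' _ => ?_
    rw [Fintype.prod_eq_single b]
    · simp
    · intro i hi
      simp [hi, hψ']
  · simp only [Kb, ne_eq, h, not_false_eq_true, decide_true, if_true]
    rw [trace_mul_eq, Fintype.sum_prod_type]
    refine Finset.sum_congr rfl fun y _ => ?_
    simp only [Fintype.sum_prod_type]
    rw [Finset.sum_comm]
    refine Finset.sum_congr rfl fun y' _ => ?_
    rw [Fintype.prod_eq_mul b' b (Ne.symm h)]
    · simp only [if_true, h, Ne.symm h, if_false, ite_mul, one_mul, zero_mul, Finset.sum_ite_eq,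
        Finset.mem_univ, kroneckerMap_apply, trR, of_apply]
      rw [Finset.sum_mul]
      refine Finset.sum_congr rfl fun z _ => ?_
      rw [Finset.sum_mul]
      refine Finset.sum_congr rfl fun z' _ => ?_
      ring
    · intro i hi
      simp [hi, hψ']

end Embed
end HK

namespace HK

/-! ### Averages over random codebooks -/

section Average

variable {Q U V M1 M2 M3 : Type*} [Fintype Q] [Fintype U] [Fintype V] [DecidableEq U]
  [DecidableEq V] [Fintype M1] [Fintype M2] [Fintype M3] [DecidableEq M1] [DecidableEq M2]
  [DecidableEq M3]

/-- The average of `φ x y` over two independent samples `x, y` of `p` if `w`, and over a single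
sample `x = y` otherwise. -/
def avg (p : U → ℝ) (w : Bool) (φ : U → U → ℝ) : ℝ :=
  if w then ∑ x, ∑ y, p x * p y * φ x y else ∑ x, p x * φ x x

theorem avg_nonneg {p : U → ℝ} (hp : ∀ x, 0 ≤ p x) (w : Bool) {φ : U → U → ℝ}
    (hφ : ∀ x y, 0 ≤ φ x y) : 0 ≤ avg p w φ := by
  unfold avg
  split_ifs
  · exact Finset.sum_nonneg fun x _ => Finset.sum_nonneg fun y _ =>
      mul_nonneg (mul_nonneg (hp x) (hp y)) (hφ x y)
  · exact Finset.sum_nonneg fun x _ => mul_nonneg (hp x) (hφ x x)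

theorem sum_prod_eq_one {p : U → ℝ} (hp : ∑ x, p x = 1) : ∑ f : M1 → U, ∏ i, p (f i) = 1 := by
  rw [← Fintype.prod_sum (fun _ : M1 => p)]
  simp [hp]

/-- Averaging over a codebook of independent samples. -/
theorem sum_codewords {p : U → ℝ} (hp : ∑ x, p x = 1) (a a' : M1) (φ : U → U → ℝ) :
    ∑ f : M1 → U, (∏ i, p (f i)) * φ (f a) (f a') = avg p (decide (a ≠ a')) φ := by
  have key : ∀ x y, ∑ f : M1 → U, (∏ i, p (f i)) *
      ((if f a = x then 1 else 0) * (if f a' = y then 1 else 0)) =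
      if a = a' then (if x = y then p x else 0) else p x * p y := by
    intro x y
    have e : ∀ f : M1 → U, (∏ i, p (f i)) *
        ((if f a = x then 1 else 0) * (if f a' = y then 1 else 0)) =
        ∏ i, p (f i) * ((if i = a then (if f i = x then 1 else 0) else 1) *
          (if i = a' then (if f i = y then 1 else 0) else 1)) := by
      intro f
      rw [Finset.prod_mul_distrib, Finset.prod_mul_distrib]
      simp
    simp only [e]
    rw [← Fintype.prod_sum (fun (i : M1) (u : U) =>
      p u * ((if i = a then (if u = x then 1 else 0) else 1) *
          (if i = a' then (if u = y then 1 else 0) else 1)))]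
    split_ifs with h1 h2
    · subst h1 h2
      rw [Fintype.prod_eq_single a]
      · simp
      · intro i hi; simp [hi, hp]
    · subst h1
      rw [Finset.prod_eq_zero (Finset.mem_univ a)]
      refine Finset.sum_eq_zero fun u _ => ?_
      by_cases hu : u = x <;> simp [hu, h2]
    · rw [Fintype.prod_eq_mul a a' h1]
      · simp [h1, Ne.symm h1]
      · intro i hi; simp [hi.1, hi.2, hp]
  have e2 : ∀ f : M1 → U, (∏ i, p (f i)) * φ (f a) (f a') =
      ∑ x, ∑ y, φ x y * ((∏ i, p (f i)) *
        ((if f a = x then 1 else 0) * (if f a' = y then 1 else 0))) := by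
    intro f
    simp [mul_comm]
  simp only [e2]
  rw [Finset.sum_comm]
  have e3 : ∀ x, ∑ f : M1 → U, ∑ y, φ x y * ((∏ i, p (f i)) *
        ((if f a = x then 1 else 0) * (if f a' = y then 1 else 0))) =
      ∑ y, φ x y * if a = a' then (if x = y then p x else 0) else p x * p y := by
    intro x
    rw [Finset.sum_comm]
    refine Finset.sum_congr rfl fun y _ => ?_
    rw [← key, Finset.mul_sum]
  simp only [e3, avg]
  by_cases h : a = a'
  · simp [h, mul_comm]
  · simp [h, mul_comm]

/-- The probability of a codebook: the time-sharing symbol, and the two families of codewords. -/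
def cbw (pQ : Q → ℝ) (pU : Q → U → ℝ) (pV : Q → V → ℝ) (C : Q × (M1 → U) × (M3 → V)) : ℝ :=
  pQ C.1 * ((∏ i, pU C.1 (C.2.1 i)) * ∏ k, pV C.1 (C.2.2 k))

variable {pQ : Q → ℝ} {pU : Q → U → ℝ} {pV : Q → V → ℝ}

theorem cbw_nonneg (hQ : IsProbDist pQ) (hU : ∀ q, IsProbDist (pU q))
    (hV : ∀ q, IsProbDist (pV q)) (C : Q × (M1 → U) × (M3 → V)) : 0 ≤ cbw pQ pU pV C :=
  mul_nonneg (hQ.1 _) (mul_nonneg (Finset.prod_nonneg fun _ _ => (hU _).1 _)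
    (Finset.prod_nonneg fun _ _ => (hV _).1 _))

/-- The expectation over the random codebook of a function of at most two codewords from each
family: codewords with different indices are independent. -/
theorem sum_cbw_mul (hU : ∀ q, IsProbDist (pU q)) (hV : ∀ q, IsProbDist (pV q))
    (a a' : M1) (c c' : M3) (φ : Q → U → U → V → V → ℝ) :
    ∑ C : Q × (M1 → U) × (M3 → V), cbw pQ pU pV C *
        φ C.1 (C.2.1 a) (C.2.1 a') (C.2.2 c) (C.2.2 c') =
      ∑ q, pQ q * avg (pU q) (decide (a ≠ a')) fun u u' =>
        avg (pV q) (decide (c ≠ c')) fun v v' => φ q u u' v v' := by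
  rw [Fintype.sum_prod_type]
  refine Finset.sum_congr rfl fun q _ => ?_
  rw [← sum_codewords (hU q).2, Fintype.sum_prod_type, Finset.mul_sum]
  refine Finset.sum_congr rfl fun f _ => ?_
  rw [← sum_codewords (hV q).2, Finset.mul_sum, Finset.mul_sum]
  refine Finset.sum_congr rfl fun g _ => ?_
  simp only [cbw]; ring

theorem sum_cbw (hQ : IsProbDist pQ) (hU : ∀ q, IsProbDist (pU q))
    (hV : ∀ q, IsProbDist (pV q)) :
    ∑ C : Q × (M1 → U) × (M3 → V), cbw pQ pU pV C = 1 := by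
  rw [Fintype.sum_prod_type, ← hQ.2]
  refine Finset.sum_congr rfl fun q _ => ?_
  simp only [cbw]
  rw [← Finset.mul_sum, Fintype.sum_prod_type]
  simp only [← Finset.mul_sum, sum_prod_eq_one (hV q).2, mul_one, sum_prod_eq_one (hU q).2]

/-- The number of values of a message component with `n` values which are wrong (`w`) or right. -/
def cnt1 (n : ℕ) (w : Bool) : ℝ := if w then n else 1

/-- The values of one message component, grouped into right and wrong ones. -/
theorem sum_decide_le (a : M1) {F : Bool → ℝ} (hF : ∀ w, 0 ≤ F w) :
    ∑ a', F (decide (a ≠ a')) ≤ ∑ w, cnt1 (Fintype.card M1) w * F w := by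
  have : ∀ a', F (decide (a ≠ a')) ≤ (if a = a' then F false else 0) + F true := by
    intro a'
    by_cases h : a = a'
    · simp [h, hF true]
    · simp [h]
  refine (Finset.sum_le_sum fun a' _ => this a').trans_eq ?_
  simp [Finset.sum_add_distrib, cnt1]
  ring

/-- A bound on the number of guesses with error pattern `S`. -/
def cnt (n1 n2 n3 : ℕ) (S : Pat) : ℝ := cnt1 n1 S.1 * (cnt1 n2 S.2.1 * cnt1 n3 S.2.2)

theorem cnt1_nonneg (n : ℕ) (w : Bool) : 0 ≤ cnt1 n w := by
  unfold cnt1; split_ifs <;> simp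

/-- The guesses, grouped by their error pattern. -/
theorem sum_pat_le (m : M1 × M2 × M3) {F : Pat → ℝ} (hF : ∀ S, 0 ≤ F S) :
    ∑ j : M1 × M2, ∑ c, F (pat m (j.1, j.2, c)) ≤
      ∑ S, cnt (Fintype.card M1) (Fintype.card M2) (Fintype.card M3) S * F S := by
  simp only [Fintype.sum_prod_type, pat, cnt]
  refine (sum_decide_le m.1 (F := fun w => ∑ b, ∑ c,
    F (w, decide (m.2.1 ≠ b), decide (m.2.2 ≠ c))) fun w =>
      Finset.sum_nonneg fun _ _ => Finset.sum_nonneg fun _ _ => hF _).trans ?_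
  refine Finset.sum_le_sum fun w1 _ => ?_
  simp only [mul_assoc]
  simp only [← Finset.mul_sum]
  refine mul_le_mul_of_nonneg_left ?_ (cnt1_nonneg _ _)
  refine (sum_decide_le m.2.1 (F := fun w => ∑ c, F (w1, w, decide (m.2.2 ≠ c))) fun w =>
      Finset.sum_nonneg fun _ _ => hF _).trans ?_
  refine Finset.sum_le_sum fun w2 _ => ?_
  refine mul_le_mul_of_nonneg_left ?_ (cnt1_nonneg _ _)
  exact sum_decide_le m.2.2 (F := fun w => F (w1, w2, w)) fun w => hF _

end Average

/-! ### Random coding for one receiver -/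

section Receiver
open Matrix

variable {Q U V M1 M3 Y Z B : Type*} [Fintype Q] [Fintype U] [Fintype V] [DecidableEq U]
  [DecidableEq V] [Fintype M1] [Fintype M3] [DecidableEq M1] [DecidableEq M3]
  [Fintype Y] [Fintype Z] [Fintype B] [DecidableEq Y] [DecidableEq Z] [DecidableEq B]

theorem trR_psd {ρ : Matrix (Y × Z) (Y × Z) ℂ} (hρ : ρ.PosSemidef) : (trR ρ).PosSemidef := by
  have : trR ρ = ∑ z, ρ.submatrix (fun y => (y, z)) (fun y => (y, z)) := by
    ext y y'; simp [trR, Matrix.sum_apply]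
  rw [this]
  exact posSemidef_sum _ fun z _ => hρ.submatrix _

theorem Kb_psd {ψ : Matrix Z Z ℂ} (hψ : ψ.PosSemidef) (w : Bool) {ρ : Matrix (Y × Z) (Y × Z) ℂ}
    (hρ : ρ.PosSemidef) : (Kb ψ w ρ).PosSemidef := by
  unfold Kb; split_ifs
  exacts [(trR_psd hρ).kronecker hψ, hρ]

/-- Random coding for one receiver: `U` carries its own classical message component, the copies of
`Z` the entanglement-assisted one, and `V` the component of the other sender. -/
theorem one_receiver {pQ : Q → ℝ} {pU : Q → U → ℝ} {pV : Q → V → ℝ} (hpQ : IsProbDist pQ)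
    (hpU : ∀ q, IsProbDist (pU q)) (hpV : ∀ q, IsProbDist (pV q))
    {ψ : Matrix Z Z ℂ} (hψ : ψ.PosSemidef) (hψ1 : ψ.trace = 1)
    {ρ : U → V → Matrix (Y × Z) (Y × Z) ℂ} (hρ : ∀ u v, (ρ u v).PosSemidef)
    (hρ1 : ∀ u v, (ρ u v).trace = 1) {ε : ℝ} (hε : 0 < ε) (hε1 : ε ≤ 1)
    (T : Pat → Q → U → V → Matrix (Y × Z) (Y × Z) ℂ) (hT : ∀ S q u v, (T S q u v).PosSemidef)
    (h1T : ∀ S q u v, (1 - T S q u v).PosSemidef)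
    (hA : ∀ S, ∑ q, pQ q * avg (pU q) false (fun u _ => avg (pV q) false fun v _ =>
      rt (1 - T S q u v) (ρ u v)) ≤ ε)
    (hB : ∀ S : Pat, (S.1 || S.2.1) = true →
      cnt (Fintype.card M1) (Fintype.card B) (Fintype.card M3) S *
        ∑ q, pQ q * avg (pU q) S.1 (fun u u' => avg (pV q) S.2.2 fun v v' =>
          rt (T S q u' v') (Kb ψ S.2.1 (ρ u v))) ≤ ε) :
    ∃ Λ : Q × (M1 → U) × (M3 → V) → M1 × B → Matrix (Y × (B → Z)) (Y × (B → Z)) ℂ,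
      (∀ C j, (Λ C j).PosSemidef) ∧ (∀ C, (1 - ∑ j, Λ C j).PosSemidef) ∧
      ∀ a b c, ∑ C, cbw pQ pU pV C *
        rt (1 - Λ C (a, b)) (omg ψ b (ρ (C.2.1 a) (C.2.2 c))) ≤ 9360 * √ε := by
  -- The tests are perturbed by `η` to be positive definite. There are `n` guesses, so that the choice
  -- `η = ε / (1 + n)` costs at most `ε` in total.
  set n : ℝ := (Fintype.card M1 : ℝ) * ((Fintype.card B : ℝ) * (Fintype.card M3 : ℝ)) with hn
  have hn0 : 0 ≤ n := by positivity
  set η : ℝ := ε / (1 + n) with hη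
  have hη0 : 0 < η := by positivity
  have hη1 : η ≤ 1 := by rw [hη, div_le_one (by positivity)]; linarith
  have hηn : n * η ≤ ε := by
    rw [hη, mul_div_assoc', div_le_iff₀ (by positivity)]; nlinarith
  have hs : 0 < √ε := Real.sqrt_pos.2 hε
  have hs1 : √ε ≤ 1 := Real.sqrt_le_one.2 hε1
  have hc0 : (0 : ℂ) ≤ ((1 - η : ℝ) : ℂ) := by exact_mod_cast (by linarith : 0 ≤ 1 - η)
  set E : Q × (M1 → U) × (M3 → V) → Pat → M1 × B × M3 → Matrix (Y × (B → Z)) (Y × (B → Z)) ℂ :=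
    fun C S m => ((1 - η : ℝ) : ℂ) • embB m.2.1 (T S C.1 (C.2.1 m.1) (C.2.2 m.2.2)) +
      (η : ℂ) • 1 with hE
  have hEd : ∀ C S m, (E C S m).PosDef := fun C S m =>
    (PosDef.one.smul (by exact_mod_cast hη0)).posSemidef_add ((embB_psd _ (hT _ _ _ _)).smul hc0)
  have h1E' : ∀ C S m, 1 - E C S m =
      ((1 - η : ℝ) : ℂ) • embB m.2.1 (1 - T S C.1 (C.2.1 m.1) (C.2.2 m.2.2)) := by
    intro C S m
    rw [embB_sub, embB_one, smul_sub, hE]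
    push_cast
    rw [sub_smul (1 : ℂ) (η : ℂ) (1 : Matrix (Y × (B → Z)) (Y × (B → Z)) ℂ), one_smul]
    abel
  have h1E : ∀ C S m, (1 - E C S m).PosSemidef := fun C S m => by
    rw [h1E']; exact (embB_psd _ (h1T _ _ _ _)).smul hc0
  choose Λ hΛ h1Λ hb using fun C => exists_decoder_rt (E C) (hEd C) (h1E C) hs hs1
  refine ⟨Λ, hΛ, h1Λ, fun a b c => ?_⟩
  have hw := cbw_nonneg hpQ hpU hpV (M1 := M1) (M3 := M3)
  have hw1 := sum_cbw hpQ hpU hpV (M1 := M1) (M3 := M3)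
  set α : Pat → Q × (M1 → U) × (M3 → V) → ℝ := fun S C =>
    rt (1 - T S C.1 (C.2.1 a) (C.2.2 c)) (ρ (C.2.1 a) (C.2.2 c)) with hα
  set β : M1 × B × M3 → Q × (M1 → U) × (M3 → V) → ℝ := fun m C =>
    rt (T (pat (a, b, c) m) C.1 (C.2.1 m.1) (C.2.2 m.2.2))
      (Kb ψ (decide (b ≠ m.2.1)) (ρ (C.2.1 a) (C.2.2 c))) with hβ
  have hω : ∀ C : Q × (M1 → U) × (M3 → V), (omg ψ b (ρ (C.2.1 a) (C.2.2 c))).PosSemidef :=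
    fun C => omg_psd hψ _ (hρ _ _)
  have hω1 : ∀ C : Q × (M1 → U) × (M3 → V), rt 1 (omg ψ b (ρ (C.2.1 a) (C.2.2 c))) = 1 := by
    intro C
    rw [← embB_one b, rt_embB_omg hψ1]
    simp [Kb, rt, hρ1]
  have hstep : ∀ C : Q × (M1 → U) × (M3 → V),
      rt (1 - Λ C (a, b)) (omg ψ b (ρ (C.2.1 a) (C.2.2 c))) ≤
      520 * (√ε + 1 / √ε * ∑ S, α S C + 1 / √ε * ∑ j ∈ Finset.univ.erase (a, b), ∑ c',
        (β (j.1, j.2, c') C + η)) := by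
    intro C
    refine (hb C (a, b, c) _ (hω C)).trans ?_
    rw [hω1, mul_one]
    have h1 : ∀ S, rt (1 - E C S (a, b, c)) (omg ψ b (ρ (C.2.1 a) (C.2.2 c))) ≤ α S C := by
      intro S
      rw [h1E', rt_msmul, rt_embB_omg hψ1]
      have : 0 ≤ α S C := rt_nonneg (h1T _ _ _ _) (hρ _ _)
      simp only [ne_eq, not_true_eq_false, decide_false, Kb, Bool.false_eq_true, if_false]
      change (1 - η) * α S C ≤ α S C
      nlinarith
    have h2 : ∀ m, rt (E C (pat (a, b, c) m) m) (omg ψ b (ρ (C.2.1 a) (C.2.2 c))) ≤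
        β m C + η := by
      intro m
      rw [hE]
      simp only [rt_madd, rt_msmul, hω1, rt_embB_omg hψ1, mul_one]
      have : 0 ≤ β m C := rt_nonneg (hT _ _ _ _) (Kb_psd hψ _ (hρ _ _))
      change (1 - η) * β m C + η ≤ β m C + η
      nlinarith
    have h3 := Finset.sum_le_sum fun S (_ : S ∈ Finset.univ) => h1 S
    have h4 := Finset.sum_le_sum fun (j : M1 × B) (_ : j ∈ Finset.univ.erase (a, b)) =>
      Finset.sum_le_sum fun (c' : M3) (_ : c' ∈ Finset.univ) => h2 (j.1, j.2, c')
    have h5 : 0 ≤ 1 / √ε := by positivity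
    have h6 := mul_le_mul_of_nonneg_left h3 h5
    have h7 := mul_le_mul_of_nonneg_left h4 h5
    linarith
  -- the three contributions to the average
  have hαs : ∀ S, ∑ C, cbw pQ pU pV C * α S C ≤ ε := by
    intro S
    have := sum_cbw_mul (pQ := pQ) hpU hpV a a c c fun q u _ v _ => rt (1 - T S q u v) (ρ u v)
    simp only [ne_eq, not_true_eq_false, decide_false] at this
    rw [hα]; simp only
    rw [this]
    exact hA S
  set X : Pat → ℝ := fun S => if (S.1 || S.2.1) = true then
    ∑ q, pQ q * avg (pU q) S.1 (fun u u' => avg (pV q) S.2.2 fun v v' =>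
          rt (T S q u' v') (Kb ψ S.2.1 (ρ u v))) else 0 with hX
  have hX0 : ∀ S, 0 ≤ X S := by
    intro S
    simp only [hX]
    split_ifs
    · exact Finset.sum_nonneg fun q _ => mul_nonneg (hpQ.1 q) <| avg_nonneg (hpU q).1 _
        fun _ _ => avg_nonneg (hpV q).1 _ fun _ _ =>
          rt_nonneg (hT _ _ _ _) (Kb_psd hψ _ (hρ _ _))
    · exact le_rfl
  have hβs : ∀ j ∈ Finset.univ.erase (a, b), ∀ c',
      ∑ C, cbw pQ pU pV C * β (j.1, j.2, c') C = X (pat (a, b, c) (j.1, j.2, c')) := by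
    intro j hj c'
    have h1 := sum_cbw_mul (pQ := pQ) hpU hpV a j.1 c c' fun q u u' v v' =>
      rt (T (pat (a, b, c) (j.1, j.2, c')) q u' v')
        (Kb ψ (pat (a, b, c) (j.1, j.2, c')).2.1 (ρ u v))
    have h2 : ((pat (a, b, c) (j.1, j.2, c')).1 || (pat (a, b, c) (j.1, j.2, c')).2.1) = true := by
      have := Finset.ne_of_mem_erase hj
      rw [ne_eq, Prod.ext_iff] at this
      simp only [pat, Bool.or_eq_true, decide_eq_true_eq]
      by_contra! h
      exact this ⟨h.1.symm, h.2.symm⟩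
    simp only [hX, h2, if_true]
    exact h1
  have hsumX : ∑ j ∈ Finset.univ.erase (a, b), ∑ c', X (pat (a, b, c) (j.1, j.2, c')) ≤
      8 * ε := by
    calc _ ≤ ∑ j : M1 × B, ∑ c', X (pat (a, b, c) (j.1, j.2, c')) :=
          Finset.sum_le_sum_of_subset_of_nonneg (Finset.erase_subset _ _) fun _ _ _ =>
            Finset.sum_nonneg fun _ _ => hX0 _
      _ ≤ _ := sum_pat_le (a, b, c) hX0
      _ ≤ ∑ S : Pat, ε := by
          refine Finset.sum_le_sum fun S _ => ?_
          simp only [hX]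
          split_ifs with h
          · exact hB S h
          · simpa using hε.le
      _ = 8 * ε := by simp
  have hsumη : ∑ j ∈ Finset.univ.erase (a, b), ∑ _c' : M3, η ≤ ε := by
    calc _ ≤ ∑ j : M1 × B, ∑ _c' : M3, η :=
          Finset.sum_le_sum_of_subset_of_nonneg (Finset.erase_subset _ _) fun _ _ _ =>
            Finset.sum_nonneg fun _ _ => hη0.le
      _ = n * η := by simp [hn]; ring
      _ ≤ ε := hηn
  have hfin : ∑ C, cbw pQ pU pV C * (520 * (√ε + 1 / √ε * ∑ S, α S C +
      1 / √ε * ∑ j ∈ Finset.univ.erase (a, b), ∑ c', (β (j.1, j.2, c') C + η))) =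
      520 * (√ε + 1 / √ε * ∑ S, ∑ C, cbw pQ pU pV C * α S C +
        1 / √ε * (∑ j ∈ Finset.univ.erase (a, b), ∑ c', X (pat (a, b, c) (j.1, j.2, c')) +
          ∑ j ∈ Finset.univ.erase (a, b), ∑ _c' : M3, η)) := by
    have e1 : ∑ S, ∑ C, cbw pQ pU pV C * α S C = ∑ C, cbw pQ pU pV C * ∑ S, α S C := by
      rw [Finset.sum_comm]; simp only [Finset.mul_sum]
    have e2 : ∑ j ∈ Finset.univ.erase (a, b), ∑ c', X (pat (a, b, c) (j.1, j.2, c')) =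
        ∑ C, cbw pQ pU pV C * ∑ j ∈ Finset.univ.erase (a, b), ∑ c', β (j.1, j.2, c') C := by
      simp only [Finset.mul_sum]
      symm
      rw [Finset.sum_comm]
      refine Finset.sum_congr rfl fun j hj => ?_
      rw [Finset.sum_comm]
      exact Finset.sum_congr rfl fun c' _ => hβs j hj c'
    rw [e1, e2]
    set H : ℝ := ∑ j ∈ (Finset.univ : Finset (M1 × B)).erase (a, b), ∑ _c' : M3, η
    have e3 : ∀ C : Q × (M1 → U) × (M3 → V), cbw pQ pU pV C * (520 * (√ε + 1 / √ε * ∑ S, α S C +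
        1 / √ε * ∑ j ∈ Finset.univ.erase (a, b), ∑ c', (β (j.1, j.2, c') C + η))) =
        cbw pQ pU pV C * (520 * (√ε + 1 / √ε * H)) +
        520 * (1 / √ε) * (cbw pQ pU pV C * ∑ S, α S C) + 520 * (1 / √ε) *
        (cbw pQ pU pV C * ∑ j ∈ Finset.univ.erase (a, b), ∑ c', β (j.1, j.2, c') C) := by
      intro C
      simp only [Finset.sum_add_distrib]
      rw [show ∑ j ∈ (Finset.univ : Finset (M1 × B)).erase (a, b), ∑ _c' : M3, η = H from rfl]
      ring
    simp only [e3]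
    rw [Finset.sum_add_distrib, Finset.sum_add_distrib, ← Finset.sum_mul, hw1, ← Finset.mul_sum,
      ← Finset.mul_sum]
    ring
  refine (Finset.sum_le_sum fun C _ => mul_le_mul_of_nonneg_left (hstep C) (hw C)).trans ?_
  rw [hfin]
  have h8 : ∑ S : Pat, ∑ C, cbw pQ pU pV C * α S C ≤ 8 * ε := by
    refine (Finset.sum_le_sum fun S _ => hαs S).trans_eq ?_
    simp
  have h9 : 1 / √ε * ε = √ε := by
    rw [one_div, inv_mul_eq_div, Real.div_sqrt]
  have h5 : 0 ≤ 1 / √ε := by positivity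
  have h10 := mul_le_mul_of_nonneg_left h8 h5
  have h11 := mul_le_mul_of_nonneg_left (add_le_add hsumX hsumη) h5
  have h12 : 1 / √ε * (8 * ε) = 8 * √ε := by
    rw [show 1 / √ε * (8 * ε) = 8 * (1 / √ε * ε) by ring, h9]
  have h13 : 1 / √ε * (8 * ε + ε) = 9 * √ε := by
    rw [show 1 / √ε * (8 * ε + ε) = 9 * (1 / √ε * ε) by ring, h9]
  rw [h12] at h10
  rw [h13] at h11
  linarith

end Receiver
end HK

namespace HK

/-! ### Tests from hypothesis testing relative entropies -/

section Extraction
open Matrix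

/-- A lower bound on the hypothesis testing relative entropy yields a test. -/
theorem exists_test {ι : Type*} [Fintype ι] [DecidableEq ι] {ε : ℝ} (hε : 0 < ε)
    {α β : Matrix ι ι ℂ} {r : ℝ} (h : (r : EReal) ≤ DH ε α β - ((2 : ℝ) : EReal) -
      ((Real.logb 2 (1 / ε) : ℝ) : EReal)) :
    ∃ E : Matrix ι ι ℂ, IsPOVMElem E ∧ 1 - ε ≤ rt E α ∧ (2 : ℝ) ^ r * rt E β ≤ ε := by
  -- The supremum defining `DH` need not be attained, so a part of the slack `2` is spent on a strict
  -- inequality.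
  have h1 : ((r + 1 + Real.logb 2 (1 / ε) : ℝ) : EReal) < DH ε α β := by
    generalize DH ε α β = x at h
    induction x with
    | bot => simp at h
    | top => exact EReal.coe_lt_top _
    | coe x =>
      norm_cast at h ⊢
      linarith
  obtain ⟨_, ⟨d, ⟨E, hE, h2, h3⟩, rfl⟩, h4⟩ := lt_sSup_iff.1 h1
  refine ⟨E, hE, h2, ?_⟩
  have h5 : r + 1 + Real.logb 2 (1 / ε) < d := EReal.coe_lt_coe_iff.1 h4
  have h6 : (2 : ℝ) ^ r * (2 : ℝ) ^ (-d) ≤ ε := by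
    rw [← Real.rpow_add (by norm_num)]
    calc (2 : ℝ) ^ (r + -d) ≤ (2 : ℝ) ^ (Real.logb 2 ε) := by
          refine Real.rpow_le_rpow_of_exponent_le (by norm_num) ?_
          rw [one_div, Real.logb_inv] at h5
          linarith
      _ = ε := Real.rpow_logb (by norm_num) (by norm_num) hε
  exact (mul_le_mul_of_nonneg_left h3 (by positivity)).trans h6

/-- The diagonal block at `c` of an operator on a register with a classical label. -/
def blk {C ι : Type*} (E : Matrix (C × ι) (C × ι) ℂ) (c : C) : Matrix ι ι ℂ :=
  E.submatrix (fun i => (c, i)) (fun i => (c, i))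

theorem rt_cqState {C ι : Type*} [Fintype C] [DecidableEq C] [Fintype ι]
    (E : Matrix (C × ι) (C × ι) ℂ) (σ : C → Matrix ι ι ℂ) :
    rt E (cqState σ) = ∑ c, rt (blk E c) (σ c) := by
  simp only [rt, ← Complex.re_sum]
  congr 1
  simp only [trace, diag, mul_apply, Fintype.sum_prod_type, cqState, of_apply, blk,
    submatrix_apply]
  refine Finset.sum_congr rfl fun c _ => Finset.sum_congr rfl fun i _ => ?_
  rw [Finset.sum_eq_single c]
  · simp
  · intro d _ hd
    simp [hd]
  · simp

theorem rt_smul_right {ι : Type*} [Fintype ι] [DecidableEq ι] (E : Matrix ι ι ℂ) (c : ℝ)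
    (σ : Matrix ι ι ℂ) : rt E ((c : ℂ) • σ) = c * rt E σ := by
  simp [rt]

theorem rt_sum_right {ι κ : Type*} [Fintype ι] [DecidableEq ι] [Fintype κ] (E : Matrix ι ι ℂ)
    (σ : κ → Matrix ι ι ℂ) : rt E (∑ k, σ k) = ∑ k, rt E (σ k) := by
  simp [rt, Finset.mul_sum, trace_sum]

/-- For classical-quantum states, a test is a family of tests indexed by the classical label. -/
theorem exists_block_test {C ι : Type*} [Fintype C] [DecidableEq C] [Fintype ι] [DecidableEq ι]
    {ε : ℝ} (hε : 0 < ε) {w : C → ℝ} (hw : ∑ c, w c = 1) {ρ τ : C → Matrix ι ι ℂ}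
    (hρ : ∀ c, (ρ c).trace = 1) {r : ℝ}
    (h : (r : EReal) ≤ DH ε (cqState fun c => (w c : ℂ) • ρ c) (cqState fun c => (w c : ℂ) • τ c) -
      ((2 : ℝ) : EReal) - ((Real.logb 2 (1 / ε) : ℝ) : EReal)) :
    ∃ T : C → Matrix ι ι ℂ, (∀ c, (T c).PosSemidef) ∧ (∀ c, (1 - T c).PosSemidef) ∧
      ∑ c, w c * rt (1 - T c) (ρ c) ≤ ε ∧ (2 : ℝ) ^ r * ∑ c, w c * rt (T c) (τ c) ≤ ε := by
  obtain ⟨E, hE, h1, h2⟩ := exists_test hε h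
  refine ⟨blk E, fun c => hE.1.submatrix _, fun c => ?_, ?_, ?_⟩
  · have : 1 - blk E c = blk (1 - E) c := by
      ext i j
      simp [blk, one_apply]
    rw [this]
    exact hE.2.submatrix _
  · rw [rt_cqState] at h1
    simp only [rt_smul_right] at h1
    have : ∀ c, rt (1 - blk E c) (ρ c) = 1 - rt (blk E c) (ρ c) := by
      intro c
      rw [rt_msub]
      simp [rt, hρ]
    simp only [this, mul_sub, mul_one, Finset.sum_sub_distrib, hw]
    linarith
  · rw [rt_cqState] at h2
    simpa only [rt_smul_right] using h2

variable {Q U V Y Z : Type*} [Fintype Q] [Fintype U] [Fintype V] [DecidableEq Q] [DecidableEq U]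
  [DecidableEq V] [Fintype Y] [Fintype Z] [DecidableEq Y] [DecidableEq Z]

/-- Conditional average: `f` averaged over `p` if `w`, and its value at `y` otherwise. -/
def cav (p : U → ℝ) (w : Bool) (f : U → ℝ) (y : U) : ℝ := if w then ∑ x, p x * f x else f y

/-- Matrix version of `cav`. -/
def cavM {n : Type*} (p : U → ℝ) (w : Bool) (f : U → Matrix n n ℂ) (y : U) : Matrix n n ℂ :=
  if w then ∑ x, (p x : ℂ) • f x else f y

theorem avg_eq_cav (p : U → ℝ) (w : Bool) (φ : U → U → ℝ) :
    avg p w φ = ∑ y, p y * cav p w (fun x => φ x y) y := by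
  unfold avg cav
  split_ifs
  · rw [Finset.sum_comm]
    refine Finset.sum_congr rfl fun y _ => ?_
    rw [Finset.mul_sum]
    exact Finset.sum_congr rfl fun x _ => by ring
  · rfl

theorem cav_sum (p : U → ℝ) (w : Bool) (c : V → ℝ) (g : V → U → ℝ) (y : U) :
    cav p w (fun x => ∑ v, c v * g v x) y = ∑ v, c v * cav p w (g v) y := by
  unfold cav
  split_ifs
  · simp only [Finset.mul_sum]
    rw [Finset.sum_comm]
    exact Finset.sum_congr rfl fun v _ => Finset.sum_congr rfl fun x _ => by ring
  · rfl

theorem trR_smul (c : ℂ) (M : Matrix (Y × Z) (Y × Z) ℂ) : trR (c • M) = c • trR M := by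
  ext i j; simp [trR, Finset.mul_sum]

theorem trR_sum {κ : Type*} [Fintype κ] (M : κ → Matrix (Y × Z) (Y × Z) ℂ) :
    trR (∑ k, M k) = ∑ k, trR (M k) := by
  ext i j; simp only [trR, of_apply, Matrix.sum_apply]; exact Finset.sum_comm

/-- Averaging the state commutes with the acceptance probability of a fixed test. -/
theorem rt_Kb_cavM (T : Matrix (Y × Z) (Y × Z) ℂ) (ψ : Matrix Z Z ℂ) (s : Bool) (p : U → ℝ)
    (w : Bool) (f : U → Matrix (Y × Z) (Y × Z) ℂ) (y : U) :
    rt T (Kb ψ s (cavM p w f y)) = cav p w (fun x => rt T (Kb ψ s (f x))) y := by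
  unfold cavM cav
  split_ifs
  · have : Kb ψ s (∑ x, (p x : ℂ) • f x) = ∑ x, (p x : ℂ) • Kb ψ s (f x) := by
      unfold Kb
      split_ifs
      · rw [trR_sum]
        simp only [trR_smul]
        ext i j
        simp only [kroneckerMap_apply, Matrix.sum_apply, Matrix.smul_apply, Finset.sum_mul, smul_eq_mul,
          mul_assoc]
      · rfl
    rw [this, rt_sum_right]
    simp only [rt_smul_right]
  · rfl

/-- The product state for the error pattern `S`: the wrong components are decoupled from the
output by averaging. -/
def tau (pU : Q → U → ℝ) (pV : Q → V → ℝ) (ψ : Matrix Z Z ℂ)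
    (ρ : U → V → Matrix (Y × Z) (Y × Z) ℂ) (S : Pat) (q : Q) (u : U) (v : V) :
    Matrix (Y × Z) (Y × Z) ℂ :=
  Kb ψ S.2.1 (cavM (pU q) S.1 (fun u' => cavM (pV q) S.2.2 (fun v' => ρ u' v') v) u)

/-- The false acceptance probability of a guess with error pattern `S`, averaged over the codebook,
is that of the product state `tau`: the test is evaluated at the codewords of the guess, which are
independent of those sent wherever the guess is wrong. -/
theorem sum_avg_eq (pQ : Q → ℝ) (pU : Q → U → ℝ) (pV : Q → V → ℝ) (ψ : Matrix Z Z ℂ)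
    (ρ : U → V → Matrix (Y × Z) (Y × Z) ℂ) (S : Pat)
    (T : Q → U → V → Matrix (Y × Z) (Y × Z) ℂ) :
    ∑ q, pQ q * avg (pU q) S.1 (fun u u' => avg (pV q) S.2.2 fun v v' =>
          rt (T q u' v') (Kb ψ S.2.1 (ρ u v))) =
      ∑ q, ∑ u, ∑ v, pQ q * pU q u * pV q v * rt (T q u v) (tau pU pV ψ ρ S q u v) := by
  refine Finset.sum_congr rfl fun q _ => ?_
  rw [avg_eq_cav, Finset.mul_sum]
  refine Finset.sum_congr rfl fun u _ => ?_
  simp only [avg_eq_cav]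
  rw [cav_sum, Finset.mul_sum, Finset.mul_sum]
  refine Finset.sum_congr rfl fun v _ => ?_
  rw [tau, rt_Kb_cavM]
  simp only [rt_Kb_cavM]
  ring

/-- The existence of good tests for the error pattern `S`, when `n` wrong guesses have this
pattern. -/
def HasTest (ε : ℝ) (pQ : Q → ℝ) (pU : Q → U → ℝ) (pV : Q → V → ℝ) (ψ : Matrix Z Z ℂ)
    (ρ : U → V → Matrix (Y × Z) (Y × Z) ℂ) (n : ℝ) (S : Pat) : Prop :=
  ∃ T : Q → U → V → Matrix (Y × Z) (Y × Z) ℂ, (∀ q u v, (T q u v).PosSemidef) ∧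
    (∀ q u v, (1 - T q u v).PosSemidef) ∧
    ∑ q, ∑ u, ∑ v, pQ q * pU q u * pV q v * rt (1 - T q u v) (ρ u v) ≤ ε ∧
    ((S.1 || S.2.1) = true →
      n * ∑ q, ∑ u, ∑ v, pQ q * pU q u * pV q v * rt (T q u v) (tau pU pV ψ ρ S q u v) ≤ ε)

theorem sum_weights {pQ : Q → ℝ} {pU : Q → U → ℝ} {pV : Q → V → ℝ} (hpQ : IsProbDist pQ)
    (hpU : ∀ q, IsProbDist (pU q)) (hpV : ∀ q, IsProbDist (pV q)) :
    ∑ c : Q × U × V, pQ c.1 * pU c.1 c.2.1 * pV c.1 c.2.2 = 1 := by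
  simp only [Fintype.sum_prod_type, ← Finset.mul_sum, (hpV _).2, mul_one, (hpU _).2, hpQ.2]

/-- The rate condition for the error pattern `S`, with rate `r = log₂ n`, provides tests for `S`. -/
theorem hasTest {pQ : Q → ℝ} {pU : Q → U → ℝ} {pV : Q → V → ℝ} (hpQ : IsProbDist pQ)
    (hpU : ∀ q, IsProbDist (pU q)) (hpV : ∀ q, IsProbDist (pV q)) (ψ : Matrix Z Z ℂ)
    {ρ : U → V → Matrix (Y × Z) (Y × Z) ℂ} (hρ1 : ∀ u v, (ρ u v).trace = 1) {ε : ℝ}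
    (hε : 0 < ε) {n r : ℝ} (hn : n = (2 : ℝ) ^ r) (S : Pat)
    {α β : Matrix ((Q × U × V) × (Y × Z)) ((Q × U × V) × (Y × Z)) ℂ}
    (h : (r : EReal) ≤ DH ε α β - ((2 : ℝ) : EReal) - ((Real.logb 2 (1 / ε) : ℝ) : EReal))
    (hα : α = cqState fun c => ((pQ c.1 * pU c.1 c.2.1 * pV c.1 c.2.2 : ℝ) : ℂ) • ρ c.2.1 c.2.2)
    (hβ : β = cqState fun c => ((pQ c.1 * pU c.1 c.2.1 * pV c.1 c.2.2 : ℝ) : ℂ) •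
      tau pU pV ψ ρ S c.1 c.2.1 c.2.2) :
    HasTest ε pQ pU pV ψ ρ n S := by
  subst hα hβ
  obtain ⟨T, h1, h2, h3, h4⟩ := exists_block_test hε (sum_weights hpQ hpU hpV)
    (fun c => hρ1 c.2.1 c.2.2) h
  refine ⟨fun q u v => T (q, u, v), fun _ _ _ => h1 _, fun _ _ _ => h2 _, ?_, fun _ => ?_⟩
  · simpa only [Fintype.sum_prod_type] using h3
  · rw [hn]
    simpa only [Fintype.sum_prod_type] using h4

/-- Version of `hasTest` with the two classical labels in the opposite order. -/
theorem hasTest_swap {pQ : Q → ℝ} {pU : Q → U → ℝ} {pV : Q → V → ℝ} (hpQ : IsProbDist pQ)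
    (hpU : ∀ q, IsProbDist (pU q)) (hpV : ∀ q, IsProbDist (pV q)) (ψ : Matrix Z Z ℂ)
    {ρ : U → V → Matrix (Y × Z) (Y × Z) ℂ} (hρ1 : ∀ u v, (ρ u v).trace = 1) {ε : ℝ}
    (hε : 0 < ε) {n r : ℝ} (hn : n = (2 : ℝ) ^ r) (S : Pat)
    {α β : Matrix ((Q × V × U) × (Y × Z)) ((Q × V × U) × (Y × Z)) ℂ}
    (h : (r : EReal) ≤ DH ε α β - ((2 : ℝ) : EReal) - ((Real.logb 2 (1 / ε) : ℝ) : EReal))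
    (hα : α = cqState fun c => ((pQ c.1 * pV c.1 c.2.1 * pU c.1 c.2.2 : ℝ) : ℂ) • ρ c.2.2 c.2.1)
    (hβ : β = cqState fun c => ((pQ c.1 * pV c.1 c.2.1 * pU c.1 c.2.2 : ℝ) : ℂ) •
      tau pU pV ψ ρ S c.1 c.2.2 c.2.1) :
    HasTest ε pQ pU pV ψ ρ n S := by
  subst hα hβ
  obtain ⟨T, h1, h2, h3, h4⟩ := exists_block_test hε (sum_weights hpQ hpV hpU)
    (fun c => hρ1 c.2.2 c.2.1) h
  have key : ∀ φ : Q → U → V → ℝ, ∑ c : Q × V × U, pQ c.1 * pV c.1 c.2.1 * pU c.1 c.2.2 *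
      φ c.1 c.2.2 c.2.1 = ∑ q, ∑ u, ∑ v, pQ q * pU q u * pV q v * φ q u v := by
    intro φ
    simp only [Fintype.sum_prod_type]
    refine Finset.sum_congr rfl fun q _ => ?_
    rw [Finset.sum_comm]
    exact Finset.sum_congr rfl fun u _ => Finset.sum_congr rfl fun v _ => by ring
  refine ⟨fun q u v => T (q, v, u), fun _ _ _ => h1 _, fun _ _ _ => h2 _, ?_, fun _ => ?_⟩
  · rw [← key fun q u v => rt (1 - T (q, v, u)) (ρ u v)]
    exact h3
  · rw [hn, ← key fun q u v => rt (T (q, v, u)) (tau pU pV ψ ρ S q u v)]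
    exact h4

/-- No test is needed for the patterns in which both own components are right. -/
theorem hasTest_trivial {pQ : Q → ℝ} {pU : Q → U → ℝ} {pV : Q → V → ℝ} (ψ : Matrix Z Z ℂ)
    {ρ : U → V → Matrix (Y × Z) (Y × Z) ℂ} {ε : ℝ} (hε : 0 < ε) {n : ℝ} {S : Pat}
    (hS : (S.1 || S.2.1) = false) : HasTest ε pQ pU pV ψ ρ n S :=
  ⟨fun _ _ _ => 1, fun _ _ _ => PosSemidef.one, fun _ _ _ => by
    rw [sub_self]; exact PosSemidef.zero, by simp [rt, hε.le], by simp [hS]⟩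

variable {M1 M3 B : Type*} [Fintype M1] [Fintype M3] [DecidableEq M1] [DecidableEq M3]
  [Fintype B] [DecidableEq B]

/-- The version of `one_receiver` in terms of tests for all error patterns. -/
theorem one_receiver_of_hasTest {pQ : Q → ℝ} {pU : Q → U → ℝ} {pV : Q → V → ℝ}
    (hpQ : IsProbDist pQ) (hpU : ∀ q, IsProbDist (pU q)) (hpV : ∀ q, IsProbDist (pV q))
    {ψ : Matrix Z Z ℂ} (hψ : ψ.PosSemidef) (hψ1 : ψ.trace = 1)
    {ρ : U → V → Matrix (Y × Z) (Y × Z) ℂ} (hρ : ∀ u v, (ρ u v).PosSemidef)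
    (hρ1 : ∀ u v, (ρ u v).trace = 1) {ε : ℝ} (hε : 0 < ε) (hε1 : ε ≤ 1)
    (h : ∀ S, HasTest ε pQ pU pV ψ ρ
      (cnt (Fintype.card M1) (Fintype.card B) (Fintype.card M3) S) S) :
    ∃ Λ : Q × (M1 → U) × (M3 → V) → M1 × B → Matrix (Y × (B → Z)) (Y × (B → Z)) ℂ,
      (∀ C j, (Λ C j).PosSemidef) ∧ (∀ C, (1 - ∑ j, Λ C j).PosSemidef) ∧
      ∀ a b c, ∑ C, cbw pQ pU pV C *
        rt (1 - Λ C (a, b)) (omg ψ b (ρ (C.2.1 a) (C.2.2 c))) ≤ 9360 * √ε := by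
  choose T h1 h2 h3 h4 using h
  refine one_receiver hpQ hpU hpV hψ hψ1 hρ hρ1 hε hε1 T h1 h2 (fun S => ?_) fun S hS => ?_
  · refine le_trans (le_of_eq ?_) (h3 S)
    simp only [avg, Bool.false_eq_true, if_false, Finset.mul_sum, mul_assoc]
  · rw [sum_avg_eq]
    exact h4 S hS

end Extraction
end HK

namespace HK

/-! ### Channel outputs -/

section Channel
open Matrix

theorem extRight_psd {X Y Z : Type*} [Fintype X] [Fintype Y] [Fintype Z]
    {N : Matrix X X ℂ →ₗ[ℂ] Matrix Y Y ℂ} (hN : IsCPTP N) {M : Matrix (X × Z) (X × Z) ℂ}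
    (hM : M.PosSemidef) : (extRight N M).PosSemidef := by
  let e := Fintype.equivFin Z
  have h := hN.2 (Fintype.card Z) (M.submatrix (fun p => (p.2, e.symm p.1))
    (fun p => (p.2, e.symm p.1))) (hM.submatrix _)
  have h2 := h.submatrix (fun p : Y × Z => (e p.2, p.1))
  convert h2 using 1
  ext p q
  simp [extRight, submatrix]

/-- The trace over the output of the channel is the trace over its input. -/
theorem trL_extRight {X Y Z : Type*} [Fintype X] [Fintype Y] [Fintype Z]
    {N : Matrix X X ℂ →ₗ[ℂ] Matrix Y Y ℂ} (hN : IsCPTP N) (M : Matrix (X × Z) (X × Z) ℂ) :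
    trL (extRight N M) = trL M := by
  ext z z'
  have := hN.1 (Matrix.of fun x x' => M (x, z) (x', z'))
  simpa [trL, extRight, trace] using this

theorem trace_trL {Y Z : Type*} [Fintype Y] [Fintype Z] (M : Matrix (Y × Z) (Y × Z) ℂ) :
    (trL M).trace = M.trace := by
  simp only [trace, diag, trL, of_apply, Fintype.sum_prod_type]
  exact Finset.sum_comm

theorem trace_trR {Y Z : Type*} [Fintype Y] [Fintype Z] (M : Matrix (Y × Z) (Y × Z) ℂ) :
    (trR M).trace = M.trace := by
  simp only [trace, diag, trR, of_apply, Fintype.sum_prod_type]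

theorem trL_psd {Y Z : Type*} [Fintype Y] [Fintype Z] {ρ : Matrix (Y × Z) (Y × Z) ℂ}
    (hρ : ρ.PosSemidef) : (trL ρ).PosSemidef := by
  have : trL ρ = ∑ y, ρ.submatrix (fun z => (y, z)) (fun z => (y, z)) := by
    ext y y'; simp [trL, Matrix.sum_apply]
  rw [this]
  exact posSemidef_sum _ fun z _ => hρ.submatrix _

variable {U1 U2 : Type*} {a1' a1'' a2' a2'' dY1 dY2 dZ1 dZ2 : ℕ}
  {N : Matrix ((Fin a1' × Fin a1'') × (Fin a2' × Fin a2''))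
    ((Fin a1' × Fin a1'') × (Fin a2' × Fin a2'')) ℂ →ₗ[ℂ]
    Matrix (Fin dY1 × Fin dY2) (Fin dY1 × Fin dY2) ℂ}
  {σ1 : U1 → Matrix (Fin a1') (Fin a1') ℂ} {σ2 : U2 → Matrix (Fin a2') (Fin a2') ℂ}
  {ψ1 : Matrix (Fin a1'' × Fin dZ1) (Fin a1'' × Fin dZ1) ℂ}
  {ψ2 : Matrix (Fin a2'' × Fin dZ2) (Fin a2'' × Fin dZ2) ℂ}

theorem eaInState_psd (hσ1 : ∀ u, IsDensity (σ1 u)) (hσ2 : ∀ u, IsDensity (σ2 u))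
    (hψ1 : IsDensity ψ1) (hψ2 : IsDensity ψ2) (u1 : U1) (u2 : U2) :
    (eaInState σ1 ψ1 σ2 ψ2 u1 u2).PosSemidef := by
  have h1 := (hσ1 u1).1.submatrix (fun r : ((Fin a1' × Fin a1'') × (Fin a2' × Fin a2'')) ×
    (Fin dZ1 × Fin dZ2) => r.1.1.1)
  have h2 := hψ1.1.submatrix (fun r : ((Fin a1' × Fin a1'') × (Fin a2' × Fin a2'')) ×
    (Fin dZ1 × Fin dZ2) => (r.1.1.2, r.2.1))
  have h3 := (hσ2 u2).1.submatrix (fun r : ((Fin a1' × Fin a1'') × (Fin a2' × Fin a2'')) ×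
    (Fin dZ1 × Fin dZ2) => r.1.2.1)
  have h4 := hψ2.1.submatrix (fun r : ((Fin a1' × Fin a1'') × (Fin a2' × Fin a2'')) ×
    (Fin dZ1 × Fin dZ2) => (r.1.2.2, r.2.2))
  exact ((h1.hadamard h2).hadamard h3).hadamard h4

theorem trL_eaInState (hσ1 : ∀ u, IsDensity (σ1 u)) (hσ2 : ∀ u, IsDensity (σ2 u))
    (u1 : U1) (u2 : U2) (z z' : Fin dZ1 × Fin dZ2) :
    trL (eaInState σ1 ψ1 σ2 ψ2 u1 u2) z z' = trL ψ1 z.1 z'.1 * trL ψ2 z.2 z'.2 := by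
  have h1 : ∑ i, σ1 u1 i i = 1 := (hσ1 u1).2
  have h2 : ∑ i, σ2 u2 i i = 1 := (hσ2 u2).2
  simp only [trL, of_apply, eaInState, Fintype.sum_prod_type, ← Finset.mul_sum, ← Finset.sum_mul,
    h1, h2, one_mul, mul_assoc]

theorem eaOutYZ1_psd (hN : IsCPTP N) (hσ1 : ∀ u, IsDensity (σ1 u)) (hσ2 : ∀ u, IsDensity (σ2 u))
    (hψ1 : IsDensity ψ1) (hψ2 : IsDensity ψ2) (u1 : U1) (u2 : U2) :
    (eaOutYZ1 N σ1 ψ1 σ2 ψ2 u1 u2).PosSemidef := by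
  have h := extRight_psd hN (eaInState_psd hσ1 hσ2 hψ1 hψ2 u1 u2)
  have e : eaOutYZ1 N σ1 ψ1 σ2 ψ2 u1 u2 = ∑ y2, ∑ z2,
      (extRight N (eaInState σ1 ψ1 σ2 ψ2 u1 u2)).submatrix (fun r => ((r.1, y2), (r.2, z2)))
        (fun r => ((r.1, y2), (r.2, z2))) := by
    ext i j; simp [eaOutYZ1, Matrix.sum_apply]
  rw [e]
  exact posSemidef_sum _ fun y _ => posSemidef_sum _ fun z _ => h.submatrix _

theorem eaOutYZ2_psd (hN : IsCPTP N) (hσ1 : ∀ u, IsDensity (σ1 u)) (hσ2 : ∀ u, IsDensity (σ2 u))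
    (hψ1 : IsDensity ψ1) (hψ2 : IsDensity ψ2) (u1 : U1) (u2 : U2) :
    (eaOutYZ2 N σ1 ψ1 σ2 ψ2 u1 u2).PosSemidef := by
  have h := extRight_psd hN (eaInState_psd hσ1 hσ2 hψ1 hψ2 u1 u2)
  have e : eaOutYZ2 N σ1 ψ1 σ2 ψ2 u1 u2 = ∑ y1, ∑ z1,
      (extRight N (eaInState σ1 ψ1 σ2 ψ2 u1 u2)).submatrix (fun r => ((y1, r.1), (z1, r.2)))
        (fun r => ((y1, r.1), (z1, r.2))) := by
    ext i j; simp [eaOutYZ2, Matrix.sum_apply]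
  rw [e]
  exact posSemidef_sum _ fun y _ => posSemidef_sum _ fun z _ => h.submatrix _

/-- The reference system of a receiver carries a fixed state, independent of the codewords. -/
theorem trL_eaOutYZ1 (hN : IsCPTP N) (hσ1 : ∀ u, IsDensity (σ1 u)) (hσ2 : ∀ u, IsDensity (σ2 u))
    (hψ2 : IsDensity ψ2) (u1 : U1) (u2 : U2) :
    trL (eaOutYZ1 N σ1 ψ1 σ2 ψ2 u1 u2) = trL ψ1 := by
  ext z z'
  have h : ∑ z2, trL (extRight N (eaInState σ1 ψ1 σ2 ψ2 u1 u2)) (z, z2) (z', z2) =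
      trL ψ1 z z' := by
    have h2 : ∑ z2, trL ψ2 z2 z2 = 1 := (trace_trL ψ2).trans hψ2.2
    simp only [trL_extRight hN, trL_eaInState hσ1 hσ2, ← Finset.mul_sum, h2, mul_one]
  rw [← h]
  simp only [trL, eaOutYZ1, of_apply, Fintype.sum_prod_type]
  rw [Finset.sum_comm]
  conv_rhs => rw [Finset.sum_comm]
  rw [Finset.sum_comm]
  exact Finset.sum_congr rfl fun _ _ => Finset.sum_comm

theorem trL_eaOutYZ2 (hN : IsCPTP N) (hσ1 : ∀ u, IsDensity (σ1 u)) (hσ2 : ∀ u, IsDensity (σ2 u))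
    (hψ1 : IsDensity ψ1) (u1 : U1) (u2 : U2) :
    trL (eaOutYZ2 N σ1 ψ1 σ2 ψ2 u1 u2) = trL ψ2 := by
  ext z z'
  have h : ∑ z1, trL (extRight N (eaInState σ1 ψ1 σ2 ψ2 u1 u2)) (z1, z) (z1, z') =
      trL ψ2 z z' := by
    have h2 : ∑ z1, trL ψ1 z1 z1 = 1 := (trace_trL ψ1).trans hψ1.2
    simp only [trL_extRight hN, trL_eaInState hσ1 hσ2, ← Finset.sum_mul, h2, one_mul]
  rw [← h]
  simp only [trL, eaOutYZ2, of_apply, Fintype.sum_prod_type]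
  rw [Finset.sum_comm]
  conv_rhs => rw [Finset.sum_comm]
  refine Finset.sum_congr rfl fun _ _ => ?_
  rw [Finset.sum_comm]

end Channel

/-! ### Product states of the error patterns -/

section Identify
open Matrix

variable {Q U V Y Z : Type*} [Fintype Q] [Fintype U] [Fintype V] [DecidableEq Q] [DecidableEq U]
  [DecidableEq V] [Fintype Y] [Fintype Z] [DecidableEq Y] [DecidableEq Z]

theorem sum_smul_const {n : Type*} {p : U → ℝ} (hp : IsProbDist p) (M : Matrix n n ℂ) :
    ∑ u, (p u : ℂ) • M = M := by
  rw [← Finset.sum_smul, ← Complex.ofReal_sum, hp.2, Complex.ofReal_one, one_smul]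

theorem sum_smul_const2 {n : Type*} {p : U → ℝ} {p' : V → ℝ} (hp : IsProbDist p)
    (hp' : IsProbDist p') (M : Matrix n n ℂ) :
    ∑ u, ∑ v, ((p u * p' v : ℝ) : ℂ) • M = M := by
  simp only [Complex.ofReal_mul, mul_smul, ← Finset.smul_sum, sum_smul_const hp',
    sum_smul_const hp]

theorem sum_smul_swap {n : Type*} (p : U → ℝ) (p' : V → ℝ) (F : U → V → Matrix n n ℂ) :
    ∑ v, ∑ u, ((p' v * p u : ℝ) : ℂ) • F u v = ∑ u, ∑ v, ((p u * p' v : ℝ) : ℂ) • F u v := by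
  rw [Finset.sum_comm]
  exact Finset.sum_congr rfl fun _ _ => Finset.sum_congr rfl fun _ _ => by rw [mul_comm]

theorem tau_sum2 {pU : Q → U → ℝ} {pV : Q → V → ℝ} {ψ : Matrix Z Z ℂ}
    {ρ : U → V → Matrix (Y × Z) (Y × Z) ℂ} (q : Q) (u : U) (v : V) :
    tau pU pV ψ ρ (true, true, true) q u v =
      (∑ x, ∑ y, ((pU q x * pV q y : ℝ) : ℂ) • trR (ρ x y)) ⊗ₖ ψ := by
  simp only [tau, Kb, cavM, if_true, Complex.ofReal_mul, trR_sum, trR_smul, mul_smul,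
    Finset.smul_sum]

theorem tau_sum2' {pU : Q → U → ℝ} {pV : Q → V → ℝ} {ψ : Matrix Z Z ℂ}
    {ρ : U → V → Matrix (Y × Z) (Y × Z) ℂ} (q : Q) (u : U) (v : V) :
    tau pU pV ψ ρ (true, false, true) q u v =
      ∑ x, ∑ y, ((pU q x * pV q y : ℝ) : ℂ) • ρ x y := by
  simp [tau, Kb, cavM, mul_smul, Finset.smul_sum]

end Identify
end HK

namespace HK

/-! ### Tests for both receivers -/

section Tests
open Matrix

variable {Qt U1 U2 : Type*} [Fintype Qt] [Fintype U1] [Fintype U2]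
  [DecidableEq Qt] [DecidableEq U1] [DecidableEq U2]
  {a1' a1'' a2' a2'' dY1 dY2 dZ1 dZ2 : ℕ}
  {ε : ℝ} {pQ : Qt → ℝ} {pU1 : Qt → U1 → ℝ} {pU2 : Qt → U2 → ℝ}
  {N : Matrix ((Fin a1' × Fin a1'') × (Fin a2' × Fin a2''))
    ((Fin a1' × Fin a1'') × (Fin a2' × Fin a2'')) ℂ →ₗ[ℂ]
    Matrix (Fin dY1 × Fin dY2) (Fin dY1 × Fin dY2) ℂ}
  {σ1 : U1 → Matrix (Fin a1') (Fin a1') ℂ} {σ2 : U2 → Matrix (Fin a2') (Fin a2') ℂ}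
  {ψ1 : Matrix (Fin a1'' × Fin dZ1) (Fin a1'' × Fin dZ1) ℂ}
  {ψ2 : Matrix (Fin a2'' × Fin dZ2) (Fin a2'' × Fin dZ2) ℂ}

theorem two_rpow_logb {n : ℕ} (hn : 0 < n) : (2 : ℝ) ^ Real.logb 2 n = n :=
  Real.rpow_logb (by norm_num) (by norm_num) (by exact_mod_cast hn)

/-- Of the eight error patterns, six contain an error in one of the own components. They are listed
in the order of the rate conditions. -/
theorem forall_pat {p : Pat → Prop} (h0 : ∀ S : Pat, (S.1 || S.2.1) = false → p S)
    (h1 : p (true, false, false)) (h2 : p (false, true, false)) (h3 : p (true, true, false))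
    (h4 : p (true, false, true)) (h5 : p (false, true, true)) (h6 : p (true, true, true)) :
    ∀ S, p S := by
  rintro ⟨_ | _, _ | _, _ | _⟩
  exacts [h0 _ rfl, h0 _ rfl, h2, h5, h1, h4, h3, h6]

/-- The six rate conditions of receiver 1 provide tests for all error patterns. -/
theorem receiver1_tests (hε0 : 0 < ε) (hN : IsCPTP N)
    (hpQ : IsProbDist pQ) (hpU1 : ∀ q, IsProbDist (pU1 q)) (hpU2 : ∀ q, IsProbDist (pU2 q))
    (hσ1 : ∀ u1, IsDensity (σ1 u1)) (hσ2 : ∀ u2, IsDensity (σ2 u2))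
    (hψ1 : IsDensity ψ1) (hψ2 : IsDensity ψ2)
    (N1' N1'' N2' : ℕ) (hN1' : 0 < N1') (hN1'' : 0 < N1'') (hN2' : 0 < N2')
    (h1 : ((Real.logb 2 N1' : ℝ) : EReal) ≤
      eaIH_U1_Y1U2Z1_Q ε pQ pU1 pU2 N σ1 ψ1 σ2 ψ2 - ((2 : ℝ) : EReal) -
        ((Real.logb 2 (1 / ε) : ℝ) : EReal))
    (h2 : ((Real.logb 2 N1'' : ℝ) : EReal) ≤
      eaIH_Z1_Y1U1U2_Q ε pQ pU1 pU2 N σ1 ψ1 σ2 ψ2 - ((2 : ℝ) : EReal) -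
        ((Real.logb 2 (1 / ε) : ℝ) : EReal))
    (h3 : ((Real.logb 2 N1' + Real.logb 2 N1'' : ℝ) : EReal) ≤
      eaIH_U1Z1_Y1U2_Q ε pQ pU1 pU2 N σ1 ψ1 σ2 ψ2 - ((2 : ℝ) : EReal) -
        ((Real.logb 2 (1 / ε) : ℝ) : EReal))
    (h4 : ((Real.logb 2 N1' + Real.logb 2 N2' : ℝ) : EReal) ≤
      eaIH_U1U2_Y1Z1_Q ε pQ pU1 pU2 N σ1 ψ1 σ2 ψ2 - ((2 : ℝ) : EReal) -
        ((Real.logb 2 (1 / ε) : ℝ) : EReal))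
    (h5 : ((Real.logb 2 N1'' + Real.logb 2 N2' : ℝ) : EReal) ≤
      eaIH_Z1U2_Y1U1_Q ε pQ pU1 pU2 N σ1 ψ1 σ2 ψ2 - ((2 : ℝ) : EReal) -
        ((Real.logb 2 (1 / ε) : ℝ) : EReal))
    (h6 : ((Real.logb 2 N1' + Real.logb 2 N1'' + Real.logb 2 N2' : ℝ) : EReal) ≤
      eaIH_U1U2Z1_Y1_Q ε pQ pU1 pU2 N σ1 ψ1 σ2 ψ2 - ((2 : ℝ) : EReal) -
        ((Real.logb 2 (1 / ε) : ℝ) : EReal)) (S : Pat) :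
    HasTest ε pQ pU1 pU2 (trL ψ1) (eaOutYZ1 N σ1 ψ1 σ2 ψ2) (cnt N1' N1'' N2' S) S := by
  have hL := trL_eaOutYZ1 (ψ1 := ψ1) hN hσ1 hσ2 hψ2
  have ht : ∀ u v, (eaOutYZ1 N σ1 ψ1 σ2 ψ2 u v).trace = 1 := fun u v => by
    rw [← trace_trL, hL, trace_trL]; exact hψ1.2
  have e1 := two_rpow_logb hN1'
  have e2 := two_rpow_logb hN1''
  have e3 := two_rpow_logb hN2'
  revert S
  refine forall_pat (fun S hS => hasTest_trivial _ hε0 hS) ?_ ?_ ?_ ?_ ?_ ?_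
  · refine hasTest hpQ hpU1 hpU2 _ ht hε0 ?_ _ h1 rfl ?_
    · simp [cnt, cnt1, e1]
    · congr 1
  · refine hasTest hpQ hpU1 hpU2 _ ht hε0 ?_ _ h2 rfl ?_
    · simp [cnt, cnt1, e2]
    · simp only [hL, sum_smul_const2 (hpU1 _) (hpU2 _)]
      rfl
  · refine hasTest hpQ hpU1 hpU2 _ ht hε0 ?_ _ h3 rfl ?_
    · simp [cnt, cnt1, Real.rpow_add, e1, e2]
    · simp only [hL, sum_smul_const (hpU2 _), tau, Kb, cavM, if_true, trR_sum, trR_smul,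
        Bool.false_eq_true, if_false]
  · refine hasTest hpQ hpU1 hpU2 _ ht hε0 ?_ _ h4 rfl ?_
    · simp [cnt, cnt1, Real.rpow_add, e1, e3]
    · simp only [tau_sum2']
  · refine hasTest hpQ hpU1 hpU2 _ ht hε0 ?_ _ h5 rfl ?_
    · simp [cnt, cnt1, Real.rpow_add, e2, e3]
    · simp only [hL, sum_smul_const (hpU1 _), tau, Kb, cavM, if_true, trR_sum, trR_smul,
        Bool.false_eq_true, if_false]
  · refine hasTest hpQ hpU1 hpU2 _ ht hε0 ?_ _ h6 rfl ?_
    · simp [cnt, cnt1, Real.rpow_add, e1, e2, e3, mul_assoc]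
    · simp only [hL, tau_sum2]

/-- The six rate conditions of receiver 2 provide tests for all error patterns. -/
theorem receiver2_tests (hε0 : 0 < ε) (hN : IsCPTP N)
    (hpQ : IsProbDist pQ) (hpU1 : ∀ q, IsProbDist (pU1 q)) (hpU2 : ∀ q, IsProbDist (pU2 q))
    (hσ1 : ∀ u1, IsDensity (σ1 u1)) (hσ2 : ∀ u2, IsDensity (σ2 u2))
    (hψ1 : IsDensity ψ1) (hψ2 : IsDensity ψ2)
    (N2' N2'' N1' : ℕ) (hN2' : 0 < N2') (hN2'' : 0 < N2'') (hN1' : 0 < N1')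
    (h7 : ((Real.logb 2 N2' : ℝ) : EReal) ≤
      eaIH_U2_Y2U1Z2_Q ε pQ pU1 pU2 N σ1 ψ1 σ2 ψ2 - ((2 : ℝ) : EReal) -
        ((Real.logb 2 (1 / ε) : ℝ) : EReal))
    (h8 : ((Real.logb 2 N2'' : ℝ) : EReal) ≤
      eaIH_Z2_Y2U1U2_Q ε pQ pU1 pU2 N σ1 ψ1 σ2 ψ2 - ((2 : ℝ) : EReal) -
        ((Real.logb 2 (1 / ε) : ℝ) : EReal))
    (h9 : ((Real.logb 2 N2' + Real.logb 2 N2'' : ℝ) : EReal) ≤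
      eaIH_U2Z2_Y2U1_Q ε pQ pU1 pU2 N σ1 ψ1 σ2 ψ2 - ((2 : ℝ) : EReal) -
        ((Real.logb 2 (1 / ε) : ℝ) : EReal))
    (h10 : ((Real.logb 2 N1' + Real.logb 2 N2' : ℝ) : EReal) ≤
      eaIH_U1U2_Y2Z2_Q ε pQ pU1 pU2 N σ1 ψ1 σ2 ψ2 - ((2 : ℝ) : EReal) -
        ((Real.logb 2 (1 / ε) : ℝ) : EReal))
    (h11 : ((Real.logb 2 N2'' + Real.logb 2 N1' : ℝ) : EReal) ≤
      eaIH_Z2U1_Y2U2_Q ε pQ pU1 pU2 N σ1 ψ1 σ2 ψ2 - ((2 : ℝ) : EReal) -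
        ((Real.logb 2 (1 / ε) : ℝ) : EReal))
    (h12 : ((Real.logb 2 N2' + Real.logb 2 N2'' + Real.logb 2 N1' : ℝ) : EReal) ≤
      eaIH_U1U2Z2_Y2_Q ε pQ pU1 pU2 N σ1 ψ1 σ2 ψ2 - ((2 : ℝ) : EReal) -
        ((Real.logb 2 (1 / ε) : ℝ) : EReal)) (S : Pat) :
    HasTest ε pQ pU2 pU1 (trL ψ2) (fun u2 u1 => eaOutYZ2 N σ1 ψ1 σ2 ψ2 u1 u2)
      (cnt N2' N2'' N1' S) S := by
  have hL := trL_eaOutYZ2 (ψ2 := ψ2) hN hσ1 hσ2 hψ1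
  have ht : ∀ u v, (eaOutYZ2 N σ1 ψ1 σ2 ψ2 v u).trace = 1 := fun u v => by
    rw [← trace_trL, hL, trace_trL]; exact hψ2.2
  have e1 := two_rpow_logb hN2'
  have e2 := two_rpow_logb hN2''
  have e3 := two_rpow_logb hN1'
  revert S
  refine forall_pat (fun S hS => hasTest_trivial _ hε0 hS) ?_ ?_ ?_ ?_ ?_ ?_
  · refine hasTest_swap hpQ hpU2 hpU1 _ ht hε0 ?_ _ h7 rfl ?_
    · simp [cnt, cnt1, e1]
    · congr 1
  · refine hasTest_swap hpQ hpU2 hpU1 _ ht hε0 ?_ _ h8 rfl ?_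
    · simp [cnt, cnt1, e2]
    · simp only [hL, sum_smul_const2 (hpU1 _) (hpU2 _)]
      rfl
  · refine hasTest_swap hpQ hpU2 hpU1 _ ht hε0 ?_ _ h9 rfl ?_
    · simp [cnt, cnt1, Real.rpow_add, e1, e2]
    · simp only [hL, sum_smul_const (hpU1 _), tau, Kb, cavM, if_true, trR_sum, trR_smul,
        Bool.false_eq_true, if_false]
  · refine hasTest_swap hpQ hpU2 hpU1 _ ht hε0 ?_ _ h10 rfl ?_
    · simp [cnt, cnt1, Real.rpow_add, e1, e3, mul_comm]
    · simp only [tau_sum2']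
      simp only [← sum_smul_swap (pU2 _) (pU1 _)]
  · refine hasTest_swap hpQ hpU2 hpU1 _ ht hε0 ?_ _ h11 rfl ?_
    · simp [cnt, cnt1, Real.rpow_add, e2, e3]
    · simp only [hL, sum_smul_const (hpU2 _), tau, Kb, cavM, if_true, trR_sum, trR_smul,
        Bool.false_eq_true, if_false]
  · refine hasTest_swap hpQ hpU2 hpU1 _ ht hε0 ?_ _ h12 rfl ?_
    · simp [cnt, cnt1, Real.rpow_add, e1, e2, e3, mul_assoc]
    · simp only [hL, tau_sum2]
      simp only [← sum_smul_swap (pU2 _) (pU1 _) (fun x y => trR _)]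

end Tests
end HK

namespace HK

/-! ### Encoding -/

section Encoder
open Matrix

variable {A P Z B : Type*} [Fintype A] [Fintype P] [Fintype Z] [Fintype B] [DecidableEq B]
  [DecidableEq A] [DecidableEq P] [DecidableEq Z]

/-- Independent copies of the entangled state `ψ`, indexed by `B`. -/
def copies (B : Type*) [Fintype B] (ψ : Matrix (P × Z) (P × Z) ℂ) :
    Matrix ((B → P) × (B → Z)) ((B → P) × (B → Z)) ℂ :=
  Matrix.of fun p q => ∏ b, ψ (p.1 b, p.2 b) (q.1 b, q.2 b)

theorem copies_density {ψ : Matrix (P × Z) (P × Z) ℂ} (hψ : IsDensity ψ) :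
    IsDensity (copies B ψ) := by
  constructor
  · exact psd_prod Finset.univ (fun b => ψ.submatrix (fun p : (B → P) × (B → Z) =>
      (p.1 b, p.2 b)) (fun p => (p.1 b, p.2 b))) fun b _ => hψ.1.submatrix _
  · have h : ∑ x, ψ x x = 1 := hψ.2
    have h2 := Fintype.sum_prod_type (fun p : (B → P) × (B → Z) => copies B ψ p p)
    simp only [trace, diag]
    rw [← (Equiv.arrowProdEquivProdArrow B (fun _ => P) (fun _ => Z)).sum_comp]
    calc _ = ∑ f : B → P × Z, ∏ b, ψ (f b) (f b) := rfl
      _ = ∏ _b : B, ∑ x, ψ x x := by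
        rw [Finset.prod_univ_sum, Fintype.piFinset_univ]
      _ = 1 := by simp [h]

/-- The encoder sending the state `σ` together with the half with index `b` of the copies of an
entangled state. -/
def encode (σ : Matrix A A ℂ) (b : B) :
    Matrix (B → P) (B → P) ℂ →ₗ[ℂ] Matrix (A × P) (A × P) ℂ where
  toFun M := σ ⊗ₖ trR (M.submatrix (Equiv.funSplitAt b P).symm (Equiv.funSplitAt b P).symm)
  map_add' M M' := by
    ext i j
    simp [trR, Finset.sum_add_distrib, mul_add]
  map_smul' c M := by
    ext i j
    simp only [trR, kroneckerMap_apply, of_apply, submatrix_apply, Matrix.smul_apply, smul_eq_mul,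
      RingHom.id_apply, ← Finset.mul_sum]
    ring

theorem encode_apply (σ : Matrix A A ℂ) (b : B) (M : Matrix (B → P) (B → P) ℂ) (i j : A × P) :
    encode σ b M i j = σ i.1 j.1 * ∑ h, M ((Equiv.funSplitAt b P).symm (i.2, h))
      ((Equiv.funSplitAt b P).symm (j.2, h)) := rfl

theorem encode_cptp {σ : Matrix A A ℂ} (hσ : IsDensity σ) (b : B) :
    IsCPTP (encode (P := P) σ b) := by
  constructor
  · intro M
    change (σ ⊗ₖ trR _).trace = _
    rw [trace_kronecker, hσ.2, one_mul, trace_trR]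
    exact (Equiv.funSplitAt b P).symm.sum_comp fun i => M i i
  · intro k M hM
    have h1 := fun h : {j // j ≠ b} → P => hM.submatrix (fun p : Fin k × (A × P) =>
      (p.1, (Equiv.funSplitAt b P).symm (p.2.2, h)))
    have h2 := posSemidef_sum Finset.univ fun h _ => h1 h
    have h3 := (hσ.1.submatrix (fun p : Fin k × (A × P) => p.2.1)).hadamard h2
    refine (congrArg PosSemidef ?_).mp h3
    ext p q
    simp [encode_apply, Matrix.sum_apply]

/-- The state of the channel input and of the receiver after encoding: the copy with index `b`
is intact, and only the marginals of the other copies remain. -/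
theorem extRight_encode (σ : Matrix A A ℂ) (b : B) (ψ : Matrix (P × Z) (P × Z) ℂ)
    (r c : (A × P) × (B → Z)) :
    extRight (encode σ b) (copies B ψ) r c = σ r.1.1 c.1.1 *
      (ψ (r.1.2, r.2 b) (c.1.2, c.2 b) * ∏ i ∈ Finset.univ.erase b, trL ψ (r.2 i) (c.2 i)) := by
  simp only [extRight, of_apply, encode_apply, copies]
  congr 1
  have h1 : ∀ h : {j // j ≠ b} → P, ∏ i,
      ψ ((Equiv.funSplitAt b P).symm (r.1.2, h) i, r.2 i)
        ((Equiv.funSplitAt b P).symm (c.1.2, h) i, c.2 i) =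
      ψ (r.1.2, r.2 b) (c.1.2, c.2 b) *
        ∏ i : {j // j ≠ b}, ψ (h i, r.2 i) (h i, c.2 i) := by
    intro h
    rw [← Finset.mul_prod_erase _ _ (Finset.mem_univ b)]
    congr 1
    · simp [Equiv.funSplitAt]
    · rw [Finset.prod_subtype (p := fun j => j ≠ b) _ (by simp)]
      refine Finset.prod_congr rfl fun i _ => ?_
      simp [Equiv.funSplitAt, Equiv.piSplitAt, i.2]
  simp only [h1, ← Finset.mul_sum]
  congr 1
  rw [Finset.prod_subtype (p := fun j => j ≠ b) (Finset.univ.erase b) (by simp)]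
  simp only [trL, of_apply]
  rw [Finset.prod_univ_sum, Fintype.piFinset_univ]

/-- The copies which are not used trace out. -/
theorem sum_prod_erase (b : B) (F : Z → ℂ) (G : Z → ℂ) (hG : ∑ z, G z = 1) :
    ∑ f : B → Z, F (f b) * ∏ i ∈ Finset.univ.erase b, G (f i) = ∑ z, F z := by
  have h1 : ∀ f : B → Z, F (f b) * ∏ i ∈ Finset.univ.erase b, G (f i) =
      ∏ i, (if i = b then F (f i) else G (f i)) := by
    intro f
    rw [← Finset.mul_prod_erase _ _ (Finset.mem_univ b), if_pos rfl]
    congr 1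
    refine Finset.prod_congr rfl fun i hi => ?_
    rw [if_neg (Finset.ne_of_mem_erase hi)]
  simp only [h1]
  have h2 := Finset.prod_univ_sum (fun _ : B => (Finset.univ : Finset Z))
    (fun i z => if i = b then F z else G z)
  rw [Fintype.piFinset_univ] at h2
  rw [← h2, ← Finset.mul_prod_erase _ _ (Finset.mem_univ b)]
  have h3 : ∏ i ∈ Finset.univ.erase b, ∑ z, (if i = b then F z else G z) = 1 :=
    Finset.prod_eq_one fun i hi => by simp [Finset.ne_of_mem_erase hi, hG]
  rw [h3, mul_one]
  simp

theorem omg_apply {Y : Type*} (ψ : Matrix Z Z ℂ) (b : B) (ρ : Matrix (Y × Z) (Y × Z) ℂ)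
    (p q : Y × (B → Z)) : omg ψ b ρ p q =
      ρ (p.1, p.2 b) (q.1, q.2 b) * ∏ i ∈ Finset.univ.erase b, ψ (p.2 i) (q.2 i) := by
  rw [omg, of_apply, ← Finset.mul_prod_erase _ _ (Finset.mem_univ b), if_pos rfl]
  congr 1
  refine Finset.prod_congr rfl fun i hi => ?_
  rw [if_neg (Finset.ne_of_mem_erase hi)]

end Encoder

/-! ### Success probability of two receivers -/

section Success
open Matrix

variable {G H : Type*} [Fintype G] [DecidableEq G] [Fintype H] [DecidableEq H]

/-- A test of the first subsystem alone sees the reduced state. -/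
theorem rt_kron_one (M : Matrix G G ℂ) (ω : Matrix (G × H) (G × H) ℂ) :
    rt (M ⊗ₖ (1 : Matrix H H ℂ)) ω = rt M (trR ω) := by
  simp only [rt, trace, diag, mul_apply, Fintype.sum_prod_type, kroneckerMap_apply, trR, of_apply,
    one_apply, mul_ite, mul_one, mul_zero, ite_mul, zero_mul, Finset.sum_ite_eq, Finset.mem_univ,
    if_true, Finset.mul_sum]
  congr 1
  exact Finset.sum_congr rfl fun _ _ => Finset.sum_comm

theorem rt_one_kron (M : Matrix H H ℂ) (ω : Matrix (G × H) (G × H) ℂ) :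
    rt ((1 : Matrix G G ℂ) ⊗ₖ M) ω = rt M (trL ω) := by
  simp only [rt, trace, diag, mul_apply, Fintype.sum_prod_type, kroneckerMap_apply, trL, of_apply,
    one_apply, ite_mul, one_mul, zero_mul, Finset.mul_sum]
  congr 1
  rw [Finset.sum_comm]
  refine Finset.sum_congr rfl fun h _ => ?_
  rw [Finset.sum_comm]
  simp only [Finset.sum_ite_irrel, Finset.sum_const_zero]
  simp
  exact Finset.sum_comm

/-- Two receivers are both right except with the sum of their error probabilities. -/
theorem union_bound {L : Matrix G G ℂ} {L' : Matrix H H ℂ} (hL : (1 - L).PosSemidef)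
    (hL' : (1 - L').PosSemidef) {ω : Matrix (G × H) (G × H) ℂ} (hω : ω.PosSemidef)
    (hω1 : ω.trace = 1) :
    1 - rt (1 - L) (trR ω) - rt (1 - L') (trL ω) ≤ rt (L ⊗ₖ L') ω := by
  have h1 := rt_nonneg (hL.kronecker hL') hω
  have h2 : L ⊗ₖ L' = 1 - (1 - L) ⊗ₖ (1 : Matrix H H ℂ) - (1 : Matrix G G ℂ) ⊗ₖ (1 - L') +
      (1 - L) ⊗ₖ (1 - L') := by
    rw [← one_kronecker_one (m := G) (n := H)]
    ext i j
    simp only [kroneckerMap_apply, Matrix.sub_apply, Matrix.add_apply]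
    ring
  have h4 : rt (1 - (1 - L) ⊗ₖ (1 : Matrix H H ℂ) - (1 : Matrix G G ℂ) ⊗ₖ (1 - L')) ω =
      rt 1 ω - rt ((1 - L) ⊗ₖ (1 : Matrix H H ℂ)) ω - rt ((1 : Matrix G G ℂ) ⊗ₖ (1 - L')) ω := by
    rw [rt_msub, rt_msub]
  rw [h2, rt_madd, h4, rt_kron_one, rt_one_kron]
  have h3 : rt 1 ω = 1 := by simp [rt, hω1]
  linarith

theorem one_sub_psd {J : Type*} [Fintype J] [DecidableEq J] {L : J → Matrix G G ℂ}
    (hL : ∀ j, (L j).PosSemidef) (h1 : (1 - ∑ j, L j).PosSemidef) (j : J) :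
    (1 - L j).PosSemidef := by
  have : 1 - L j = (1 - ∑ j, L j) + ∑ i ∈ Finset.univ.erase j, L i := by
    rw [← Finset.add_sum_erase _ _ (Finset.mem_univ j)]; abel
  rw [this]
  exact h1.add (posSemidef_sum _ fun i _ => hL i)

end Success
end HK

namespace HK

/-! ### Codes over arbitrary finite index sets -/

section Code
open Matrix

variable {X1 X2 P1 R1 P2 R2 : Type*} [Fintype X1] [Fintype X2] [DecidableEq X1] [DecidableEq X2]
  [Fintype P1] [Fintype R1] [Fintype P2] [Fintype R2] [DecidableEq P1] [DecidableEq P2]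
  [DecidableEq R1] [DecidableEq R2] {dY1 dY2 : ℕ}

/-- The joint state of the two receivers after encoding with `E1`, `E2` and transmission. -/
def joint (N : Matrix (X1 × X2) (X1 × X2) ℂ →ₗ[ℂ]
      Matrix (Fin dY1 × Fin dY2) (Fin dY1 × Fin dY2) ℂ)
    (E1 : Matrix P1 P1 ℂ →ₗ[ℂ] Matrix X1 X1 ℂ) (E2 : Matrix P2 P2 ℂ →ₗ[ℂ] Matrix X2 X2 ℂ)
    (Φ1 : Matrix (P1 × R1) (P1 × R1) ℂ) (Φ2 : Matrix (P2 × R2) (P2 × R2) ℂ) :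
    Matrix ((Fin dY1 × R1) × (Fin dY2 × R2)) ((Fin dY1 × R1) × (Fin dY2 × R2)) ℂ :=
  Matrix.of fun p q => extRight N (Matrix.of
          fun (xz xz' : (X1 × X2) × (R1 × R2)) =>
            extRight E1 Φ1 (xz.1.1, xz.2.1) (xz'.1.1, xz'.2.1) *
            extRight E2 Φ2 (xz.1.2, xz.2.2) (xz'.1.2, xz'.2.2))
          ((p.1.1, p.2.1), (p.1.2, p.2.2)) ((q.1.1, q.2.1), (q.1.2, q.2.2))

/-- The success probability of a message pair, as it appears in `ExistsCisEAICCode`, is the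
acceptance probability of the product of the two tests. -/
theorem rt_joint (N : Matrix (X1 × X2) (X1 × X2) ℂ →ₗ[ℂ]
      Matrix (Fin dY1 × Fin dY2) (Fin dY1 × Fin dY2) ℂ)
    (E1 : Matrix P1 P1 ℂ →ₗ[ℂ] Matrix X1 X1 ℂ) (E2 : Matrix P2 P2 ℂ →ₗ[ℂ] Matrix X2 X2 ℂ)
    (Φ1 : Matrix (P1 × R1) (P1 × R1) ℂ) (Φ2 : Matrix (P2 × R2) (P2 × R2) ℂ)
    (L : Matrix (Fin dY1 × R1) (Fin dY1 × R1) ℂ) (L' : Matrix (Fin dY2 × R2) (Fin dY2 × R2) ℂ) :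
    (∑ y1, ∑ y2, ∑ z1, ∑ z2, ∑ y1', ∑ y2', ∑ z1', ∑ z2',
        L (y1, z1) (y1', z1') * L' (y2, z2) (y2', z2') *
        extRight N (Matrix.of
          fun (xz xz' : (X1 × X2) × (R1 × R2)) =>
            extRight E1 Φ1 (xz.1.1, xz.2.1) (xz'.1.1, xz'.2.1) *
            extRight E2 Φ2 (xz.1.2, xz.2.2) (xz'.1.2, xz'.2.2))
          ((y1', y2'), (z1', z2')) ((y1, y2), (z1, z2))).re =
      rt (L ⊗ₖ L') (joint N E1 E2 Φ1 Φ2) := by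
  simp only [rt, trace, diag, mul_apply, Fintype.sum_prod_type, kroneckerMap_apply, joint, of_apply]
  congr 1
  refine Finset.sum_congr rfl fun y1 _ => ?_
  rw [Finset.sum_comm]
  refine Finset.sum_congr rfl fun z1 _ => Finset.sum_congr rfl fun y2 _ =>
    Finset.sum_congr rfl fun z2 _ => Finset.sum_congr rfl fun y1' _ => ?_
  rw [Finset.sum_comm]

theorem rt_submatrix {G H : Type*} [Fintype G] [Fintype H] [DecidableEq G] [DecidableEq H]
    (e : G ≃ H) (A B : Matrix H H ℂ) : rt (A.submatrix e e) (B.submatrix e e) = rt A B := by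
  rw [rt, submatrix_mul_equiv, rt]
  congr 1
  exact e.sum_comp fun i => (A * B) i i

theorem density_submatrix {G H : Type*} [Fintype G] [Fintype H] (e : G ≃ H) {A : Matrix H H ℂ}
    (hA : IsDensity A) : IsDensity (A.submatrix e e) :=
  ⟨hA.1.submatrix _, (e.sum_comp fun i => A i i).trans hA.2⟩

theorem one_sub_sum_submatrix {n : ℕ} {J G H : Type*} [Fintype J] [DecidableEq G] [DecidableEq H]
    (e : Fin n ≃ J) (g : H ≃ G) (L : J → Matrix G G ℂ) :
    (1 : Matrix H H ℂ) - ∑ m, (L (e m)).submatrix g g = (1 - ∑ j, L j).submatrix g g := by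
  ext a b
  simp only [Matrix.sub_apply, submatrix_apply, Matrix.sum_apply, one_apply, g.injective.eq_iff]
  rw [e.sum_comp fun j => L j (g a) (g b)]

/-- A channel whose input register is relabelled by `p`. -/
def relabel {n : ℕ} {P X : Type*} (p : Fin n ≃ P) (E : Matrix P P ℂ →ₗ[ℂ] Matrix X X ℂ) :
    Matrix (Fin n) (Fin n) ℂ →ₗ[ℂ] Matrix X X ℂ :=
  E ∘ₗ (reindexLinearEquiv ℂ ℂ p p).toLinearMap

theorem relabel_cptp {n : ℕ} {P X : Type*} [Fintype P] [Fintype X] (p : Fin n ≃ P)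
    {E : Matrix P P ℂ →ₗ[ℂ] Matrix X X ℂ} (hE : IsCPTP E) : IsCPTP (relabel p E) := by
  refine ⟨fun M => ?_, fun k M hM => ?_⟩
  · rw [relabel, LinearMap.comp_apply, hE.1]
    exact p.symm.sum_comp fun i => M i i
  · exact hE.2 k (M.submatrix (fun x => (x.1, p.symm x.2)) (fun x => (x.1, p.symm x.2)))
      (hM.submatrix _)

/-- Relabelling the registers of the shared state commutes with encoding. -/
theorem extRight_relabel {n k : ℕ} {P R X : Type*} [Fintype P] [Fintype R] [Fintype X]
    (p : Fin n ≃ P) (r : Fin k ≃ R)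
    (E : Matrix P P ℂ →ₗ[ℂ] Matrix X X ℂ) (Φ : Matrix (P × R) (P × R) ℂ) (x x' : X)
    (z z' : Fin k) :
    extRight (relabel p E) (Φ.submatrix (p.prodCongr r) (p.prodCongr r)) (x, z) (x', z') =
      extRight E Φ (x, r z) (x', r z') := by
  have h : reindexLinearEquiv ℂ ℂ p p (Matrix.of fun i j =>
      Φ.submatrix (p.prodCongr r) (p.prodCongr r) (i, z) (j, z')) =
      Matrix.of fun i j => Φ (i, r z) (j, r z') := by
    ext i j
    simp
  exact congrArg (fun M => E M x x') h

theorem extRight_congr {X Y R R' : Type*} [Fintype X] [Fintype Y] [Fintype R] [Fintype R']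
    (E : Matrix X X ℂ →ₗ[ℂ] Matrix Y Y ℂ) {A : Matrix (X × R) (X × R) ℂ}
    {A' : Matrix (X × R') (X × R') ℂ} (y y' : Y) {z z' : R} {w w' : R'}
    (h : ∀ x x', A (x, z) (x', z') = A' (x, w) (x', w')) :
    extRight E A (y, z) (y', z') = extRight E A' (y, w) (y', w') := by
  have : (Matrix.of fun x x' => A (x, z) (x', z')) =
      Matrix.of fun x x' => A' (x, w) (x', w') := by
    ext x x'
    exact h x x'
  simp only [extRight, of_apply, this]

/-- A code may be given with arbitrary finite index sets for registers and messages. -/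
theorem exists_code {J1 J2 : Type*} [Fintype J1] [Fintype J2] [DecidableEq J1] [DecidableEq J2]
    {N : Matrix (X1 × X2) (X1 × X2) ℂ →ₗ[ℂ] Matrix (Fin dY1 × Fin dY2) (Fin dY1 × Fin dY2) ℂ}
    {N1 N2 : ℕ} (hJ1 : Fintype.card J1 = N1) (hJ2 : Fintype.card J2 = N2) {δ : ℝ}
    {Φ1 : Matrix (P1 × R1) (P1 × R1) ℂ} {Φ2 : Matrix (P2 × R2) (P2 × R2) ℂ}
    {E1 : J1 → (Matrix P1 P1 ℂ →ₗ[ℂ] Matrix X1 X1 ℂ)}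
    {E2 : J2 → (Matrix P2 P2 ℂ →ₗ[ℂ] Matrix X2 X2 ℂ)}
    {L : J1 → Matrix (Fin dY1 × R1) (Fin dY1 × R1) ℂ}
    {L' : J2 → Matrix (Fin dY2 × R2) (Fin dY2 × R2) ℂ}
    (hΦ1 : IsDensity Φ1) (hΦ2 : IsDensity Φ2) (hE1 : ∀ j, IsCPTP (E1 j))
    (hE2 : ∀ j, IsCPTP (E2 j)) (hL : ∀ j, (L j).PosSemidef) (h1L : (1 - ∑ j, L j).PosSemidef)
    (hL' : ∀ j, (L' j).PosSemidef) (h1L' : (1 - ∑ j, L' j).PosSemidef)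
    (h : 1 - δ ≤ ((N1 * N2 : ℝ))⁻¹ * ∑ m : J1 × J2,
      rt (L m.1 ⊗ₖ L' m.2) (joint N (E1 m.1) (E2 m.2) Φ1 Φ2)) :
    ExistsCisEAICCode N N1 N2 δ := by
  let p1 := (Fintype.equivFin P1).symm
  let r1 := (Fintype.equivFin R1).symm
  let p2 := (Fintype.equivFin P2).symm
  let r2 := (Fintype.equivFin R2).symm
  let j1 := (Fintype.equivFinOfCardEq hJ1).symm
  let j2 := (Fintype.equivFinOfCardEq hJ2).symm
  let y1 := (Equiv.refl (Fin dY1)).prodCongr r1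
  let y2 := (Equiv.refl (Fin dY2)).prodCongr r2
  refine ⟨_, _, _, _, Φ1.submatrix (p1.prodCongr r1) (p1.prodCongr r1),
    Φ2.submatrix (p2.prodCongr r2) (p2.prodCongr r2),
    fun m => relabel p1 (E1 (j1 m)),
    fun m => relabel p2 (E2 (j2 m)),
    fun m => (L (j1 m)).submatrix y1 y1, fun m => (L' (j2 m)).submatrix y2 y2,
    density_submatrix _ hΦ1, density_submatrix _ hΦ2, fun m => relabel_cptp p1 (hE1 _),
    fun m => relabel_cptp p2 (hE2 _), fun m => (hL _).submatrix _, ?_, fun m => (hL' _).submatrix _, ?_, ?_⟩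
  · rw [one_sub_sum_submatrix]; exact h1L.submatrix _
  · rw [one_sub_sum_submatrix]; exact h1L'.submatrix _
  refine h.trans_eq ?_
  congr 1
  rw [← (j1.prodCongr j2).sum_comp]
  refine Finset.sum_congr rfl fun m _ => ?_
  rw [rt_joint, ← rt_submatrix (y1.prodCongr y2)]
  congr 1
  ext a b
  simp only [joint, of_apply, submatrix_apply, Equiv.prodCongr_apply, Prod.map, y1, y2]
  exact extRight_congr N _ _ fun x x' => congrArg₂ (· * ·)
    (extRight_relabel p1 r1 (E1 (j1 m.1)) Φ1 x.1 x'.1 a.1.2 b.1.2).symm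
    (extRight_relabel p2 r2 (E2 (j2 m.2)) Φ2 x.2 x'.2 a.2.2 b.2.2).symm

end Code

/-! ### Joint output state -/

section Joint
open Matrix

variable {U1 U2 B1 B2 : Type*} {a1' a1'' a2' a2'' dY1 dY2 dZ1 dZ2 : ℕ}
  [Fintype B1] [Fintype B2] [DecidableEq B1] [DecidableEq B2]
  {N : Matrix ((Fin a1' × Fin a1'') × (Fin a2' × Fin a2''))
    ((Fin a1' × Fin a1'') × (Fin a2' × Fin a2'')) ℂ →ₗ[ℂ]
    Matrix (Fin dY1 × Fin dY2) (Fin dY1 × Fin dY2) ℂ}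
  {σ1 : U1 → Matrix (Fin a1') (Fin a1') ℂ} {σ2 : U2 → Matrix (Fin a2') (Fin a2') ℂ}
  {ψ1 : Matrix (Fin a1'' × Fin dZ1) (Fin a1'' × Fin dZ1) ℂ}
  {ψ2 : Matrix (Fin a2'' × Fin dZ2) (Fin a2'' × Fin dZ2) ℂ}

/-- After encoding, the receivers hold the channel output and the reference systems of the copies in
use; the other copies are in their marginal states. -/
theorem joint_apply (u1 : U1) (u2 : U2) (b1 : B1) (b2 : B2)
    (p q : (Fin dY1 × (B1 → Fin dZ1)) × (Fin dY2 × (B2 → Fin dZ2))) :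
    joint N (encode (σ1 u1) b1) (encode (σ2 u2) b2) (copies B1 ψ1) (copies B2 ψ2) p q =
      extRight N (eaInState σ1 ψ1 σ2 ψ2 u1 u2) ((p.1.1, p.2.1), (p.1.2 b1, p.2.2 b2))
          ((q.1.1, q.2.1), (q.1.2 b1, q.2.2 b2)) *
        ((∏ i ∈ Finset.univ.erase b1, trL ψ1 (p.1.2 i) (q.1.2 i)) *
          ∏ i ∈ Finset.univ.erase b2, trL ψ2 (p.2.2 i) (q.2.2 i)) := by
  have h : (Matrix.of fun x x' => eaInState σ1 ψ1 σ2 ψ2 u1 u2 (x, (p.1.2 b1, p.2.2 b2))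
      (x', (q.1.2 b1, q.2.2 b2))).map (fun z => ((∏ i ∈ Finset.univ.erase b1,
        trL ψ1 (p.1.2 i) (q.1.2 i)) *
          ∏ i ∈ Finset.univ.erase b2, trL ψ2 (p.2.2 i) (q.2.2 i)) • z) =
      Matrix.of fun x x' => extRight (encode (σ1 u1) b1) (copies B1 ψ1) (x.1, p.1.2) (x'.1, q.1.2) *
        extRight (encode (σ2 u2) b2) (copies B2 ψ2) (x.2, p.2.2) (x'.2, q.2.2) := by
    ext x x'
    simp only [extRight_encode, eaInState, of_apply, map_apply, smul_eq_mul]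
    ring
  simp only [joint, extRight, of_apply]
  change N (Matrix.of fun x x' => extRight (encode (σ1 u1) b1) (copies B1 ψ1) (x.1, p.1.2)
    (x'.1, q.1.2) * extRight (encode (σ2 u2) b2) (copies B2 ψ2) (x.2, p.2.2) (x'.2, q.2.2)) _ _ = _
  rw [← h]
  refine Eq.trans (congrArg (fun M => M (p.1.1, p.2.1) (q.1.1, q.2.1)) (N.map_smul
    ((∏ i ∈ Finset.univ.erase b1, trL ψ1 (p.1.2 i) (q.1.2 i)) *
      ∏ i ∈ Finset.univ.erase b2, trL ψ2 (p.2.2 i) (q.2.2 i)) (Matrix.of fun x x' =>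
        eaInState σ1 ψ1 σ2 ψ2 u1 u2 (x, (p.1.2 b1, p.2.2 b2)) (x', (q.1.2 b1, q.2.2 b2))))) ?_
  exact mul_comm _ _

theorem joint_psd (hN : IsCPTP N) (hσ1 : ∀ u, IsDensity (σ1 u)) (hσ2 : ∀ u, IsDensity (σ2 u))
    (hψ1 : IsDensity ψ1) (hψ2 : IsDensity ψ2) (u1 : U1) (u2 : U2) (b1 : B1) (b2 : B2) :
    (joint N (encode (σ1 u1) b1) (encode (σ2 u2) b2) (copies B1 ψ1)
      (copies B2 ψ2)).PosSemidef := by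
  have h1 := (extRight_psd hN (eaInState_psd hσ1 hσ2 hψ1 hψ2 u1 u2)).submatrix
    (fun p : (Fin dY1 × (B1 → Fin dZ1)) × (Fin dY2 × (B2 → Fin dZ2)) =>
      ((p.1.1, p.2.1), (p.1.2 b1, p.2.2 b2)))
  have h2 := psd_prod (Finset.univ.erase b1) (fun i => (trL ψ1).submatrix
    (fun p : (Fin dY1 × (B1 → Fin dZ1)) × (Fin dY2 × (B2 → Fin dZ2)) => p.1.2 i)
    (fun p => p.1.2 i)) fun i _ => (trL_psd hψ1.1).submatrix _
  have h3 := psd_prod (Finset.univ.erase b2) (fun i => (trL ψ2).submatrix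
    (fun p : (Fin dY1 × (B1 → Fin dZ1)) × (Fin dY2 × (B2 → Fin dZ2)) => p.2.2 i)
    (fun p => p.2.2 i)) fun i _ => (trL_psd hψ2.1).submatrix _
  refine (congrArg PosSemidef ?_).mp (h1.hadamard (h2.hadamard h3))
  ext p q
  rw [joint_apply]
  rfl

/-- Receiver 1 sees the marginal channel output on the copy in use, and fresh copies elsewhere. -/
theorem trR_joint (hψ2 : IsDensity ψ2) (u1 : U1) (u2 : U2) (b1 : B1) (b2 : B2) :
    trR (joint N (encode (σ1 u1) b1) (encode (σ2 u2) b2) (copies B1 ψ1) (copies B2 ψ2)) =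
      omg (trL ψ1) b1 (eaOutYZ1 N σ1 ψ1 σ2 ψ2 u1 u2) := by
  have h : ∑ z, trL ψ2 z z = 1 := (trace_trL ψ2).trans hψ2.2
  ext p q
  rw [omg_apply]
  simp only [trR, eaOutYZ1, of_apply, joint_apply, Fintype.sum_prod_type, Finset.sum_mul]
  refine Finset.sum_congr rfl fun y _ => ?_
  rw [← sum_prod_erase b2 _ _ h]
  exact Finset.sum_congr rfl fun f _ => by ring

/-- Receiver 2 sees the marginal channel output on the copy in use, and fresh copies elsewhere. -/
theorem trL_joint (hψ1 : IsDensity ψ1) (u1 : U1) (u2 : U2) (b1 : B1) (b2 : B2) :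
    trL (joint N (encode (σ1 u1) b1) (encode (σ2 u2) b2) (copies B1 ψ1) (copies B2 ψ2)) =
      omg (trL ψ2) b2 (eaOutYZ2 N σ1 ψ1 σ2 ψ2 u1 u2) := by
  have h : ∑ z, trL ψ1 z z = 1 := (trace_trL ψ1).trans hψ1.2
  ext p q
  rw [omg_apply]
  have hl : ∀ M : Matrix ((Fin dY1 × (B1 → Fin dZ1)) × (Fin dY2 × (B2 → Fin dZ2)))
      ((Fin dY1 × (B1 → Fin dZ1)) × (Fin dY2 × (B2 → Fin dZ2))) ℂ,
      trL M p q = ∑ g, M (g, p) (g, q) := fun _ => rfl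
  rw [hl]
  simp only [eaOutYZ2, of_apply, joint_apply, Fintype.sum_prod_type, Finset.sum_mul]
  refine Finset.sum_congr rfl fun y _ => ?_
  rw [← sum_prod_erase b1 _ _ h]
  exact Finset.sum_congr rfl fun f _ => by ring

end Joint

/-! ### Choice of a codebook, and constants -/

/-- Among random codebooks one is at least as good as the average. -/
theorem exists_codebook {K J : Type*} [Fintype K] [Fintype J] {w : K → ℝ} (hw : ∀ C, 0 ≤ w C)
    (hw1 : ∑ C, w C = 1) {err : K → J → ℝ} {δ : ℝ} (h : ∀ j, ∑ C, w C * err C j ≤ δ) :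
    ∃ C, ∑ j, err C j ≤ Fintype.card J * δ := by
  by_contra! hc
  have h1 : ∑ C, w C * ∑ j, err C j ≤ Fintype.card J * δ := by
    simp only [Finset.mul_sum]
    rw [Finset.sum_comm]
    refine (Finset.sum_le_sum fun j _ => h j).trans_eq ?_
    simp
  have h2 : ∑ C, w C * (Fintype.card J * δ) = Fintype.card J * δ := by
    rw [← Finset.sum_mul, hw1, one_mul]
  obtain ⟨C0, hC0⟩ : ∃ C, 0 < w C := by
    by_contra! h0
    have : ∑ C, w C ≤ 0 := Finset.sum_nonpos fun C _ => h0 C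
    linarith
  have h3 : ∑ C, w C * (Fintype.card J * δ) < ∑ C, w C * ∑ j, err C j :=
    Finset.sum_lt_sum (fun C _ => mul_le_mul_of_nonneg_left (hc C).le (hw C))
      ⟨C0, Finset.mem_univ _, mul_lt_mul_of_pos_left (hc C0) hC0⟩
  linarith

theorem constant_bound {ε : ℝ} (hε0 : 0 < ε) (hε1 : ε < 1) :
    9360 * √ε + 9360 * √ε ≤ 2 ^ (2 ^ 14) * ε ^ ((1 : ℝ) / 6) := by
  have h1 : √ε ≤ ε ^ ((1 : ℝ) / 6) := by
    rw [Real.sqrt_eq_rpow]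
    exact Real.rpow_le_rpow_of_exponent_ge hε0 hε1.le (by norm_num)
  have h2 : (18720 : ℝ) ≤ 2 ^ (2 ^ 14) :=
    le_trans (by norm_num : (18720 : ℝ) ≤ 2 ^ 15)
      (pow_le_pow_right₀ (by norm_num) (by norm_num))
  have h3 : 0 ≤ √ε := Real.sqrt_nonneg ε
  calc 9360 * √ε + 9360 * √ε = 18720 * √ε := by ring
    _ ≤ _ := mul_le_mul h2 h1 h3 (le_trans (by norm_num) h2)

end HK

namespace HK

/-! ### From decoders to a code -/

section Assembly
open Matrix

theorem trace_omg {B Z Y : Type*} [Fintype B] [Fintype Z] [Fintype Y] [DecidableEq B]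
    [DecidableEq Z] [DecidableEq Y]
    {ψ : Matrix Z Z ℂ} (hψ : ψ.trace = 1) (b : B)
    (ρ : Matrix (Y × Z) (Y × Z) ℂ) : (omg ψ b ρ).trace = ρ.trace := by
  simp only [trace, diag, omg_apply, Fintype.sum_prod_type]
  exact Finset.sum_congr rfl fun y _ => sum_prod_erase b (fun z => ρ (y, z) (y, z)) _ hψ

variable {Q U1 U2 : Type*} [Fintype Q] [Fintype U1] [Fintype U2] [DecidableEq Q] [DecidableEq U1]
  [DecidableEq U2] {a1' a1'' a2' a2'' dY1 dY2 dZ1 dZ2 : ℕ}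
  {pQ : Q → ℝ} {pU1 : Q → U1 → ℝ} {pU2 : Q → U2 → ℝ}
  {N : Matrix ((Fin a1' × Fin a1'') × (Fin a2' × Fin a2''))
    ((Fin a1' × Fin a1'') × (Fin a2' × Fin a2'')) ℂ →ₗ[ℂ]
    Matrix (Fin dY1 × Fin dY2) (Fin dY1 × Fin dY2) ℂ}
  {σ1 : U1 → Matrix (Fin a1') (Fin a1') ℂ} {σ2 : U2 → Matrix (Fin a2') (Fin a2') ℂ}
  {ψ1 : Matrix (Fin a1'' × Fin dZ1) (Fin a1'' × Fin dZ1) ℂ}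
  {ψ2 : Matrix (Fin a2'' × Fin dZ2) (Fin a2'' × Fin dZ2) ℂ}

/-- The success probability of a message pair is at least one minus the error probabilities of the
two receivers on their marginal states. -/
theorem joint_success (hN : IsCPTP N) (hσ1 : ∀ u, IsDensity (σ1 u)) (hσ2 : ∀ u, IsDensity (σ2 u))
    (hψ1 : IsDensity ψ1) (hψ2 : IsDensity ψ2) {B1 B2 : Type*} [Fintype B1] [Fintype B2]
    [DecidableEq B1] [DecidableEq B2] (u1 : U1) (u2 : U2) (b1 : B1) (b2 : B2)
    {L : Matrix (Fin dY1 × (B1 → Fin dZ1)) (Fin dY1 × (B1 → Fin dZ1)) ℂ}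
    {L' : Matrix (Fin dY2 × (B2 → Fin dZ2)) (Fin dY2 × (B2 → Fin dZ2)) ℂ}
    (hL : (1 - L).PosSemidef) (hL' : (1 - L').PosSemidef) :
    1 - rt (1 - L) (omg (trL ψ1) b1 (eaOutYZ1 N σ1 ψ1 σ2 ψ2 u1 u2)) -
        rt (1 - L') (omg (trL ψ2) b2 (eaOutYZ2 N σ1 ψ1 σ2 ψ2 u1 u2)) ≤
      rt (L ⊗ₖ L') (joint N (encode (σ1 u1) b1) (encode (σ2 u2) b2) (copies B1 ψ1)
        (copies B2 ψ2)) := by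
  have h := union_bound hL hL' (joint_psd hN hσ1 hσ2 hψ1 hψ2 u1 u2 b1 b2) (by
    rw [← trace_trR, trR_joint hψ2, trace_omg ((trace_trL ψ1).trans hψ1.2), ← trace_trL,
      trL_eaOutYZ1 hN hσ1 hσ2 hψ2, trace_trL, hψ1.2])
  rwa [trR_joint hψ2, trL_joint hψ1] at h

/-- Decoders for the two receivers that have small error on average over the codebook give a
code. -/
theorem code_of_decoders (hN : IsCPTP N) (hpQ : IsProbDist pQ) (hpU1 : ∀ q, IsProbDist (pU1 q))
    (hpU2 : ∀ q, IsProbDist (pU2 q)) (hσ1 : ∀ u, IsDensity (σ1 u)) (hσ2 : ∀ u, IsDensity (σ2 u))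
    (hψ1 : IsDensity ψ1) (hψ2 : IsDensity ψ2) {N1' N1'' N2' N2'' : ℕ}
    (hN1' : 0 < N1') (hN1'' : 0 < N1'') (hN2' : 0 < N2') (hN2'' : 0 < N2'') {δ1 δ2 : ℝ}
    {L : Q × (Fin N1' → U1) × (Fin N2' → U2) → Fin N1' × Fin N1'' →
      Matrix (Fin dY1 × (Fin N1'' → Fin dZ1)) (Fin dY1 × (Fin N1'' → Fin dZ1)) ℂ}
    {L' : Q × (Fin N2' → U2) × (Fin N1' → U1) → Fin N2' × Fin N2'' →
      Matrix (Fin dY2 × (Fin N2'' → Fin dZ2)) (Fin dY2 × (Fin N2'' → Fin dZ2)) ℂ}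
    (hL : ∀ C j, (L C j).PosSemidef) (h1L : ∀ C, (1 - ∑ j, L C j).PosSemidef)
    (hL' : ∀ C j, (L' C j).PosSemidef) (h1L' : ∀ C, (1 - ∑ j, L' C j).PosSemidef)
    (h1 : ∀ a b c, ∑ C, cbw pQ pU1 pU2 C * rt (1 - L C (a, b))
      (omg (trL ψ1) b (eaOutYZ1 N σ1 ψ1 σ2 ψ2 (C.2.1 a) (C.2.2 c))) ≤ δ1)
    (h2 : ∀ a b c, ∑ C, cbw pQ pU2 pU1 C * rt (1 - L' C (a, b))
      (omg (trL ψ2) b (eaOutYZ2 N σ1 ψ1 σ2 ψ2 (C.2.2 c) (C.2.1 a))) ≤ δ2) :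
    ExistsCisEAICCode N (N1' * N1'') (N2' * N2'') (δ1 + δ2) := by
  let err := fun (C : Q × (Fin N1' → U1) × (Fin N2' → U2))
    (m : (Fin N1' × Fin N1'') × (Fin N2' × Fin N2'')) =>
    rt (1 - L C m.1) (omg (trL ψ1) m.1.2 (eaOutYZ1 N σ1 ψ1 σ2 ψ2 (C.2.1 m.1.1) (C.2.2 m.2.1))) +
      rt (1 - L' (C.1, C.2.2, C.2.1) m.2)
        (omg (trL ψ2) m.2.2 (eaOutYZ2 N σ1 ψ1 σ2 ψ2 (C.2.1 m.1.1) (C.2.2 m.2.1)))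
  -- The second receiver sees the same random codebook with the two senders exchanged.
  let sw := (Equiv.refl Q).prodCongr (Equiv.prodComm (Fin N1' → U1) (Fin N2' → U2))
  have hsw : ∀ C, cbw pQ pU2 pU1 (sw C) = cbw pQ pU1 pU2 C := fun C => by
    simp only [cbw, sw, Equiv.prodCongr_apply, Prod.map, Equiv.refl_apply, Equiv.prodComm_apply,
      Prod.swap]
    rw [mul_comm (∏ i, pU2 C.1 (C.2.2 i))]
  have herr : ∀ m, ∑ C, cbw pQ pU1 pU2 C * err C m ≤ δ1 + δ2 := by
    intro m
    simp only [err, mul_add, Finset.sum_add_distrib]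
    refine add_le_add (h1 m.1.1 m.1.2 m.2.1) ((h2 m.2.1 m.2.2 m.1.1).trans_eq' ?_)
    rw [← sw.sum_comp]
    exact Finset.sum_congr rfl fun C _ => by rw [hsw]; rfl
  obtain ⟨C, hC⟩ := exists_codebook (cbw_nonneg hpQ hpU1 hpU2) (sum_cbw hpQ hpU1 hpU2) herr
  refine exists_code (J1 := Fin N1' × Fin N1'') (J2 := Fin N2' × Fin N2'') (by simp) (by simp)
    (copies_density (B := Fin N1'') hψ1) (copies_density (B := Fin N2'') hψ2)
    (fun j => encode_cptp (hσ1 (C.2.1 j.1)) j.2) (fun j => encode_cptp (hσ2 (C.2.2 j.1)) j.2)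
    (hL C) (h1L C) (hL' (C.1, C.2.2, C.2.1)) (h1L' _) ?_
  have hs : ∑ m, (1 - err C m) ≤ ∑ m : (Fin N1' × Fin N1'') × (Fin N2' × Fin N2''),
      rt (L C m.1 ⊗ₖ L' (C.1, C.2.2, C.2.1) m.2)
        (joint N (encode (σ1 (C.2.1 m.1.1)) m.1.2) (encode (σ2 (C.2.2 m.2.1)) m.2.2)
          (copies (Fin N1'') ψ1) (copies (Fin N2'') ψ2)) := by
    refine Finset.sum_le_sum fun m _ => le_of_eq_of_le ?_ (joint_success hN hσ1 hσ2 hψ1 hψ2 _ _ _ _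
      (one_sub_psd (hL C) (h1L C) m.1) (one_sub_psd (hL' _) (h1L' (C.1, C.2.2, C.2.1)) m.2))
    simp only [err]
    ring
  have hcard : (Fintype.card ((Fin N1' × Fin N1'') × (Fin N2' × Fin N2'')) : ℝ) =
      ((N1' * N1'' : ℕ) : ℝ) * ((N2' * N2'' : ℕ) : ℝ) := by simp
  have hpos : 0 < ((N1' * N1'' : ℕ) : ℝ) * ((N2' * N2'' : ℕ) : ℝ) := by positivity
  rw [Finset.sum_sub_distrib, Finset.sum_const, Finset.card_univ, nsmul_one, hcard] at hs
  rw [hcard] at hC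
  rw [inv_mul_eq_div, le_div_iff₀ hpos]
  refine le_trans ?_ hs
  linarith

end Assembly
end HK

/-! ### The inner bound -/

section EA

variable {Qt U1 U2 : Type*} [Fintype Qt] [Fintype U1] [Fintype U2]
  [DecidableEq Qt] [DecidableEq U1] [DecidableEq U2]
  {a1' a1'' a2' a2'' dY1 dY2 dZ1 dZ2 : ℕ}

variable (ε : ℝ) (pQ : Qt → ℝ) (pU1 : Qt → U1 → ℝ) (pU2 : Qt → U2 → ℝ)
variable (N : Matrix ((Fin a1' × Fin a1'') × (Fin a2' × Fin a2''))
    ((Fin a1' × Fin a1'') × (Fin a2' × Fin a2'')) ℂ →ₗ[ℂ]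
    Matrix (Fin dY1 × Fin dY2) (Fin dY1 × Fin dY2) ℂ)
variable (σ1 : U1 → Matrix (Fin a1') (Fin a1') ℂ)
variable (ψ1 : Matrix (Fin a1'' × Fin dZ1) (Fin a1'' × Fin dZ1) ℂ)
variable (σ2 : U2 → Matrix (Fin a2') (Fin a2') ℂ)
variable (ψ2 : Matrix (Fin a2'' × Fin dZ2) (Fin a2'' × Fin dZ2) ℂ)

/-- One-shot Han–Kobayashi inner bound for the quantum interference channel with
cis entanglement assistance. -/
theorem han_kobayashi_cis_entanglement_assisted
    (hε0 : 0 < ε) (hε1 : ε < 1)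
    (hN : IsCPTP N)
    (hpQ : IsProbDist pQ) (hpU1 : ∀ q, IsProbDist (pU1 q))
    (hpU2 : ∀ q, IsProbDist (pU2 q))
    (hσ1 : ∀ u1, IsDensity (σ1 u1)) (hσ2 : ∀ u2, IsDensity (σ2 u2))
    (hψ1 : IsDensity ψ1) (hψ2 : IsDensity ψ2)
    (N1' N1'' N2' N2'' : ℕ)
    (hN1' : 0 < N1') (hN1'' : 0 < N1'') (hN2' : 0 < N2') (hN2'' : 0 < N2'')
    (h1 : ((Real.logb 2 N1' : ℝ) : EReal) ≤
      eaIH_U1_Y1U2Z1_Q ε pQ pU1 pU2 N σ1 ψ1 σ2 ψ2 - ((2 : ℝ) : EReal) -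
        ((Real.logb 2 (1 / ε) : ℝ) : EReal))
    (h2 : ((Real.logb 2 N1'' : ℝ) : EReal) ≤
      eaIH_Z1_Y1U1U2_Q ε pQ pU1 pU2 N σ1 ψ1 σ2 ψ2 - ((2 : ℝ) : EReal) -
        ((Real.logb 2 (1 / ε) : ℝ) : EReal))
    (h3 : ((Real.logb 2 N1' + Real.logb 2 N1'' : ℝ) : EReal) ≤
      eaIH_U1Z1_Y1U2_Q ε pQ pU1 pU2 N σ1 ψ1 σ2 ψ2 - ((2 : ℝ) : EReal) -
        ((Real.logb 2 (1 / ε) : ℝ) : EReal))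
    (h4 : ((Real.logb 2 N1' + Real.logb 2 N2' : ℝ) : EReal) ≤
      eaIH_U1U2_Y1Z1_Q ε pQ pU1 pU2 N σ1 ψ1 σ2 ψ2 - ((2 : ℝ) : EReal) -
        ((Real.logb 2 (1 / ε) : ℝ) : EReal))
    (h5 : ((Real.logb 2 N1'' + Real.logb 2 N2' : ℝ) : EReal) ≤
      eaIH_Z1U2_Y1U1_Q ε pQ pU1 pU2 N σ1 ψ1 σ2 ψ2 - ((2 : ℝ) : EReal) -
        ((Real.logb 2 (1 / ε) : ℝ) : EReal))
    (h6 : ((Real.logb 2 N1' + Real.logb 2 N1'' + Real.logb 2 N2' : ℝ) : EReal) ≤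
      eaIH_U1U2Z1_Y1_Q ε pQ pU1 pU2 N σ1 ψ1 σ2 ψ2 - ((2 : ℝ) : EReal) -
        ((Real.logb 2 (1 / ε) : ℝ) : EReal))
    (h7 : ((Real.logb 2 N2' : ℝ) : EReal) ≤
      eaIH_U2_Y2U1Z2_Q ε pQ pU1 pU2 N σ1 ψ1 σ2 ψ2 - ((2 : ℝ) : EReal) -
        ((Real.logb 2 (1 / ε) : ℝ) : EReal))
    (h8 : ((Real.logb 2 N2'' : ℝ) : EReal) ≤
      eaIH_Z2_Y2U1U2_Q ε pQ pU1 pU2 N σ1 ψ1 σ2 ψ2 - ((2 : ℝ) : EReal) -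
        ((Real.logb 2 (1 / ε) : ℝ) : EReal))
    (h9 : ((Real.logb 2 N2' + Real.logb 2 N2'' : ℝ) : EReal) ≤
      eaIH_U2Z2_Y2U1_Q ε pQ pU1 pU2 N σ1 ψ1 σ2 ψ2 - ((2 : ℝ) : EReal) -
        ((Real.logb 2 (1 / ε) : ℝ) : EReal))
    (h10 : ((Real.logb 2 N1' + Real.logb 2 N2' : ℝ) : EReal) ≤
      eaIH_U1U2_Y2Z2_Q ε pQ pU1 pU2 N σ1 ψ1 σ2 ψ2 - ((2 : ℝ) : EReal) -
        ((Real.logb 2 (1 / ε) : ℝ) : EReal))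
    (h11 : ((Real.logb 2 N2'' + Real.logb 2 N1' : ℝ) : EReal) ≤
      eaIH_Z2U1_Y2U2_Q ε pQ pU1 pU2 N σ1 ψ1 σ2 ψ2 - ((2 : ℝ) : EReal) -
        ((Real.logb 2 (1 / ε) : ℝ) : EReal))
    (h12 : ((Real.logb 2 N2' + Real.logb 2 N2'' + Real.logb 2 N1' : ℝ) : EReal) ≤
      eaIH_U1U2Z2_Y2_Q ε pQ pU1 pU2 N σ1 ψ1 σ2 ψ2 - ((2 : ℝ) : EReal) -
        ((Real.logb 2 (1 / ε) : ℝ) : EReal)) :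
    ExistsCisEAICCode N (N1' * N1'') (N2' * N2'') (2 ^ (2 ^ 14) * ε ^ ((1 : ℝ) / 6)) := by
  have t : ∀ {P Z : ℕ} {ψ : Matrix (Fin P × Fin Z) (Fin P × Fin Z) ℂ}, IsDensity ψ →
      (trL ψ).trace = 1 := fun hψ => (HK.trace_trL _).trans hψ.2
  obtain ⟨L, hL, h1L, hLe⟩ := HK.one_receiver_of_hasTest (M1 := Fin N1') (M3 := Fin N2')
    (B := Fin N1'') hpQ hpU1 hpU2 (HK.trL_psd hψ1.1) (t hψ1)
    (HK.eaOutYZ1_psd hN hσ1 hσ2 hψ1 hψ2)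
    (fun u v => by rw [← HK.trace_trL, HK.trL_eaOutYZ1 hN hσ1 hσ2 hψ2, t hψ1]) hε0 hε1.le
    (fun S => by
      simpa only [Fintype.card_fin] using HK.receiver1_tests hε0 hN hpQ hpU1 hpU2 hσ1 hσ2 hψ1 hψ2
        N1' N1'' N2' hN1' hN1'' hN2' h1 h2 h3 h4 h5 h6 S)
  obtain ⟨L', hL', h1L', hLe'⟩ := HK.one_receiver_of_hasTest (M1 := Fin N2') (M3 := Fin N1')
    (B := Fin N2'') hpQ hpU2 hpU1 (HK.trL_psd hψ2.1) (t hψ2)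
    (fun u2 u1 => HK.eaOutYZ2_psd hN hσ1 hσ2 hψ1 hψ2 u1 u2)
    (fun u v => by rw [← HK.trace_trL, HK.trL_eaOutYZ2 hN hσ1 hσ2 hψ1, t hψ2]) hε0 hε1.le
    (fun S => by
      simpa only [Fintype.card_fin] using HK.receiver2_tests hε0 hN hpQ hpU1 hpU2 hσ1 hσ2 hψ1 hψ2
        N2' N2'' N1' hN2' hN2'' hN1' h7 h8 h9 h10 h11 h12 S)
  obtain ⟨a1, b1, a2, b2, Φ1, Φ2, E1, E2, D, D', hΦ1, hΦ2, hE1, hE2, hD, h1D, hD', h1D', h⟩ :=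
    HK.code_of_decoders hN hpQ hpU1 hpU2 hσ1 hσ2 hψ1 hψ2 hN1' hN1'' hN2' hN2'' hL h1L hL' h1L'
      hLe hLe'
  exact ⟨a1, b1, a2, b2, Φ1, Φ2, E1, E2, D, D', hΦ1, hΦ2, hE1, hE2, hD, h1D, hD', h1D',
    (sub_le_sub_left (HK.constant_bound hε0 hε1) 1).trans h⟩

end EA
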